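/- The number of isomorphism classes of 6-dimensional nilpotent Lie algebras over a field k with char(k) ≠ 2 equals 26 + 4r, where r is the cardinality of k*/(k*)². -/

import Mathlib

/-- `br` is a Lie bracket on `kⁿ`: bilinear, alternating, and satisfying the Jacobi
identity (in Leibniz form). -/
def IsLieBracket (k : Type*) [Field k] {n : ℕ}
    (br : (Fin n → k) → (Fin n → k) → (Fin n → k)) : Prop :=
  (∀ x y z, br (x + y) z = br x z + br y z) ∧
  (∀ (c : k) (x y), br (c • x) y = c • br x y) ∧
  (∀ x y z, br x (y + z) = br x y + br x z) ∧
  (∀ (c : k) (x y), br x (c • y) = c • br x y) ∧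
  (∀ x, br x x = 0) ∧
  (∀ x y z, br x (br y z) = br (br x y) z + br y (br x z))

/-- The lower central series of a bracket on `kⁿ`. -/
noncomputable def lcs {k : Type*} [Field k] {n : ℕ}
    (br : (Fin n → k) → (Fin n → k) → (Fin n → k)) : ℕ → Submodule k (Fin n → k)
  | 0 => ⊤
  | m + 1 => Submodule.span k {w | ∃ x y, y ∈ lcs br m ∧ w = br x y}

/-- A bracket is nilpotent if its lower central series reaches `0`. -/
def IsNilpotentBracket {k : Type*} [Field k] {n : ℕ}
    (br : (Fin n → k) → (Fin n → k) → (Fin n → k)) : Prop :=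
  ∃ m, lcs br m = ⊥

/-- Two brackets on `kⁿ` are isomorphic if some linear automorphism of `kⁿ`
intertwines them. -/
def BracketIso {k : Type*} [Field k] {n : ℕ}
    (br br' : (Fin n → k) → (Fin n → k) → (Fin n → k)) : Prop :=
  ∃ e : (Fin n → k) ≃ₗ[k] (Fin n → k), ∀ x y, e (br x y) = br' (e x) (e y)

/-- The type of nilpotent Lie algebra structures on `kⁿ`. -/
def NilpLieStr (k : Type*) [Field k] (n : ℕ) : Type _ :=
  {br : (Fin n → k) → (Fin n → k) → (Fin n → k) // IsLieBracket k br ∧ IsNilpotentBracket br}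

/-! ### Lie algebras given by a bracket on `k⁶` -/

namespace NilpotentLie

open Module

/-- The space `k⁶`, to be equipped with the Lie algebra structure of a given bracket. -/
def BracketSpace {k : Type*} [Field k] {br : (Fin 6 → k) → (Fin 6 → k) → (Fin 6 → k)}
    (_ : IsLieBracket k br) : Type _ := Fin 6 → k

namespace BracketSpace

variable {k : Type*} [Field k] {br : (Fin 6 → k) → (Fin 6 → k) → (Fin 6 → k)}
  (h : IsLieBracket k br)

instance : AddCommGroup (BracketSpace h) := inferInstanceAs (AddCommGroup (Fin 6 → k))

instance : Module k (BracketSpace h) := inferInstanceAs (Module k (Fin 6 → k))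

instance : Module.Finite k (BracketSpace h) := inferInstanceAs (Module.Finite k (Fin 6 → k))

instance : LieRing (BracketSpace h) where
  bracket := br
  add_lie := h.1
  lie_add := h.2.2.1
  lie_self := h.2.2.2.2.1
  leibniz_lie := h.2.2.2.2.2

instance : LieAlgebra k (BracketSpace h) where
  lie_smul := h.2.2.2.1

theorem finrank_eq : finrank k (BracketSpace h) = 6 :=
  (Module.finrank_fin_fun k : finrank k (Fin 6 → k) = 6)

end BracketSpace

/-! ### Iso-invariant subspaces of a Lie algebra -/

section Invariants

variable (k : Type*) [Field k] (L : Type*) [LieRing L] [LieAlgebra k L]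

/-- The lower central series, starting with the whole algebra. -/
def lc : ℕ → Submodule k L
  | 0 => ⊤
  | m + 1 => Submodule.span k {w : L | ∃ x y : L, y ∈ lc m ∧ w = ⁅x, y⁆}

variable {k L}

/-- The subspace of all `x` with `⁅x, B⁆ ⊆ A`. -/
def colon (A B : Submodule k L) : Submodule k L where
  carrier := {x | ∀ y ∈ B, ⁅x, y⁆ ∈ A}
  add_mem' := fun hx hy z hz => by
    rw [add_lie]; exact A.add_mem (hx z hz) (hy z hz)
  zero_mem' := fun z _ => by rw [zero_lie]; exact A.zero_mem
  smul_mem' := fun c x hx z hz => by rw [smul_lie]; exact A.smul_mem c (hx z hz)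

theorem mem_colon {A B : Submodule k L} {x : L} : x ∈ colon A B ↔ ∀ y ∈ B, ⁅x, y⁆ ∈ A := Iff.rfl

variable (k L)

/-- The subspaces whose dimensions are used to tell nilpotent Lie algebras apart. -/
def fingerprint : Fin 10 → Submodule k L :=
  ![lc k L 1, lc k L 2, lc k L 3, lc k L 4, colon ⊥ ⊤, colon ⊥ (lc k L 1),
    colon (colon ⊥ ⊤) ⊤, colon (colon ⊥ ⊤) (lc k L 1),
    colon (lc k L 2) (colon ⊥ (lc k L 1)), colon ⊥ (colon ⊥ (lc k L 1))]

variable {k L} {L' : Type*} [LieRing L'] [LieAlgebra k L']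

theorem map_lc (e : L ≃ₗ⁅k⁆ L') (m : ℕ) :
    (lc k L m).map (e.toLinearEquiv : L →ₗ[k] L') = lc k L' m := by
  induction m with
  | zero => exact Submodule.map_top _ |>.trans (LinearMap.range_eq_top.2 e.surjective)
  | succ m ih =>
    refine (Submodule.map_span _ _).trans (congrArg _ (Set.ext fun w => ⟨?_, ?_⟩))
    · rintro ⟨_, ⟨x, y, hy, rfl⟩, rfl⟩
      exact ⟨e x, e y, ih ▸ Submodule.mem_map_of_mem hy, e.map_lie x y⟩
    · rintro ⟨x, y, hy, rfl⟩
      rw [← ih] at hy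
      obtain ⟨y, hy, rfl⟩ := hy
      exact ⟨⁅e.symm x, y⁆, ⟨_, _, hy, rfl⟩, (e.map_lie _ _).trans (by simp)⟩

theorem map_colon (e : L ≃ₗ⁅k⁆ L') (A B : Submodule k L) :
    (colon A B).map (e.toLinearEquiv : L →ₗ[k] L') =
      colon (A.map (e.toLinearEquiv : L →ₗ[k] L')) (B.map (e.toLinearEquiv : L →ₗ[k] L')) := by
  ext w
  simp only [Submodule.mem_map, mem_colon]
  constructor
  · rintro ⟨x, hx, rfl⟩ _ ⟨y, hy, rfl⟩
    exact ⟨_, hx y hy, e.map_lie x y⟩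
  · intro h
    refine ⟨e.symm w, fun y hy => ?_, e.apply_symm_apply w⟩
    obtain ⟨z, hz, hzw⟩ := h (e y) ⟨y, hy, rfl⟩
    have : z = ⁅e.symm w, y⁆ := e.injective (hzw.trans (by simp))
    exact this ▸ hz

theorem map_fingerprint (e : L ≃ₗ⁅k⁆ L') (n : Fin 10) :
    (fingerprint k L n).map (e.toLinearEquiv : L →ₗ[k] L') = fingerprint k L' n := by
  have ht : (⊤ : Submodule k L).map (e.toLinearEquiv : L →ₗ[k] L') = ⊤ := map_lc e 0
  fin_cases n <;> simp [fingerprint, map_colon, map_lc, ht]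

theorem finrank_fingerprint (e : L ≃ₗ⁅k⁆ L') (n : Fin 10) :
    finrank k (fingerprint k L n) = finrank k (fingerprint k L' n) := by
  rw [← map_fingerprint e n]
  exact (LinearEquiv.finrank_map_eq e.toLinearEquiv _).symm

end Invariants

/-! ### Brackets given by a table -/

/-- The bracket on `k⁶` for which a table entry `(i, j, l, s)` contributes the term `c xₗ` to
`⁅xᵢ, xⱼ⁆`, where `c` is `1`, `-1` or `ε` according to `s`. -/
def tableBr {k : Type*} [Field k] (ε : k) (Λ : List (Fin 6 × Fin 6 × Fin 6 × Fin 3))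
    (x y : Fin 6 → k) : Fin 6 → k :=
  (Λ.map fun t => Pi.single (M := fun _ => k) t.2.2.1
    (![1, -1, ε] t.2.2.2 * (x t.1 * y t.2.1 - x t.2.1 * y t.1))).sum

/-- Representatives of the isomorphism classes of nilpotent Lie algebras of dimension 6. Only the
last four depend on the parameter. -/
def table : Fin 30 → List (Fin 6 × Fin 6 × Fin 6 × Fin 3) :=
  ![[],
    [(0, 1, 2, 0)],
    [(0, 1, 4, 0), (2, 3, 4, 0)],
    [(0, 1, 3, 0), (0, 2, 4, 0)],
    [(0, 1, 4, 0), (0, 2, 5, 0), (2, 3, 4, 0)],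
    [(0, 1, 2, 0), (0, 2, 3, 0)],
    [(0, 1, 2, 0), (0, 2, 4, 0), (1, 3, 4, 0)],
    [(0, 1, 2, 0), (0, 2, 5, 0), (3, 4, 5, 0)],
    [(0, 1, 3, 0), (0, 2, 4, 0), (1, 2, 5, 0)],
    [(0, 1, 3, 0), (0, 2, 4, 0), (1, 3, 5, 0)],
    [(0, 1, 3, 0), (0, 2, 4, 0), (0, 4, 5, 0), (1, 3, 5, 0)],
    [(0, 1, 3, 0), (0, 2, 4, 0), (0, 3, 5, 0), (1, 2, 5, 0)],
    [(0, 1, 3, 0), (0, 2, 4, 0), (0, 3, 5, 0)],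
    [(0, 1, 2, 0), (0, 2, 4, 0), (1, 2, 5, 0)],
    [(0, 1, 2, 0), (0, 2, 4, 0), (1, 2, 5, 0), (1, 3, 4, 0)],
    [(0, 1, 2, 0), (0, 2, 4, 0), (0, 4, 5, 0)],
    [(0, 1, 2, 0), (0, 2, 4, 0), (0, 4, 5, 0), (1, 2, 5, 0)],
    [(0, 1, 2, 0), (0, 2, 4, 0), (0, 4, 5, 0), (1, 3, 5, 0)],
    [(0, 1, 2, 0), (0, 2, 4, 0), (0, 4, 5, 0), (1, 2, 5, 0), (1, 3, 5, 0)],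
    [(0, 1, 2, 0), (0, 2, 4, 0), (0, 4, 5, 0), (1, 3, 4, 0), (2, 3, 5, 0)],
    [(0, 1, 2, 0), (0, 2, 3, 0), (1, 2, 4, 0), (0, 3, 5, 0)],
    [(0, 1, 2, 0), (0, 2, 3, 0), (0, 3, 4, 0), (0, 4, 5, 0)],
    [(0, 1, 2, 0), (0, 2, 3, 0), (0, 3, 4, 0), (0, 4, 5, 0), (1, 2, 5, 0)],
    [(0, 1, 2, 0), (0, 2, 3, 0), (0, 3, 4, 0), (0, 4, 5, 0), (1, 2, 4, 0), (1, 3, 5, 0)],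
    [(0, 1, 2, 0), (0, 2, 3, 0), (0, 3, 4, 0), (1, 4, 5, 0), (2, 3, 5, 1)],
    [(0, 1, 2, 0), (0, 2, 3, 0), (0, 3, 4, 0), (1, 2, 4, 0), (1, 4, 5, 0), (2, 3, 5, 1)],
    [(0, 1, 3, 0), (0, 2, 4, 0), (1, 3, 5, 0), (2, 4, 5, 2)],
    [(0, 1, 2, 0), (0, 2, 3, 0), (1, 2, 4, 0), (0, 3, 5, 0), (1, 4, 5, 2)],
    [(0, 1, 4, 0), (0, 2, 5, 0), (1, 3, 5, 2), (2, 3, 4, 0)],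
    [(0, 1, 2, 0), (0, 2, 4, 0), (0, 3, 5, 2), (1, 2, 5, 0), (1, 3, 4, 0)]]

section Table

variable {k : Type*} [Field k] (ε : k)

theorem tableBr_cons (t : Fin 6 × Fin 6 × Fin 6 × Fin 3)
    (Λ : List (Fin 6 × Fin 6 × Fin 6 × Fin 3)) (x y : Fin 6 → k) :
    tableBr ε (t :: Λ) x y = Pi.single (M := fun _ => k) t.2.2.1
      (![1, -1, ε] t.2.2.2 * (x t.1 * y t.2.1 - x t.2.1 * y t.1)) + tableBr ε Λ x y := by
  simp [tableBr]

theorem tableBr_nil (x y : Fin 6 → k) : tableBr ε [] x y = 0 := rfl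

set_option maxHeartbeats 2000000 in
theorem tableBr_jacobi (n : Fin 30) (x y z : Fin 6 → k) :
    tableBr ε (table n) x (tableBr ε (table n) y z) =
      tableBr ε (table n) (tableBr ε (table n) x y) z +
        tableBr ε (table n) y (tableBr ε (table n) x z) := by
  fin_cases n <;> ext l <;> fin_cases l <;>
    simp [table, tableBr, Pi.single_apply] <;> ring

theorem isLieBracket_tableBr (n : Fin 30) : IsLieBracket k (tableBr ε (table n)) := by
  refine ⟨?_, ?_, ?_, ?_, ?_, tableBr_jacobi ε n⟩ <;> generalize table n = Λ
  · intro x y z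
    induction Λ with
    | nil => simp [tableBr]
    | cons t Λ ih => ext l; simp [tableBr_cons, ih, Pi.single_apply]; split_ifs <;> ring
  · intro c x y
    induction Λ with
    | nil => simp [tableBr]
    | cons t Λ ih => ext l; simp [tableBr_cons, ih, Pi.single_apply]; split_ifs <;> ring
  · intro x y z
    induction Λ with
    | nil => simp [tableBr]
    | cons t Λ ih => ext l; simp [tableBr_cons, ih, Pi.single_apply]; split_ifs <;> ring
  · intro c x y
    induction Λ with
    | nil => simp [tableBr]
    | cons t Λ ih => ext l; simp [tableBr_cons, ih, Pi.single_apply]; split_ifs <;> ring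
  · intro x
    induction Λ with
    | nil => simp [tableBr]
    | cons t Λ ih => simp [tableBr_cons, ih, mul_comm]

/-- The Lie algebra with the `n`-th table of brackets and parameter `ε`. -/
abbrev Model (n : Fin 30) : Type _ := BracketSpace (isLieBracket_tableBr ε n)

end Table

/-! ### Invariants of the models -/

/-- A variant of `List.decidableBAll` with faster kernel reduction. -/
instance decidableListAll {α : Type*} (Λ : List α) (p : α → Prop) [DecidablePred p] :
    Decidable (∀ t ∈ Λ, p t) :=
  decidable_of_iff ((Λ.all fun t => decide (p t)) = true) (by simp)

/-- A variant of `List.decidableBEx` with faster kernel reduction. -/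
instance decidableListAny {α : Type*} (Λ : List α) (p : α → Prop) [DecidablePred p] :
    Decidable (∃ t ∈ Λ, p t) :=
  decidable_of_iff ((Λ.any fun t => decide (p t)) = true) (by simp)

/-- A variant of the decidability of bounded quantifiers with faster kernel reduction. -/
instance decidableForallFin {n : ℕ} (p : Fin n → Prop) [DecidablePred p] :
    Decidable (∀ i, p i) :=
  decidable_of_iff (((List.finRange n).all fun i => decide (p i)) = true) (by simp)

/-- The entries of the table which are needed to compute `⁅xᵢ, xⱼ⁆`. -/
def entries (Λ : List (Fin 6 × Fin 6 × Fin 6 × Fin 3)) (i j : Fin 6) :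
    List (Fin 6 × Fin 6 × Fin 6 × Fin 3) :=
  Λ.filter fun t => (t.1 = i ∧ t.2.1 = j) ∨ (t.1 = j ∧ t.2.1 = i)

/-- Whether `[L, coord b] = coord u` can be read off the table; subsets of `Fin 6` are encoded by
bit masks. -/
def IsCommutatorMask (Λ : List (Fin 6 × Fin 6 × Fin 6 × Fin 3)) (b u : ℕ) : Prop :=
  (∀ t ∈ Λ, b.testBit t.1 = true ∨ b.testBit t.2.1 = true → u.testBit t.2.2.1 = true) ∧
  ∀ l : Fin 6, u.testBit l = true → ∃ t ∈ Λ, t.2.2.1 = l ∧ t.1 ≠ t.2.1 ∧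
    entries Λ t.1 t.2.1 = [t] ∧ (b.testBit t.1 = true ∨ b.testBit t.2.1 = true)

/-- The entries of the table which contribute to the `l`-th coordinate of `⁅x, xⱼ⁆` when `xᵢ = 0`
for all `i` in `f`. -/
def equation (Λ : List (Fin 6 × Fin 6 × Fin 6 × Fin 3)) (j l : Fin 6) (f : Fin 6 → Prop)
    [DecidablePred f] : List (Fin 6 × Fin 6 × Fin 6 × Fin 3) :=
  Λ.filter fun t => t.2.2.1 = l ∧ ((t.2.1 = j ∧ ¬ f t.1) ∨ (t.1 = j ∧ ¬ f t.2.1))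

/-- If `xᵢ = 0` for all `i` in `f` and `⁅x, coord b⁆ ⊆ coord a`, then `x` has vanishing
coordinate at `i₀`, because of a linear equation with one term. -/
def Forced (Λ : List (Fin 6 × Fin 6 × Fin 6 × Fin 3)) (a b : ℕ) (f : Fin 6 → Prop)
    [DecidablePred f] (i₀ : Fin 6) : Prop :=
  ∃ t ∈ Λ, a.testBit t.2.2.1 = false ∧ t.1 ≠ t.2.1 ∧ (
    (t.1 = i₀ ∧ b.testBit t.2.1 = true ∧ equation Λ t.2.1 t.2.2.1 f = [t]) ∨
    (t.2.1 = i₀ ∧ b.testBit t.1 = true ∧ equation Λ t.1 t.2.2.1 f = [t]))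

instance (Λ : List (Fin 6 × Fin 6 × Fin 6 × Fin 3)) (b u : ℕ) :
    Decidable (IsCommutatorMask Λ b u) := @instDecidableAnd _ _ inferInstance inferInstance

instance (Λ : List (Fin 6 × Fin 6 × Fin 6 × Fin 3)) (a b : ℕ) (f : Fin 6 → Prop)
    [DecidablePred f] : DecidablePred (Forced Λ a b f) :=
  fun _ => inferInstanceAs (Decidable (∃ _, _))

/-- Whether `colon (coord a) (coord b) = coord u` can be read off the table. -/
def IsColonMask (Λ : List (Fin 6 × Fin 6 × Fin 6 × Fin 3)) (a b u : ℕ) : Prop :=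
  (∀ t ∈ Λ, a.testBit t.2.2.1 = false →
    (b.testBit t.2.1 = true → u.testBit t.1 = false) ∧
    (b.testBit t.1 = true → u.testBit t.2.1 = false)) ∧
  ∀ i : Fin 6, u.testBit i = false →
    Forced Λ a b (fun _ => False) i ∨ Forced Λ a b (Forced Λ a b fun _ => False) i

instance (Λ : List (Fin 6 × Fin 6 × Fin 6 × Fin 3)) (a b u : ℕ) :
    Decidable (IsColonMask Λ a b u) := inferInstanceAs (Decidable (_ ∧ _))

/-- The masks of the coordinate subspaces which make up the fingerprint of the models. -/
def mask : Fin 30 → Fin 10 → ℕ :=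
  ![![0, 0, 0, 0, 63, 63, 63, 63, 63, 63],
    ![4, 0, 0, 0, 60, 63, 63, 63, 60, 60],
    ![16, 0, 0, 0, 48, 63, 63, 63, 48, 48],
    ![24, 0, 0, 0, 56, 63, 63, 63, 56, 56],
    ![48, 0, 0, 0, 48, 63, 63, 63, 48, 48],
    ![12, 8, 0, 0, 56, 62, 60, 63, 62, 62],
    ![20, 16, 0, 0, 48, 62, 60, 63, 62, 52],
    ![36, 32, 0, 0, 32, 62, 60, 63, 62, 38],
    ![56, 0, 0, 0, 56, 63, 63, 63, 56, 56],
    ![56, 32, 0, 0, 48, 61, 60, 63, 56, 56],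
    ![56, 32, 0, 0, 32, 60, 56, 63, 62, 60],
    ![56, 32, 0, 0, 48, 62, 60, 63, 62, 56],
    ![56, 32, 0, 0, 48, 62, 60, 63, 62, 62],
    ![52, 48, 0, 0, 56, 60, 60, 63, 63, 60],
    ![52, 48, 0, 0, 48, 60, 60, 63, 63, 60],
    ![52, 48, 32, 0, 40, 62, 56, 62, 62, 62],
    ![52, 48, 32, 0, 40, 60, 56, 62, 63, 60],
    ![52, 48, 32, 0, 32, 62, 56, 62, 62, 52],
    ![52, 48, 32, 0, 32, 60, 56, 62, 63, 60],
    ![52, 48, 32, 0, 32, 54, 48, 62, 62, 54],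
    ![60, 56, 32, 0, 48, 60, 56, 62, 63, 60],
    ![60, 56, 48, 32, 32, 62, 48, 62, 62, 62],
    ![60, 56, 48, 32, 32, 60, 48, 62, 63, 60],
    ![60, 56, 48, 32, 32, 60, 48, 60, 63, 60],
    ![60, 56, 48, 32, 32, 48, 48, 62, 63, 61],
    ![60, 56, 48, 32, 32, 48, 48, 60, 63, 61],
    ![56, 32, 0, 0, 32, 57, 56, 63, 57, 57],
    ![60, 56, 32, 0, 32, 60, 56, 60, 63, 60],
    ![48, 0, 0, 0, 48, 63, 63, 63, 48, 48],
    ![52, 48, 0, 0, 48, 60, 60, 63, 63, 60]]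

theorem isCommutatorMask_table (n : Fin 30) :
    IsCommutatorMask (table n) 63 (mask n 0) ∧ IsCommutatorMask (table n) (mask n 0) (mask n 1) ∧
    IsCommutatorMask (table n) (mask n 1) (mask n 2) ∧
    IsCommutatorMask (table n) (mask n 2) (mask n 3) ∧
    IsCommutatorMask (table n) (mask n 3) 0 := by
  revert n
  decide +kernel

theorem isColonMask_table (n : Fin 30) :
    IsColonMask (table n) 0 63 (mask n 4) ∧ IsColonMask (table n) 0 (mask n 0) (mask n 5) ∧
    IsColonMask (table n) (mask n 4) 63 (mask n 6) ∧
    IsColonMask (table n) (mask n 4) (mask n 0) (mask n 7) ∧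
    IsColonMask (table n) (mask n 1) (mask n 5) (mask n 8) ∧
    IsColonMask (table n) 0 (mask n 5) (mask n 9) := by
  revert n
  decide +kernel

theorem card_bits (b : ℕ) : (Finset.univ.filter fun l : Fin 6 => b.testBit l = true).card =
    (b.testBit 0).toNat + (b.testBit 1).toNat + (b.testBit 2).toNat + (b.testBit 3).toNat +
      (b.testBit 4).toNat + (b.testBit 5).toNat := by
  rw [Finset.card_filter, Fin.sum_univ_six]
  simp only [Bool.toNat, Bool.cond_eq_ite]
  rfl

theorem eq_of_card_mask {m n : Fin 30}
    (h : ∀ i, (Finset.univ.filter fun l : Fin 6 => (mask m i).testBit l = true).card =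
      (Finset.univ.filter fun l : Fin 6 => (mask n i).testBit l = true).card) :
    m = n ∨ (m = 4 ∧ n = 28) ∨ (m = 28 ∧ n = 4) ∨ (m = 14 ∧ n = 29) ∨ (m = 29 ∧ n = 14) := by
  simp only [card_bits] at h
  revert m n
  decide +kernel

section Coord

variable {k : Type*} [Field k] {br : (Fin 6 → k) → (Fin 6 → k) → (Fin 6 → k)}
  (h : IsLieBracket k br)

/-- The subspace spanned by the basis vectors in the set encoded by a bit mask. -/
def coord (b : ℕ) : Submodule k (BracketSpace h) where
  carrier := {x | ∀ i : Fin 6, b.testBit i = false → x i = 0}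
  add_mem' := fun {x y} hx hy i hi => by
    change x i + y i = 0
    rw [hx i hi, hy i hi, add_zero]
  zero_mem' := fun _ _ => rfl
  smul_mem' := fun c x hx i hi => by
    change c * x i = 0
    rw [hx i hi, mul_zero]

theorem coord_zero : coord h 0 = ⊥ := by
  refine (Submodule.eq_bot_iff _).2 fun x hx => funext fun i => hx i (by simp)

theorem coord_top : coord h 63 = ⊤ := by
  refine (Submodule.eq_top_iff').2 fun x i hi => ?_
  exact absurd hi (by revert i; decide)

theorem finrank_coord (b : ℕ) : finrank k (coord h b) =
    (Finset.univ.filter fun l : Fin 6 => b.testBit l = true).card := by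
  let e : coord h b ≃ₗ[k] ({l : Fin 6 // b.testBit l = true} → k) :=
    { toFun := fun x l => (x.1 : Fin 6 → k) l
      map_add' := fun _ _ => rfl
      map_smul' := fun _ _ => rfl
      invFun := fun y => ⟨(fun l => if hl : b.testBit l = true then y ⟨l, hl⟩ else 0 : Fin 6 → k),
        fun i hi => by simp [hi]⟩
      left_inv := fun x => by
        refine Subtype.ext (funext fun l => ?_)
        by_cases hl : b.testBit l = true
        · simp [hl]
        · simpa [hl] using (x.2 l (by simpa using hl)).symm
      right_inv := fun y => by
        ext l
        simp [l.2] }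
  rw [e.finrank_eq, Module.finrank_fintype_fun_eq_card, Fintype.card_subtype]

theorem single_mem_coord {b : ℕ} {j : Fin 6} (hj : b.testBit j = true) (c : k) :
    (Pi.single j c : Fin 6 → k) ∈ coord h b := by
  intro i hi
  refine Pi.single_eq_of_ne ?_ _
  rintro rfl
  simp [hj] at hi

end Coord

section Model

variable {k : Type*} [Field k] {ε : k} {n : Fin 30}

theorem tableBr_apply (Λ : List (Fin 6 × Fin 6 × Fin 6 × Fin 3)) (x y : Fin 6 → k) (l : Fin 6) :
    tableBr ε Λ x y l = (Λ.map fun t => if t.2.2.1 = l then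
      ![1, -1, ε] t.2.2.2 * (x t.1 * y t.2.1 - x t.2.1 * y t.1) else 0).sum := by
  induction Λ with
  | nil => rfl
  | cons t Λ ih =>
    rw [tableBr_cons, Pi.add_apply, ih, List.map_cons, List.sum_cons, Pi.single_apply]
    simp only [eq_comm]

theorem coef_ne_zero (hε : ε ≠ 0) (s : Fin 3) : ![1, -1, ε] s ≠ 0 := by
  fin_cases s <;> simp [hε]

theorem tableBr_entries (Λ : List (Fin 6 × Fin 6 × Fin 6 × Fin 3)) (i j : Fin 6) (c d : k) :
    tableBr ε Λ (Pi.single i c) (Pi.single j d) =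
      tableBr ε (entries Λ i j) (Pi.single i c) (Pi.single j d) := by
  induction Λ with
  | nil => rfl
  | cons t Λ ih =>
    rw [tableBr_cons, ih, entries, entries, List.filter_cons]
    split_ifs with ht
    · rw [tableBr_cons]
    · have : (Pi.single i c : Fin 6 → k) t.1 * (Pi.single j d : Fin 6 → k) t.2.1 -
          (Pi.single i c : Fin 6 → k) t.2.1 * (Pi.single j d : Fin 6 → k) t.1 = 0 := by
        simp only [Pi.single_apply]
        split_ifs <;> simp_all
      rw [this, mul_zero, Pi.single_zero, zero_add]

theorem entries_comm (Λ : List (Fin 6 × Fin 6 × Fin 6 × Fin 3)) (i j : Fin 6) :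
    entries Λ i j = entries Λ j i := by
  simp only [entries, or_comm]

theorem lc_succ_model (hε : ε ≠ 0) {m b u : ℕ} (hm : lc k (Model ε n) m = coord _ b)
    (h : IsCommutatorMask (table n) b u) : lc k (Model ε n) (m + 1) = coord _ u := by
  refine le_antisymm (Submodule.span_le.2 ?_) fun x hx => ?_
  · rintro _ ⟨x, y, hy, rfl⟩ l hl
    rw [hm] at hy
    refine (tableBr_apply _ x y l).trans (List.sum_eq_zero fun c hc => ?_)
    obtain ⟨t, ht, rfl⟩ := List.mem_map.1 hc
    split_ifs with hlt
    · have := h.1 t ht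
      rw [hlt, hl] at this
      rw [hy t.1 (by simpa using fun h' => this (.inl h')),
        hy t.2.1 (by simpa using fun h' => this (.inr h'))]
      ring
    · rfl
  · have hsum : x = ∑ l : Fin 6, (Pi.single l (x l) : Fin 6 → k) :=
      (Finset.univ_sum_single (x : Fin 6 → k)).symm
    rw [hsum]
    refine Submodule.sum_mem _ fun l _ => ?_
    by_cases hl : u.testBit l = true
    · obtain ⟨⟨i, j, l, s⟩, -, rfl, hij, hs, hb⟩ := h.2 l hl
      dsimp only at hij hs hb ⊢
      have hc := coef_ne_zero hε s
      have hij' := hij.symm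
      rcases hb with hb | hb
      · refine Submodule.subset_span ⟨(Pi.single j (-(x l / ![1, -1, ε] s)) : Fin 6 → k),
          (Pi.single i 1 : Fin 6 → k), hm ▸ single_mem_coord _ hb 1, ?_⟩
        change (Pi.single l (x l) : Fin 6 → k) = tableBr ε (table n) _ _
        rw [tableBr_entries, entries_comm, hs, tableBr_cons, tableBr_nil, add_zero]
        simp [hij, hij', mul_div_cancel₀ _ hc]
      · refine Submodule.subset_span ⟨(Pi.single i (x l / ![1, -1, ε] s) : Fin 6 → k),
          (Pi.single j 1 : Fin 6 → k), hm ▸ single_mem_coord _ hb 1, ?_⟩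
        change (Pi.single l (x l) : Fin 6 → k) = tableBr ε (table n) _ _
        rw [tableBr_entries, hs, tableBr_cons, tableBr_nil, add_zero]
        simp [hij, hij', mul_div_cancel₀ _ hc]
    · rw [hx l (by simpa using hl), Pi.single_zero]
      exact Submodule.zero_mem _

theorem eq_zero_of_forced (hε : ε ≠ 0) {Λ : List (Fin 6 × Fin 6 × Fin 6 × Fin 3)} {a b : ℕ}
    {f : Fin 6 → Prop} [DecidablePred f] {x : Fin 6 → k}
    (hx : ∀ j l : Fin 6, b.testBit j = true → a.testBit l = false →
      tableBr ε Λ x (Pi.single j 1) l = 0)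
    (hf : ∀ i, f i → x i = 0) {i₀ : Fin 6} (h : Forced Λ a b f i₀) : x i₀ = 0 := by
  have hequation : ∀ (Λ : List (Fin 6 × Fin 6 × Fin 6 × Fin 3)) (j l : Fin 6),
      tableBr ε Λ x (Pi.single j 1) l = tableBr ε (equation Λ j l f) x (Pi.single j 1) l := by
    intro Λ j l
    induction Λ with
    | nil => rfl
    | cons t Λ ih =>
      rw [tableBr_cons, Pi.add_apply, ih, equation, equation, List.filter_cons]
      split_ifs with h1
      · rw [tableBr_cons, Pi.add_apply]
      · by_cases h2 : t.2.2.1 = l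
        · have h3 : x t.1 * (Pi.single j 1 : Fin 6 → k) t.2.1 = 0 := by
            by_cases hj' : t.2.1 = j
            · rw [hf t.1 (by by_contra hc; simp_all), zero_mul]
            · simp [hj']
          have h4 : x t.2.1 * (Pi.single j 1 : Fin 6 → k) t.1 = 0 := by
            by_cases hj' : t.1 = j
            · rw [hf t.2.1 (by by_contra hc; simp_all), zero_mul]
            · simp [hj']
          rw [h3, h4, sub_zero, mul_zero, Pi.single_zero, Pi.zero_apply, zero_add]
        · rw [Pi.single_eq_of_ne' h2, zero_add]
  obtain ⟨⟨i, j, l, s⟩, -, hl, hij, hs⟩ := h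
  dsimp only at hl hij hs
  have hij' := hij.symm
  have hc := coef_ne_zero hε s
  rcases hs with ⟨rfl, hb, hs⟩ | ⟨rfl, hb, hs⟩ <;>
  · have key := hx _ _ hb hl
    rw [hequation, hs, tableBr_cons, tableBr_nil, add_zero] at key
    simpa [hij, hij', hc, -Matrix.cons_val] using key

theorem colon_model (hε : ε ≠ 0) {a b u : ℕ} (h : IsColonMask (table n) a b u) :
    colon (coord (isLieBracket_tableBr ε n) a) (coord _ b) = coord _ u := by
  refine le_antisymm (fun x hx i hi => ?_) fun x hx y hy l hl => ?_
  · replace hx : ∀ j l : Fin 6, b.testBit j = true → a.testBit l = false →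
        tableBr ε (table n) x (Pi.single j 1) l = 0 :=
      fun j l hj hl => hx _ (single_mem_coord _ hj 1) l hl
    rcases h.2 i hi with h' | h'
    · exact eq_zero_of_forced hε hx (fun _ => False.elim) h'
    · exact eq_zero_of_forced hε hx
        (fun _ h' => eq_zero_of_forced hε hx (fun _ => False.elim) h') h'
  · refine (tableBr_apply _ x y l).trans (List.sum_eq_zero fun c hc => ?_)
    obtain ⟨t, ht, rfl⟩ := List.mem_map.1 hc
    split_ifs with hlt
    · obtain ⟨h1, h2⟩ := h.1 t ht (hlt ▸ hl)
      have h3 : x t.1 * y t.2.1 = 0 := by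
        by_cases hb : b.testBit t.2.1 = true
        · rw [hx _ (h1 hb), zero_mul]
        · rw [hy t.2.1 (by simpa using hb), mul_zero]
      have h4 : x t.2.1 * y t.1 = 0 := by
        by_cases hb : b.testBit t.1 = true
        · rw [hx _ (h2 hb), zero_mul]
        · rw [hy t.1 (by simpa using hb), mul_zero]
      rw [h3, h4, sub_zero, mul_zero]
    · rfl

theorem lc_model (hε : ε ≠ 0) (n : Fin 30) :
    lc k (Model ε n) 1 = coord _ (mask n 0) ∧ lc k (Model ε n) 2 = coord _ (mask n 1) ∧
    lc k (Model ε n) 3 = coord _ (mask n 2) ∧ lc k (Model ε n) 4 = coord _ (mask n 3) ∧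
    lc k (Model ε n) 5 = ⊥ := by
  obtain ⟨h0, h1, h2, h3, h4⟩ := isCommutatorMask_table n
  have e1 := lc_succ_model hε (m := 0) (coord_top (isLieBracket_tableBr ε n)).symm h0
  have e2 := lc_succ_model hε e1 h1
  have e3 := lc_succ_model hε e2 h2
  have e4 := lc_succ_model hε e3 h3
  exact ⟨e1, e2, e3, e4, (lc_succ_model hε e4 h4).trans (coord_zero _)⟩

theorem fingerprint_model (hε : ε ≠ 0) (n : Fin 30) (i : Fin 10) :
    fingerprint k (Model ε n) i = coord _ (mask n i) := by
  obtain ⟨h0, h1, h2, h3, -⟩ := lc_model hε n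
  obtain ⟨g0, g1, g2, g3, g4, g5⟩ := isColonMask_table n
  have e4 := colon_model hε g0
  have e5 := colon_model hε g1
  have e6 := colon_model hε g2
  have e7 := colon_model hε g3
  have e8 := colon_model hε g4
  have e9 := colon_model hε g5
  rw [coord_top] at e4 e6
  rw [coord_zero] at e4 e5 e9
  unfold fingerprint
  rw [h0, h1, h2, h3, e4, e5, e6, e7, e8, e9]
  fin_cases i <;> rfl

theorem eq_of_lieEquiv {δ : k} (hε : ε ≠ 0) (hδ : δ ≠ 0) {m n : Fin 30}
    (e : Model ε m ≃ₗ⁅k⁆ Model δ n) :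
    m = n ∨ (m = 4 ∧ n = 28) ∨ (m = 28 ∧ n = 4) ∨ (m = 14 ∧ n = 29) ∨ (m = 29 ∧ n = 14) := by
  refine eq_of_card_mask fun i => ?_
  have := finrank_fingerprint e i
  rwa [fingerprint_model hε, fingerprint_model hδ, finrank_coord, finrank_coord] at this

end Model

/-! ### The four families with a parameter -/

section Families

variable {k : Type*} [Field k]

theorem tableBr_table26 (ε : k) (x y : Fin 6 → k) : tableBr ε (table 26) x y =
    ![0, 0, 0, x 0 * y 1 - x 1 * y 0, x 0 * y 2 - x 2 * y 0,
      x 1 * y 3 - x 3 * y 1 + ε * (x 2 * y 4 - x 4 * y 2)] := by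
  ext l
  fin_cases l <;> simp [table, tableBr]

theorem tableBr_table27 (ε : k) (x y : Fin 6 → k) : tableBr ε (table 27) x y =
    ![0, 0, x 0 * y 1 - x 1 * y 0, x 0 * y 2 - x 2 * y 0, x 1 * y 2 - x 2 * y 1,
      x 0 * y 3 - x 3 * y 0 + ε * (x 1 * y 4 - x 4 * y 1)] := by
  ext l
  fin_cases l <;> simp [table, tableBr]

theorem tableBr_table28 (ε : k) (x y : Fin 6 → k) : tableBr ε (table 28) x y =
    ![0, 0, 0, 0, x 0 * y 1 - x 1 * y 0 + (x 2 * y 3 - x 3 * y 2),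
      x 0 * y 2 - x 2 * y 0 + ε * (x 1 * y 3 - x 3 * y 1)] := by
  ext l
  fin_cases l <;> simp [table, tableBr]

theorem tableBr_table29 (ε : k) (x y : Fin 6 → k) : tableBr ε (table 29) x y =
    ![0, 0, x 0 * y 1 - x 1 * y 0, 0, x 0 * y 2 - x 2 * y 0 + (x 1 * y 3 - x 3 * y 1),
      ε * (x 0 * y 3 - x 3 * y 0) + (x 1 * y 2 - x 2 * y 1)] := by
  ext l
  fin_cases l <;> simp [table, tableBr]

theorem tableBr_zero_table28 : tableBr (0 : k) (table 28) = tableBr 1 (table 4) := by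
  ext x y l
  rw [tableBr_table28]
  fin_cases l <;> simp [table, tableBr]

theorem tableBr_zero_table29 : tableBr (0 : k) (table 29) = tableBr 1 (table 14) := by
  ext x y l
  rw [tableBr_table29]
  fin_cases l <;> simp [table, tableBr]

theorem tableBr_eq_of_lt (ε δ : k) {n : Fin 30} (hn : n < 26) :
    tableBr ε (table n) = tableBr δ (table n) := by
  have h : ∀ n : Fin 30, n < 26 → ∀ t ∈ table n, t.2.2.2 ≠ 2 := by decide +kernel
  ext x y l
  rw [tableBr_apply, tableBr_apply]
  refine congrArg List.sum (List.map_congr_left fun t ht => ?_)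
  have hs := h n hn t ht
  generalize t.2.2.2 = s at hs
  fin_cases s <;> simp_all

variable {ε δ : k} {f : (Fin 6 → k) ≃ₗ[k] (Fin 6 → k)}

theorem exists_sq_of_table26 (hε : ε ≠ 0)
    (hf : ∀ x y, f (tableBr ε (table 26) x y) = tableBr δ (table 26) (f x) (f y)) :
    ∃ s t : k, s ≠ 0 ∧ ε * s ^ 2 = δ * t ^ 2 := by
  have h3 := hf (Pi.single 0 1) (Pi.single 1 1)
  have h4 := hf (Pi.single 0 1) (Pi.single 2 1)
  have h5 := hf (Pi.single 1 1) (Pi.single 3 1)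
  have h6 := hf (Pi.single 2 1) (Pi.single 4 1)
  have h7 := hf (Pi.single 1 1) (Pi.single 4 1)
  have h8 := hf (Pi.single 2 1) (Pi.single 3 1)
  have h9 := hf (Pi.single 1 1) (Pi.single 2 1)
  have e3 : tableBr ε (table 26) (Pi.single 0 1) (Pi.single 1 1) = Pi.single 3 1 := by
    rw [tableBr_table26]; ext l; fin_cases l <;> simp
  have e4 : tableBr ε (table 26) (Pi.single 0 1) (Pi.single 2 1) = Pi.single 4 1 := by
    rw [tableBr_table26]; ext l; fin_cases l <;> simp
  have e5 : tableBr ε (table 26) (Pi.single 1 1) (Pi.single 3 1) = Pi.single 5 1 := by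
    rw [tableBr_table26]; ext l; fin_cases l <;> simp
  have e6 : tableBr ε (table 26) (Pi.single 2 1) (Pi.single 4 1) = ε • Pi.single 5 1 := by
    rw [tableBr_table26]; ext l; fin_cases l <;> simp
  have e7 : tableBr ε (table 26) (Pi.single 1 1) (Pi.single 4 1) = 0 := by
    rw [tableBr_table26]; ext l; fin_cases l <;> simp
  have e8 : tableBr ε (table 26) (Pi.single 2 1) (Pi.single 3 1) = 0 := by
    rw [tableBr_table26]; ext l; fin_cases l <;> simp
  have e9 : tableBr ε (table 26) (Pi.single 1 1) (Pi.single 2 1) = 0 := by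
    rw [tableBr_table26]; ext l; fin_cases l <;> simp
  rw [e3] at h3
  rw [e4] at h4
  rw [e5, h3] at h5
  rw [e6, h4, map_smul, h5] at h6
  rw [e7, h4, map_zero] at h7
  rw [e8, h3, map_zero] at h8
  rw [e9, map_zero] at h9
  have hne : f (Pi.single 5 1) ≠ 0 := by simp
  generalize f (Pi.single 0 1) = u at *
  generalize f (Pi.single 1 1) = v at *
  generalize f (Pi.single 2 1) = w at *
  simp only [tableBr_table26] at h5 h6 h7 h8 h9
  have a6 := congrFun h6 5
  have a7 := congrFun h7 5
  have a8 := congrFun h8 5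
  have a9 := congrFun h9 3
  have b9 := congrFun h9 4
  simp at a6 a7 a8 a9 b9
  set τ := v 1 * (u 0 * v 1 - u 1 * v 0) + δ * (v 2 * (u 0 * v 2 - u 2 * v 0)) with hτ
  have hτ0 : τ ≠ 0 := by
    intro h0
    apply hne
    rw [h5]
    ext l
    fin_cases l <;> simp [← hτ, h0]
  have hw : w 0 = 0 := by
    have : w 0 * τ = 0 := by
      rw [hτ]
      linear_combination (-v 0) * a8 + (u 0 * v 1 - u 1 * v 0) * a9 +
        δ * (u 0 * v 2 - u 2 * v 0) * b9
    exact (mul_eq_zero.1 this).resolve_right hτ0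
  rw [hw] at a6 a7 a9 b9
  have hv : v 0 = 0 := by
    by_contra hv
    have h1 : w 1 = 0 := by simpa [hv] using a9
    have h2 : w 2 = 0 := by simpa [hv] using b9
    rw [h1, h2] at a6
    exact mul_ne_zero hε hτ0 (by linear_combination a6)
  rw [hv] at hτ
  refine ⟨τ, u 0 * (v 1 * w 2 - v 2 * w 1), hτ0, ?_⟩
  linear_combination τ * a6 + u 0 * (w 1 ^ 2 + δ * w 2 ^ 2) * hτ -
    u 0 * (v 1 * w 1 + δ * (v 2 * w 2)) * a7

theorem exists_sq_of_table27
    (hf : ∀ x y, f (tableBr ε (table 27) x y) = tableBr δ (table 27) (f x) (f y)) :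
    ∃ s t : k, s ≠ 0 ∧ ε * s ^ 2 = δ * t ^ 2 := by
  have h2 := hf (Pi.single 0 1) (Pi.single 1 1)
  have h3 := hf (Pi.single 0 1) (Pi.single 2 1)
  have h4 := hf (Pi.single 1 1) (Pi.single 2 1)
  have h5 := hf (Pi.single 0 1) (Pi.single 3 1)
  have h6 := hf (Pi.single 1 1) (Pi.single 4 1)
  have h7 := hf (Pi.single 1 1) (Pi.single 3 1)
  have e2 : tableBr ε (table 27) (Pi.single 0 1) (Pi.single 1 1) = Pi.single 2 1 := by
    rw [tableBr_table27]; ext l; fin_cases l <;> simp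
  have e3 : tableBr ε (table 27) (Pi.single 0 1) (Pi.single 2 1) = Pi.single 3 1 := by
    rw [tableBr_table27]; ext l; fin_cases l <;> simp
  have e4 : tableBr ε (table 27) (Pi.single 1 1) (Pi.single 2 1) = Pi.single 4 1 := by
    rw [tableBr_table27]; ext l; fin_cases l <;> simp
  have e5 : tableBr ε (table 27) (Pi.single 0 1) (Pi.single 3 1) = Pi.single 5 1 := by
    rw [tableBr_table27]; ext l; fin_cases l <;> simp
  have e6 : tableBr ε (table 27) (Pi.single 1 1) (Pi.single 4 1) = ε • Pi.single 5 1 := by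
    rw [tableBr_table27]; ext l; fin_cases l <;> simp
  have e7 : tableBr ε (table 27) (Pi.single 1 1) (Pi.single 3 1) = 0 := by
    rw [tableBr_table27]; ext l; fin_cases l <;> simp
  rw [e2] at h2
  rw [e3, h2] at h3
  rw [e4, h2] at h4
  rw [e5, h3] at h5
  rw [e6, h4, map_smul, h5] at h6
  rw [e7, h3, map_zero] at h7
  have hne : f (Pi.single 5 1) ≠ 0 := by simp
  generalize f (Pi.single 0 1) = u at *
  generalize f (Pi.single 1 1) = v at *
  simp only [tableBr_table27] at h5 h6 h7
  have a6 := congrFun h6 5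
  have a7 := congrFun h7 5
  simp at a6 a7
  set Δ := u 0 * v 1 - u 1 * v 0 with hΔ
  have hτ0 : Δ * (u 0 ^ 2 + δ * u 1 ^ 2) ≠ 0 := by
    intro h0
    apply hne
    rw [h5]
    ext l
    fin_cases l <;> simp
    linear_combination h0
  refine ⟨Δ * (u 0 ^ 2 + δ * u 1 ^ 2), Δ ^ 2, hτ0, ?_⟩
  have a7' : Δ * (u 0 * v 0 + δ * (u 1 * v 1)) = 0 := by linear_combination -a7
  rw [hΔ] at *
  linear_combination (u 0 * v 1 - u 1 * v 0) * (u 0 ^ 2 + δ * u 1 ^ 2) * a6 +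
    (u 0 * v 1 - u 1 * v 0) * (u 0 * v 0 + δ * (u 1 * v 1)) * a7'

theorem exists_sq_of_table28 (hk : (2 : k) ≠ 0)
    (hf : ∀ x y, f (tableBr ε (table 28) x y) = tableBr δ (table 28) (f x) (f y)) :
    ∃ s t : k, s ≠ 0 ∧ ε * s ^ 2 = δ * t ^ 2 := by
  have h01 := hf (Pi.single 0 1) (Pi.single 1 1)
  have h02 := hf (Pi.single 0 1) (Pi.single 2 1)
  have h03 := hf (Pi.single 0 1) (Pi.single 3 1)
  have h12 := hf (Pi.single 1 1) (Pi.single 2 1)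
  have h13 := hf (Pi.single 1 1) (Pi.single 3 1)
  have h23 := hf (Pi.single 2 1) (Pi.single 3 1)
  have e01 : tableBr ε (table 28) (Pi.single 0 1) (Pi.single 1 1) = Pi.single 4 1 := by
    rw [tableBr_table28]; ext l; fin_cases l <;> simp
  have e02 : tableBr ε (table 28) (Pi.single 0 1) (Pi.single 2 1) = Pi.single 5 1 := by
    rw [tableBr_table28]; ext l; fin_cases l <;> simp
  have e03 : tableBr ε (table 28) (Pi.single 0 1) (Pi.single 3 1) = 0 := by
    rw [tableBr_table28]; ext l; fin_cases l <;> simp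
  have e12 : tableBr ε (table 28) (Pi.single 1 1) (Pi.single 2 1) = 0 := by
    rw [tableBr_table28]; ext l; fin_cases l <;> simp
  have e13 : tableBr ε (table 28) (Pi.single 1 1) (Pi.single 3 1) = ε • Pi.single 5 1 := by
    rw [tableBr_table28]; ext l; fin_cases l <;> simp
  have e23 : tableBr ε (table 28) (Pi.single 2 1) (Pi.single 3 1) = Pi.single 4 1 := by
    rw [tableBr_table28]; ext l; fin_cases l <;> simp
  rw [e01] at h01
  rw [e02] at h02
  rw [e03, map_zero] at h03
  rw [e12, map_zero] at h12
  rw [e13, map_smul] at h13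
  rw [e23] at h23
  have hdep : f (Pi.single 4 1) 4 * f (Pi.single 5 1) 5 -
      f (Pi.single 4 1) 5 * f (Pi.single 5 1) 4 ≠ 0 := by
    intro h0
    have hker : ∀ c d : k, f (c • Pi.single 4 1 + d • Pi.single 5 1) = 0 → c = 0 ∧ d = 0 := by
      intro c d h
      have := f.injective (h.trans (map_zero f).symm)
      exact ⟨by simpa using congrFun this 4, by simpa using congrFun this 5⟩
    have key : ∀ l, l = 4 ∨ l = 5 → f (Pi.single 4 1) l = 0 := by
      intro l hl
      have := hker (f (Pi.single 5 1) l) (-f (Pi.single 4 1) l) (by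
        rw [map_add, map_smul, map_smul]
        ext i
        rw [h01, h02, tableBr_table28, tableBr_table28] at h0 ⊢
        rcases hl with rfl | rfl <;> fin_cases i <;> simp at h0 ⊢ <;>
          first | ring1 | linear_combination h0 | linear_combination -h0)
      simpa using this.2
    have h1 : f (Pi.single 4 1) = 0 := by
      ext i
      by_cases hi : i = 4 ∨ i = 5
      · exact key i hi
      · rw [h01, tableBr_table28]
        fin_cases i <;> simp at hi ⊢
    exact one_ne_zero (hker 1 0 (by simp [h1])).1
  generalize f (Pi.single 0 1) = u at *
  generalize f (Pi.single 1 1) = v at *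
  generalize f (Pi.single 2 1) = w at *
  generalize f (Pi.single 3 1) = x at *
  generalize f (Pi.single 4 1) = p at *
  generalize f (Pi.single 5 1) = q at *
  rw [tableBr_table28] at h01 h02 h03 h12 h13 h23
  have a01 := congrFun h01 4
  have b01 := congrFun h01 5
  have a02 := congrFun h02 4
  have b02 := congrFun h02 5
  have a03 := congrFun h03 4
  have b03 := congrFun h03 5
  have a12 := congrFun h12 4
  have b12 := congrFun h12 5
  have a13 := congrFun h13 4
  have b13 := congrFun h13 5
  have a23 := congrFun h23 4
  have b23 := congrFun h23 5
  simp at a01 a02 a03 a12 a13 a23 b01 b02 b03 b12 b13 b23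
  have h1 : (u 0 * v 2 - u 2 * v 0 + δ * (u 1 * v 3 - u 3 * v 1)) *
        (w 0 * x 2 - w 2 * x 0 + δ * (w 1 * x 3 - w 3 * x 1)) -
      (u 0 * w 2 - u 2 * w 0 + δ * (u 1 * w 3 - u 3 * w 1)) *
        (v 0 * x 2 - v 2 * x 0 + δ * (v 1 * x 3 - v 3 * x 1)) +
      (u 0 * x 2 - u 2 * x 0 + δ * (u 1 * x 3 - u 3 * x 1)) *
        (v 0 * w 2 - v 2 * w 0 + δ * (v 1 * w 3 - v 3 * w 1)) =
      -δ * ((u 0 * v 1 - u 1 * v 0 + (u 2 * v 3 - u 3 * v 2)) *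
        (w 0 * x 1 - w 1 * x 0 + (w 2 * x 3 - w 3 * x 2)) -
      (u 0 * w 1 - u 1 * w 0 + (u 2 * w 3 - u 3 * w 2)) *
        (v 0 * x 1 - v 1 * x 0 + (v 2 * x 3 - v 3 * x 2)) +
      (u 0 * x 1 - u 1 * x 0 + (u 2 * x 3 - u 3 * x 2)) *
        (v 0 * w 1 - v 1 * w 0 + (v 2 * w 3 - v 3 * w 2))) := by ring
  have h2 : (u 0 * v 1 - u 1 * v 0 + (u 2 * v 3 - u 3 * v 2)) *
        (w 0 * x 2 - w 2 * x 0 + δ * (w 1 * x 3 - w 3 * x 1)) +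
      (u 0 * v 2 - u 2 * v 0 + δ * (u 1 * v 3 - u 3 * v 1)) *
        (w 0 * x 1 - w 1 * x 0 + (w 2 * x 3 - w 3 * x 2)) -
      (u 0 * w 1 - u 1 * w 0 + (u 2 * w 3 - u 3 * w 2)) *
        (v 0 * x 2 - v 2 * x 0 + δ * (v 1 * x 3 - v 3 * x 1)) -
      (u 0 * w 2 - u 2 * w 0 + δ * (u 1 * w 3 - u 3 * w 1)) *
        (v 0 * x 1 - v 1 * x 0 + (v 2 * x 3 - v 3 * x 2)) +
      (u 0 * x 1 - u 1 * x 0 + (u 2 * x 3 - u 3 * x 2)) *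
        (v 0 * w 2 - v 2 * w 0 + δ * (v 1 * w 3 - v 3 * w 1)) +
      (u 0 * x 2 - u 2 * x 0 + δ * (u 1 * x 3 - u 3 * x 1)) *
        (v 0 * w 1 - v 1 * w 0 + (v 2 * w 3 - v 3 * w 2)) = 0 := by ring
  rw [← a01, ← a02, ← a03, ← a12, ← a13, ← a23, ← b01, ← b02, ← b03, ← b12, ← b13, ← b23] at h1 h2
  have h3 : p 4 * p 5 - ε * (q 4 * q 5) = 0 := by
    refine (mul_eq_zero.1 (?_ : (2 : k) * _ = 0)).resolve_left hk
    linear_combination h2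
  refine ⟨_, p 4 ^ 2 - ε * q 4 ^ 2, hdep, ?_⟩
  linear_combination (p 4 * p 5 - ε * (q 4 * q 5)) * h3 - (p 4 ^ 2 - ε * q 4 ^ 2) * h1

theorem exists_sq_of_table29 (hk : (2 : k) ≠ 0)
    (hf : ∀ x y, f (tableBr ε (table 29) x y) = tableBr δ (table 29) (f x) (f y)) :
    ∃ s t : k, s ≠ 0 ∧ ε * s ^ 2 = δ * t ^ 2 := by
  have h2 := hf (Pi.single 0 1) (Pi.single 1 1)
  have h4 := hf (Pi.single 0 1) (Pi.single 2 1)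
  have h5 := hf (Pi.single 1 1) (Pi.single 2 1)
  have h03 := hf (Pi.single 0 1) (Pi.single 3 1)
  have h13 := hf (Pi.single 1 1) (Pi.single 3 1)
  have h32 := hf (Pi.single 3 1) (Pi.single 2 1)
  have e2 : tableBr ε (table 29) (Pi.single 0 1) (Pi.single 1 1) = Pi.single 2 1 := by
    rw [tableBr_table29]; ext l; fin_cases l <;> simp
  have e4 : tableBr ε (table 29) (Pi.single 0 1) (Pi.single 2 1) = Pi.single 4 1 := by
    rw [tableBr_table29]; ext l; fin_cases l <;> simp
  have e5 : tableBr ε (table 29) (Pi.single 1 1) (Pi.single 2 1) = Pi.single 5 1 := by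
    rw [tableBr_table29]; ext l; fin_cases l <;> simp
  have e03 : tableBr ε (table 29) (Pi.single 0 1) (Pi.single 3 1) = ε • Pi.single 5 1 := by
    rw [tableBr_table29]; ext l; fin_cases l <;> simp
  have e13 : tableBr ε (table 29) (Pi.single 1 1) (Pi.single 3 1) = Pi.single 4 1 := by
    rw [tableBr_table29]; ext l; fin_cases l <;> simp
  have e32 : tableBr ε (table 29) (Pi.single 3 1) (Pi.single 2 1) = 0 := by
    rw [tableBr_table29]; ext l; fin_cases l <;> simp
  rw [e2] at h2
  rw [e4, h2] at h4
  rw [e5, h2] at h5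
  rw [e03, map_smul, h5] at h03
  rw [e13, h4] at h13
  rw [e32, h2, map_zero] at h32
  have hne : f (Pi.single 4 1) ≠ 0 := by simp
  generalize f (Pi.single 0 1) = u at *
  generalize f (Pi.single 1 1) = v at *
  generalize f (Pi.single 3 1) = w at *
  simp only [tableBr_table29] at h03 h13 h32 h4
  have a03 := congrFun h03 4
  have b03 := congrFun h03 5
  have a13 := congrFun h13 4
  have b13 := congrFun h13 5
  have a32 := congrFun h32 4
  have b32 := congrFun h32 5
  simp at a03 b03 a13 b13 a32 b32
  set Δ := u 0 * v 1 - u 1 * v 0 with hΔ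
  have hΔ0 : Δ ≠ 0 := by
    intro h0
    apply hne
    rw [h4]
    ext l
    fin_cases l <;> simp [h0]
  have hw0 : w 0 = 0 := by simpa [hΔ0] using a32
  have hw1 : w 1 = 0 := by simpa [hΔ0] using b32
  rw [hw0, hw1] at a03 b03 a13 b13
  have hw2 : w 2 = 0 := by
    have : 2 * Δ * w 2 = 0 := by
      rw [hΔ] at *
      linear_combination v 0 * b03 - v 1 * a03 - u 0 * b13 + u 1 * a13
    simpa [hΔ0, hk] using this
  rw [hw2] at a03 b03 a13 b13
  refine ⟨Δ, w 3, hΔ0, mul_left_cancel₀ hΔ0 ?_⟩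
  rw [hΔ] at *
  linear_combination (u 0 * v 1 - u 1 * v 0) * u 0 * b03 + δ * u 0 * w 3 * a13 -
    (u 0 * v 1 - u 1 * v 0) * u 1 * a03 - u 1 * w 3 * b13

end Families

/-! ### Isomorphisms between the models -/

section BracketIso

variable {k : Type*} [Field k]

theorem bracketIso_equivalence (n : ℕ) :
    Equivalence (BracketIso : ((Fin n → k) → (Fin n → k) → (Fin n → k)) → _ → Prop) where
  refl _ := ⟨LinearEquiv.refl k _, fun _ _ => rfl⟩
  symm := by
    rintro br br' ⟨e, he⟩
    exact ⟨e.symm, fun x y => e.injective (by simp [he])⟩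
  trans := by
    rintro br br' br'' ⟨e, he⟩ ⟨e', he'⟩
    exact ⟨e.trans e', fun x y => by simp [he, he']⟩

theorem bracketIso_tableBr_of_scaling {ε δ : k} {Λ : List (Fin 6 × Fin 6 × Fin 6 × Fin 3)}
    (d : Fin 6 → k) (hd : ∀ i, d i ≠ 0)
    (h : ∀ t ∈ Λ, ![1, -1, ε] t.2.2.2 * d t.2.2.1 = ![1, -1, δ] t.2.2.2 * (d t.1 * d t.2.1)) :
    BracketIso (tableBr ε Λ) (tableBr δ Λ) := by
  refine ⟨LinearEquiv.piCongrRight fun i => LinearEquiv.smulOfNeZero k k (d i) (hd i),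
    fun x y => ?_⟩
  induction Λ with
  | nil => exact map_zero _
  | cons t Λ ih =>
    rw [tableBr_cons, tableBr_cons, map_add, ih fun t' ht' => h t' (List.mem_cons_of_mem _ ht')]
    congr 1
    ext l
    have := h t List.mem_cons_self
    by_cases hl : l = t.2.2.1
    · subst hl
      simp
      linear_combination (x t.1 * y t.2.1 - x t.2.1 * y t.1) * this
    · simp [hl]

theorem bracketIso_family {ε s : k} (hs : s ≠ 0) {n : Fin 30} (hn : 26 ≤ n) :
    BracketIso (tableBr (ε * s ^ 2) (table n)) (tableBr ε (table n)) := by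
  obtain rfl | rfl | rfl | rfl : n = 26 ∨ n = 27 ∨ n = 28 ∨ n = 29 := by
    revert n; decide
  · refine bracketIso_tableBr_of_scaling ![1, 1, s, 1, s, 1] (fun i => ?_) ?_
    · fin_cases i <;> simp [hs]
    · simp [table, pow_two]
  · refine bracketIso_tableBr_of_scaling ![1, s, s, s, s ^ 2, s] (fun i => ?_) ?_
    · fin_cases i <;> simp [hs]
    · simp [table]; constructor <;> ring
  · refine bracketIso_tableBr_of_scaling ![1, s, 1, s, s, 1] (fun i => ?_) ?_
    · fin_cases i <;> simp [hs]
    · simp [table, pow_two]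
  · refine bracketIso_tableBr_of_scaling ![s, 1, s, s ^ 2, s ^ 2, s] (fun i => ?_) ?_
    · fin_cases i <;> simp [hs]
    · simp [table]; constructor <;> ring

/-- An isomorphism of brackets as an isomorphism of Lie algebras. -/
theorem nonempty_lieEquiv_of_bracketIso {br br' : (Fin 6 → k) → (Fin 6 → k) → (Fin 6 → k)}
    (hb : IsLieBracket k br) (hb' : IsLieBracket k br') (h : BracketIso br br') :
    Nonempty (BracketSpace hb ≃ₗ⁅k⁆ BracketSpace hb') := by
  obtain ⟨e, he⟩ := h
  exact ⟨{
    toFun := e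
    invFun := e.symm
    map_add' := e.map_add
    map_smul' := e.map_smul
    map_lie' := @fun x y => he x y
    left_inv := e.left_inv
    right_inv := e.right_inv }⟩

theorem bracketIso_of_lieEquiv {br br' : (Fin 6 → k) → (Fin 6 → k) → (Fin 6 → k)}
    {hb : IsLieBracket k br} {hb' : IsLieBracket k br'}
    (e : BracketSpace hb ≃ₗ⁅k⁆ BracketSpace hb') : BracketIso br br' :=
  ⟨e.toLinearEquiv, e.map_lie⟩

theorem lcs_eq_lc {br : (Fin 6 → k) → (Fin 6 → k) → (Fin 6 → k)} (hb : IsLieBracket k br) (m : ℕ) :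
    lcs br m = lc k (BracketSpace hb) m := by
  induction m with
  | zero => rfl
  | succ m ih => rw [lcs, ih]; rfl

theorem isNilpotentBracket_tableBr {ε : k} (hε : ε ≠ 0) (n : Fin 30) :
    IsNilpotentBracket (tableBr ε (table n)) :=
  ⟨5, (lcs_eq_lc (isLieBracket_tableBr ε n) 5).trans (lc_model hε n).2.2.2.2⟩

theorem eq_of_bracketIso (hk : (2 : k) ≠ 0) {ε δ : k} (hε : ε ≠ 0) (hδ : δ ≠ 0) {m n : Fin 30}
    (h : BracketIso (tableBr ε (table m)) (tableBr δ (table n))) :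
    m = n ∧ (26 ≤ n → ∃ s t : k, s ≠ 0 ∧ ε * s ^ 2 = δ * t ^ 2) := by
  have not_param : ∀ (ε δ : k), ε ≠ 0 → ∀ m n : Fin 30, (m = 28 ∧ n = 4) ∨ (m = 29 ∧ n = 14) →
      ¬ BracketIso (tableBr ε (table m)) (tableBr δ (table n)) := by
    rintro ε δ hε m n (⟨rfl, rfl⟩ | ⟨rfl, rfl⟩) h
    · rw [tableBr_eq_of_lt δ 1 (by decide), ← tableBr_zero_table28] at h
      obtain ⟨f, hf⟩ := h
      obtain ⟨s, t, hs, hst⟩ := exists_sq_of_table28 hk hf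
      simp [hε, hs] at hst
    · rw [tableBr_eq_of_lt δ 1 (by decide), ← tableBr_zero_table29] at h
      obtain ⟨f, hf⟩ := h
      obtain ⟨s, t, hs, hst⟩ := exists_sq_of_table29 hk hf
      simp [hε, hs] at hst
  obtain ⟨e⟩ := nonempty_lieEquiv_of_bracketIso (isLieBracket_tableBr ε m)
    (isLieBracket_tableBr δ n) h
  rcases eq_of_lieEquiv hε hδ e with rfl | ⟨h1, h2⟩ | ⟨h1, h2⟩ | ⟨h1, h2⟩ | ⟨h1, h2⟩
  · refine ⟨rfl, fun hn => ?_⟩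
    obtain ⟨f, hf⟩ := h
    obtain rfl | rfl | rfl | rfl : m = 26 ∨ m = 27 ∨ m = 28 ∨ m = 29 := by
      clear hf f e
      revert m; decide
    · exact exists_sq_of_table26 hε hf
    · exact exists_sq_of_table27 hf
    · exact exists_sq_of_table28 hk hf
    · exact exists_sq_of_table29 hk hf
  · exact absurd ((bracketIso_equivalence 6).symm h) (not_param _ _ hδ _ _ (.inl ⟨h2, h1⟩))
  · exact absurd h (not_param _ _ hε _ _ (.inl ⟨h1, h2⟩))
  · exact absurd ((bracketIso_equivalence 6).symm h) (not_param _ _ hδ _ _ (.inr ⟨h2, h1⟩))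
  · exact absurd h (not_param _ _ hε _ _ (.inr ⟨h1, h2⟩))

end BracketIso

/-! ### Generators and the lower central series -/

section Tools

variable {k : Type*} [Field k] {L : Type*} [LieRing L] [LieAlgebra k L]

theorem lie_mem_lc_succ {m : ℕ} (x : L) {y : L} (hy : y ∈ lc k L m) : ⁅x, y⁆ ∈ lc k L (m + 1) :=
  Submodule.subset_span ⟨x, y, hy, rfl⟩

theorem lc_succ_le (m : ℕ) : lc k L (m + 1) ≤ lc k L m := by
  induction m with
  | zero => exact le_top
  | succ m ih =>
    refine Submodule.span_le.2 ?_
    rintro _ ⟨x, y, hy, rfl⟩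
    exact lie_mem_lc_succ x (ih hy)

theorem lc_antitone : Antitone (lc k L) := antitone_nat_of_succ_le lc_succ_le

theorem lie_mem_lc {i j : ℕ} {x y : L} (hx : x ∈ lc k L i) (hy : y ∈ lc k L j) :
    ⁅x, y⁆ ∈ lc k L (i + j + 1) := by
  induction i generalizing x y j with
  | zero => simpa using lie_mem_lc_succ x hy
  | succ i ih =>
    induction hx using Submodule.span_induction with
    | mem w hw =>
      obtain ⟨u, v, hv, rfl⟩ := hw
      rw [lie_lie]
      refine sub_mem ?_ ?_
      · exact lc_antitone (by omega) (lie_mem_lc_succ u (ih hv hy))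
      · exact lc_antitone (by omega) (ih hv (lie_mem_lc_succ u hy))
    | zero => simp
    | add u v _ _ hu hv => rw [add_lie]; exact add_mem hu hv
    | smul c u _ hu => rw [smul_lie]; exact Submodule.smul_mem _ _ hu

theorem lc_succ_lt (hn : ∃ m, lc k L m = ⊥) {m : ℕ} (hm : lc k L m ≠ ⊥) :
    lc k L (m + 1) < lc k L m := by
  refine lt_of_le_of_ne (lc_succ_le m) fun h => hm ?_
  obtain ⟨N, hN⟩ := hn
  have key : ∀ i, lc k L (m + i) = lc k L m := by
    intro i
    induction i with
    | zero => rfl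
    | succ i ih => rw [← add_assoc, lc, ih]; exact h
  rw [← key N, eq_bot_iff, ← hN]
  exact lc_antitone (by omega)

theorem lc_succ_le_of_generators {m : ℕ} {X V : Set L} {S : Submodule k L}
    (hX : ⊤ ≤ Submodule.span k X ⊔ lc k L 1) (hV : lc k L m ≤ Submodule.span k V ⊔ lc k L (m + 1))
    (h : ∀ x ∈ X, ∀ v ∈ V, ⁅x, v⁆ ∈ S) (hS : lc k L (m + 2) ≤ S) :
    lc k L (m + 1) ≤ S := by
  refine Submodule.span_le.2 ?_
  rintro _ ⟨x, y, hy, rfl⟩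
  obtain ⟨a, ha, b, hb, rfl⟩ := Submodule.mem_sup.1 (hX (Submodule.mem_top (x := x)))
  obtain ⟨c, hc, d, hd, rfl⟩ := Submodule.mem_sup.1 (hV hy)
  rw [add_lie, lie_add]
  refine add_mem (add_mem ?_ (hS (lie_mem_lc_succ a hd))) (hS (lc_antitone (by omega)
    (lie_mem_lc hb hy)))
  clear hy
  induction ha using Submodule.span_induction with
  | mem x hx =>
    induction hc using Submodule.span_induction with
    | mem v hv => exact h x hx v hv
    | zero => simp
    | add u v _ _ hu hv => rw [lie_add]; exact add_mem hu hv
    | smul c u _ hu => rw [lie_smul]; exact Submodule.smul_mem _ _ hu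
  | zero => simp
  | add u v _ _ hu hv => rw [add_lie]; exact add_mem hu hv
  | smul c u _ hu => rw [smul_lie]; exact Submodule.smul_mem _ _ hu

/-- A subspace closed under brackets which generates modulo the derived algebra is everything. -/
theorem eq_top_of_generators (hn : ∃ m, lc k L m = ⊥) {S : Submodule k L}
    (hS : ⊤ ≤ S ⊔ lc k L 1) (hlie : ∀ x ∈ S, ∀ y ∈ S, ⁅x, y⁆ ∈ S) : S = ⊤ := by
  have step : ∀ m, lc k L m ≤ S ⊔ lc k L (m + 1) := by
    intro m
    induction m with
    | zero => exact hS
    | succ m ih =>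
      refine Submodule.span_le.2 ?_
      rintro _ ⟨x, y, hy, rfl⟩
      obtain ⟨a, ha, b, hb, rfl⟩ := Submodule.mem_sup.1 (hS (Submodule.mem_top (x := x)))
      obtain ⟨c, hc, d, hd, rfl⟩ := Submodule.mem_sup.1 (ih hy)
      rw [add_lie, lie_add, add_assoc ⁅a, c⁆]
      change _ ∈ S ⊔ lc k L (m + 2)
      exact add_mem (Submodule.mem_sup_left (hlie a ha c hc)) (Submodule.mem_sup_right
        (add_mem (lie_mem_lc_succ a hd) (lc_antitone (by omega) (lie_mem_lc hb hy))))
  have all : ∀ m, ⊤ ≤ S ⊔ lc k L m := by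
    intro m
    induction m with
    | zero => exact le_sup_right
    | succ m ih => exact ih.trans (sup_le le_sup_left (step m))
  obtain ⟨m, hm⟩ := hn
  simpa [hm] using all m

/-! ### Dimension counts -/

variable [Module.Finite k L]

theorem finrank_lc_succ_lt (hn : ∃ m, lc k L m = ⊥) {m : ℕ} (hm : finrank k (lc k L m) ≠ 0) :
    finrank k (lc k L (m + 1)) < finrank k (lc k L m) :=
  Submodule.finrank_lt_finrank_of_lt (lc_succ_lt hn fun h => hm (by rw [h, finrank_bot]))

theorem exists_span_sup (A : Submodule k L) (d : ℕ) {B : Submodule k L}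
    (h : finrank k A ≤ finrank k B + d) (hBA : B ≤ A) :
    ∃ v : Fin d → L, (∀ i, v i ∈ A) ∧ A ≤ Submodule.span k (Set.range v) ⊔ B := by
  induction d generalizing B with
  | zero => exact ⟨Fin.elim0, fun i => i.elim0, (Submodule.eq_of_le_of_finrank_le hBA h).ge.trans
      le_sup_right⟩
  | succ d ih =>
    by_cases hAB : A ≤ B
    · exact ⟨0, fun i => A.zero_mem, hAB.trans le_sup_right⟩
    obtain ⟨x, hxA, hxB⟩ := SetLike.not_le_iff_exists.1 hAB
    have hlt : B < Submodule.span k {x} ⊔ B := lt_of_le_of_ne le_sup_right fun h => hxB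
      (h ▸ Submodule.mem_sup_left (Submodule.mem_span_singleton_self x))
    have := Submodule.finrank_lt_finrank_of_lt hlt
    obtain ⟨v, hv, hv'⟩ := ih (B := Submodule.span k {x} ⊔ B) (by omega)
      (sup_le ((Submodule.span_singleton_le_iff_mem _ _).2 hxA) hBA)
    refine ⟨Fin.cons x v, fun i => Fin.cases hxA hv i, hv'.trans (le_of_eq ?_)⟩
    rw [Fin.range_cons, Submodule.span_insert, ← sup_assoc, sup_comm (Submodule.span k {x})]

theorem exists_relation {A B : Submodule k L} (d : ℕ) (hBA : B ≤ A)
    (h : finrank k A < finrank k B + d) (v : Fin d → L) (hv : ∀ i, v i ∈ A) :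
    ∃ c : Fin d → k, c ≠ 0 ∧ ∑ i, c i • v i ∈ B := by
  by_contra! hc
  have hli : LinearIndependent k (B.mkQ ∘ v) := by
    refine Fintype.linearIndependent_iff.2 fun c h0 => ?_
    by_contra! hne
    refine hc c (fun h => ?_) ?_
    · obtain ⟨i, hi⟩ := hne
      exact hi (congrFun h i)
    · rw [← Submodule.Quotient.mk_eq_zero, ← Submodule.mkQ_apply, map_sum]
      simpa using h0
  have h1 := finrank_span_eq_card hli
  have h2 : Submodule.span k (Set.range (B.mkQ ∘ v)) ≤ A.map B.mkQ := by
    refine Submodule.span_le.2 ?_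
    rintro _ ⟨i, rfl⟩
    exact Submodule.mem_map_of_mem (hv i)
  have h3 := Submodule.finrank_mono h2
  have h4 := (B.mkQ.domRestrict A).finrank_range_add_finrank_ker
  rw [LinearMap.range_domRestrict, LinearMap.ker_domRestrict, Submodule.ker_mkQ,
    (Submodule.comapSubtypeEquivOfLe hBA).finrank_eq] at h4
  simp at h1
  omega

end Tools

section Tables

variable {k : Type*} [Field k] {L : Type*} [LieRing L] [LieAlgebra k L]

theorem fst_lt_snd_of_mem_table : ∀ n : Fin 30, ∀ t ∈ table n, t.1 < t.2.1 := by decide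

/-- The value prescribed by the `n`-th table for the bracket of the `i`-th and the `j`-th member
of a family. -/
def tableValue (ε : k) (n : Fin 30) (y : Fin 6 → L) (i j : Fin 6) : L :=
  ((table n).map fun t =>
    if t.1 = i ∧ t.2.1 = j then (![1, -1, ε] t.2.2.2 : k) • y t.2.2.1 else 0).sum

theorem linearCombination_tableBr_single (ε : k) (n : Fin 30) (y : Fin 6 → L) {i j : Fin 6}
    (hij : i < j) :
    Fintype.linearCombination k y (tableBr ε (table n) (Pi.single i 1) (Pi.single j 1)) =
      tableValue ε n y i j := by
  have h := fst_lt_snd_of_mem_table n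
  unfold tableValue
  revert h
  induction table n with
  | nil => simp [tableBr_nil]
  | cons t Λ ih =>
    intro h
    rw [tableBr_cons, map_add, ih fun t ht => h t (List.mem_cons_of_mem _ ht), List.map_cons,
      List.sum_cons]
    congr 1
    have ht := h t List.mem_cons_self
    rw [Fintype.linearCombination_apply_single]
    have h0 : ¬ (t.2.1 = i ∧ t.1 = j) := by rintro ⟨rfl, rfl⟩; exact lt_asymm ht hij
    by_cases h1 : t.1 = i <;> by_cases h2 : t.2.1 = j <;> by_cases h3 : t.2.1 = i <;>
      by_cases h4 : t.1 = j <;> simp_all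

theorem linearCombination_tableBr {ε : k} {n : Fin 30} {y : Fin 6 → L}
    (h : ∀ i j, i < j → ⁅y i, y j⁆ = tableValue ε n y i j) (a b : Fin 6 → k) :
    Fintype.linearCombination k y (tableBr ε (table n) a b) =
      ⁅Fintype.linearCombination k y a, Fintype.linearCombination k y b⁆ := by
  set φ := Fintype.linearCombination k y with hφ
  obtain ⟨h1, h2, h3, h4, h5, -⟩ := isLieBracket_tableBr ε n
  let f : (Fin 6 → k) →ₗ[k] (Fin 6 → k) →ₗ[k] L :=
    LinearMap.mk₂ k (fun a b => φ (tableBr ε (table n) a b)) (fun x y z => by rw [h1, map_add])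
      (fun c x y => by rw [h2, map_smul]) (fun x y z => by rw [h3, map_add])
      (fun c x y => by rw [h4, map_smul])
  let g : (Fin 6 → k) →ₗ[k] (Fin 6 → k) →ₗ[k] L :=
    LinearMap.mk₂ k (fun a b => ⁅φ a, φ b⁆) (fun x y z => by rw [map_add, add_lie])
      (fun c x y => by rw [map_smul, smul_lie]) (fun x y z => by rw [map_add, lie_add])
      (fun c x y => by rw [map_smul, lie_smul])
  have hφs : ∀ i, φ (Pi.single i 1) = y i := fun i => by simp [hφ]
  have hlt : ∀ i j, i < j → f (Pi.single i 1) (Pi.single j 1) = g (Pi.single i 1) (Pi.single j 1) :=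
    fun i j hij => by
      change φ _ = ⁅φ _, φ _⁆
      rw [hφs, hφs, h i j hij, hφ, linearCombination_tableBr_single ε n y hij]
  have hskew : ∀ a b, tableBr ε (table n) b a = -tableBr ε (table n) a b := fun a b => by
    have := h5 (a + b)
    rw [h1, h3, h3, h5, h5, zero_add, add_zero] at this
    exact eq_neg_of_add_eq_zero_right this
  have hfg : f = g := by
    refine LinearMap.ext_basis (Pi.basisFun k (Fin 6)) (Pi.basisFun k (Fin 6)) ?_
    intro i j
    rw [Pi.basisFun_apply, Pi.basisFun_apply]
    rcases lt_trichotomy i j with hij | rfl | hij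
    · exact hlt i j hij
    · change φ _ = ⁅φ _, φ _⁆
      rw [h5, map_zero, lie_self]
    · have := hlt j i hij
      change φ _ = ⁅φ _, φ _⁆ at this
      change φ _ = ⁅φ _, φ _⁆
      rw [hskew, map_neg, this, lie_skew]
  exact LinearMap.congr_fun₂ hfg a b

variable [Module.Finite k L]

theorem nonempty_lieEquiv_model (hn : ∃ m, lc k L m = ⊥) (hL : finrank k L = 6) {X : Set L}
    (hX : ⊤ ≤ Submodule.span k X ⊔ lc k L 1) (ε : k) (n : Fin 30) (y : Fin 6 → L)
    (hXy : ∀ x ∈ X, x ∈ Submodule.span k (Set.range y) ⊔ lc k L 1)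
    (h : ∀ i j, i < j → ⁅y i, y j⁆ = tableValue ε n y i j) :
    Nonempty (L ≃ₗ⁅k⁆ Model ε n) := by
  set φ := Fintype.linearCombination k y with hφ
  have hlie := linearCombination_tableBr h
  have hsurj : LinearMap.range φ = ⊤ := by
    refine eq_top_of_generators hn ?_ ?_
    · rw [hφ, Fintype.range_linearCombination]
      exact hX.trans (sup_le (Submodule.span_le.2 hXy) le_sup_right)
    · rintro _ ⟨a, rfl⟩ _ ⟨b, rfl⟩
      exact ⟨_, hlie a b⟩
  have hinj : Function.Injective φ :=
    (LinearMap.injective_iff_surjective_of_finrank_eq_finrank (by simp [hL])).2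
      (LinearMap.range_eq_top.1 hsurj)
  let e := LinearEquiv.ofBijective φ ⟨hinj, LinearMap.range_eq_top.1 hsurj⟩
  let e' : Model ε n ≃ₗ⁅k⁆ L := {
    toFun := e
    invFun := e.symm
    map_add' := e.map_add
    map_smul' := e.map_smul
    map_lie' := @fun a b => hlie a b
    left_inv := e.left_inv
    right_inv := e.right_inv }
  exact ⟨e'.symm⟩

theorem forall_lt_fin_six {P : Fin 6 → Fin 6 → Prop} :
    (∀ i j, i < j → P i j) ↔ (P 0 1 ∧ P 0 2 ∧ P 0 3 ∧ P 0 4 ∧ P 0 5) ∧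
      (P 1 2 ∧ P 1 3 ∧ P 1 4 ∧ P 1 5) ∧ (P 2 3 ∧ P 2 4 ∧ P 2 5) ∧ (P 3 4 ∧ P 3 5) ∧ P 4 5 := by
  refine ⟨fun h => by simp [h], fun h i j hij => ?_⟩
  fin_cases i <;> fin_cases j <;> first | exact absurd hij (by decide) | simp [h]

end Tables

/-! ### Recognising the models -/

section Recognition

variable (k : Type*) [Field k] (L : Type*) [LieRing L] [LieAlgebra k L]

/-- `L` is one of the Lie algebras of the classification. -/
def IsModel : Prop :=
  ∃ (n : Fin 30) (ε : k), ε ≠ 0 ∧ Nonempty (L ≃ₗ⁅k⁆ Model ε n)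

variable {k L}

theorem lie_rev {x y w : L} (h : ⁅x, y⁆ = w) : ⁅y, x⁆ = -w := by
  rw [← h, lie_skew]

theorem mem_span_range_sup {y0 y1 y2 y3 y4 y5 x : L} {B : Submodule k L} (c0 c1 c2 c3 c4 c5 : k)
    (h : x = c0 • y0 + c1 • y1 + c2 • y2 + c3 • y3 + c4 • y4 + c5 • y5) :
    x ∈ Submodule.span k (Set.range ![y0, y1, y2, y3, y4, y5]) ⊔ B := by
  refine Submodule.mem_sup_left ?_
  have hy : ∀ i, ![y0, y1, y2, y3, y4, y5] i ∈
    Submodule.span k (Set.range ![y0, y1, y2, y3, y4, y5]) := fun i =>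
      Submodule.subset_span ⟨i, rfl⟩
  rw [h]
  exact add_mem (add_mem (add_mem (add_mem (add_mem (Submodule.smul_mem _ _ (hy 0))
    (Submodule.smul_mem _ _ (hy 1))) (Submodule.smul_mem _ _ (hy 2)))
    (Submodule.smul_mem _ _ (hy 3))) (Submodule.smul_mem _ _ (hy 4)))
    (Submodule.smul_mem _ _ (hy 5))

variable [Module.Finite k L]

theorem isModel_of_relations (hn : ∃ m, lc k L m = ⊥) (hL : finrank k L = 6) {X : Set L}
    (hX : ⊤ ≤ Submodule.span k X ⊔ lc k L 1) {ε : k} (hε : ε ≠ 0) (n : Fin 30)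
    (y0 y1 y2 y3 y4 y5 : L)
    (hXy : ∀ x ∈ X, x ∈ Submodule.span k (Set.range ![y0, y1, y2, y3, y4, y5]) ⊔ lc k L 1)
    (h : ∀ i j, i < j → ⁅![y0, y1, y2, y3, y4, y5] i, ![y0, y1, y2, y3, y4, y5] j⁆ =
      tableValue ε n ![y0, y1, y2, y3, y4, y5] i j) : IsModel k L :=
  ⟨n, ε, hε, nonempty_lieEquiv_model hn hL hX ε n _ hXy h⟩

end Recognition

section MaximalClass

variable {k : Type*} [Field k] {L : Type*} [LieRing L] [LieAlgebra k L] [Module.Finite k L]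
  (hn : ∃ m, lc k L m = ⊥) (hL : finrank k L = 6)

include hn hL

theorem isModel_maximalClass_of_eq_zero (hk : (2 : k) ≠ 0) {x1 x2 x3 x4 x5 z : L} {a b q : k}
    (hX : ⊤ ≤ Submodule.span k {x1, x2} ⊔ lc k L 1) (h12 : ⁅x1, x2⁆ = x3) (h13 : ⁅x1, x3⁆ = x4)
    (h14 : ⁅x1, x4⁆ = x5) (h15 : ⁅x1, x5⁆ = 0) (h23 : ⁅x2, x3⁆ = a • x5 + b • z)
    (h24 : ⁅x2, x4⁆ = 0) (h25 : ⁅x2, x5⁆ = q • z) (h34 : ⁅x3, x4⁆ = -(q • z))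
    (h35 : ⁅x3, x5⁆ = 0) (h45 : ⁅x4, x5⁆ = 0)
    (hz : ∀ x : L, ⁅x, z⁆ = 0) (hq : q ≠ 0) : IsModel k L := by
  have hz' : ∀ x : L, ⁅z, x⁆ = 0 := fun x => by rw [← lie_skew, hz, neg_zero]
  obtain ⟨s, hs⟩ : ∃ s, s = -b / (2 * q) := ⟨_, rfl⟩
  have main : ∀ μ : k, μ ≠ 0 → ∀ n : Fin 30, (μ * a = 0 ∧ n = 24 ∨ μ * a = 1 ∧ n = 25) →
      IsModel k L := by
    intro μ hμ n hn'
    obtain ⟨y1, h1⟩ : ∃ y, y = μ • (x2 + s • x4) := ⟨_, rfl⟩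
    obtain ⟨y2, h2⟩ : ∃ y, y = μ • (x3 + s • x5) := ⟨_, rfl⟩
    obtain ⟨y3, h3⟩ : ∃ y, y = μ • x4 := ⟨_, rfl⟩
    obtain ⟨y4, h4⟩ : ∃ y, y = μ • x5 := ⟨_, rfl⟩
    obtain ⟨y5, h5⟩ : ∃ y, y = (μ ^ 2 * q) • z := ⟨_, rfl⟩
    refine isModel_of_relations hn hL hX one_ne_zero n x1 y1 y2 y3 y4 y5 ?_ ?_
    · rintro x (rfl | rfl)
      · exact mem_span_range_sup 1 0 0 0 0 0 (by module)
      · refine mem_span_range_sup 0 μ⁻¹ 0 (-s / μ) 0 0 ?_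
        subst h1 h3
        match_scalars <;> field_simp
        ring
    · rw [forall_lt_fin_six]
      rcases hn' with ⟨ha, rfl⟩ | ⟨ha, rfl⟩
      all_goals
        simp [tableValue, table]
        subst h1 h2 h3 h4 h5 hs
        simp only [lie_add, add_lie, lie_smul, smul_lie, h12, h13, h14, h15, h23, h24, h25, h34,
          h35, h45, lie_rev h34, lie_rev h45,
          hz, lie_self, smul_zero, add_zero]
        and_intros
        all_goals first | trivial | (match_scalars <;> first | (field_simp; done) | grind)
  by_cases ha : a = 0
  · exact main 1 one_ne_zero 24 (.inl ⟨by simp [ha], rfl⟩)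
  · exact main a⁻¹ (inv_ne_zero ha) 25 (.inr ⟨inv_mul_cancel₀ ha, rfl⟩)

theorem isModel_maximalClass_of_ne_zero (hk : (2 : k) ≠ 0) {x1 x2 x3 x4 x5 z : L} {a b p q : k}
    (hX : ⊤ ≤ Submodule.span k {x1, x2} ⊔ lc k L 1) (h12 : ⁅x1, x2⁆ = x3) (h13 : ⁅x1, x3⁆ = x4)
    (h14 : ⁅x1, x4⁆ = x5) (h15 : ⁅x1, x5⁆ = p • z) (h23 : ⁅x2, x3⁆ = a • x5 + b • z)
    (h24 : ⁅x2, x4⁆ = (a * p) • z) (h25 : ⁅x2, x5⁆ = q • z) (h34 : ⁅x3, x4⁆ = -(q • z))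
    (h35 : ⁅x3, x5⁆ = 0) (h45 : ⁅x4, x5⁆ = 0)
    (hz : ∀ x : L, ⁅x, z⁆ = 0) (hq : q ≠ 0) : IsModel k L := by
  have hz' : ∀ x : L, ⁅z, x⁆ = 0 := fun x => by rw [← lie_skew, hz, neg_zero]
  obtain ⟨t, ht⟩ : ∃ t, t = -p / q := ⟨_, rfl⟩
  have htq : t * q = -p := by rw [ht]; field_simp
  have hX' : ⊤ ≤ Submodule.span k {x1 + t • x2, x2} ⊔ lc k L 1 := by
    refine hX.trans (sup_le_sup_right (Submodule.span_le.2 ?_) _)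
    rintro x (rfl | rfl)
    · exact Submodule.mem_span_pair.2 ⟨1, -t, by module⟩
    · exact Submodule.subset_span (by simp)
  refine isModel_maximalClass_of_eq_zero hn hL hk (a := a) (b := b - t * a ^ 2 * p)
    (x5 := x5 + (t * a * p) • z) hX' rfl rfl (q := q) (z := z) ?_ ?_ ?_ ?_ ?_ ?_ ?_ ?_ hz hq
  all_goals
    simp only [lie_add, add_lie, lie_smul, smul_lie, h12, h13, h14, h15, h23, h24, h25, h34,
      h35, h45, hz, hz', lie_self, smul_zero, add_zero] <;> match_scalars <;> grind

theorem isModel_maximalClass_of_abelian (hk : (2 : k) ≠ 0) {x1 x2 x3 x4 x5 z : L} {a b p : k}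
    (hX : ⊤ ≤ Submodule.span k {x1, x2} ⊔ lc k L 1) (h12 : ⁅x1, x2⁆ = x3) (h13 : ⁅x1, x3⁆ = x4)
    (h14 : ⁅x1, x4⁆ = x5) (h15 : ⁅x1, x5⁆ = p • z) (h23 : ⁅x2, x3⁆ = a • x5 + b • z)
    (h24 : ⁅x2, x4⁆ = (a * p) • z) (h25 : ⁅x2, x5⁆ = 0) (h34 : ⁅x3, x4⁆ = 0)
    (h35 : ⁅x3, x5⁆ = 0) (h45 : ⁅x4, x5⁆ = 0)
    (hz : ∀ x : L, ⁅x, z⁆ = 0) (hp : p ≠ 0) : IsModel k L := by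
  have hz' : ∀ x : L, ⁅z, x⁆ = 0 := fun x => by rw [← lie_skew, hz, neg_zero]
  have main : ∀ μ s : k, μ ≠ 0 → ∀ n : Fin 30,
      (a = 0 ∧ b = 0 ∧ s = 0 ∧ n = 21 ∨ a = 0 ∧ μ * b = p ∧ s = 0 ∧ n = 22 ∨
        μ * a = 1 ∧ b = 2 * s * a ^ 2 * p ∧ n = 23) → IsModel k L := by
    intro μ s hμ n hn'
    obtain ⟨y0, h0⟩ : ∃ y, y = x1 + s • x2 := ⟨_, rfl⟩
    obtain ⟨y1, h1⟩ : ∃ y, y = μ • x2 := ⟨_, rfl⟩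
    obtain ⟨y2, h2⟩ : ∃ y, y = μ • x3 := ⟨_, rfl⟩
    obtain ⟨y3, h3⟩ : ∃ y, y = μ • (x4 + (s * a) • x5 + (s * b) • z) := ⟨_, rfl⟩
    obtain ⟨y4, h4⟩ : ∃ y, y = μ • (x5 + (2 * s * a * p) • z) := ⟨_, rfl⟩
    obtain ⟨y5, h5⟩ : ∃ y, y = (μ * p) • z := ⟨_, rfl⟩
    refine isModel_of_relations hn hL hX one_ne_zero n y0 y1 y2 y3 y4 y5 ?_ ?_
    · rintro x (rfl | rfl)
      · refine mem_span_range_sup 1 (-s / μ) 0 0 0 0 ?_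
        subst h0 h1
        match_scalars <;> field_simp
        ring
      · refine mem_span_range_sup 0 μ⁻¹ 0 0 0 0 ?_
        subst h1
        match_scalars <;> field_simp
    · rw [forall_lt_fin_six]
      rcases hn' with ⟨ha, hb, hs, rfl⟩ | ⟨ha, hb, hs, rfl⟩ | ⟨ha, hb, rfl⟩
      all_goals
        simp [tableValue, table]
        subst h0 h1 h2 h3 h4 h5
        simp only [lie_add, add_lie, lie_smul, smul_lie, h12, h13, h14, h15, h23, h24, h25, h34,
          h35, h45, hz, hz', lie_self, smul_zero, add_zero]
        and_intros
        all_goals first | trivial | (match_scalars <;> first | (field_simp; done) | grind)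
  by_cases ha : a = 0
  · by_cases hb : b = 0
    · exact main 1 0 one_ne_zero 21 (.inl ⟨ha, hb, rfl, rfl⟩)
    · exact main (p / b) 0 (div_ne_zero hp hb) 22 (.inr (.inl ⟨ha, by field_simp, rfl, rfl⟩))
  · exact main a⁻¹ (b / (2 * a ^ 2 * p)) (inv_ne_zero ha) 23
      (.inr (.inr ⟨inv_mul_cancel₀ ha, by field_simp, rfl⟩))

end MaximalClass

section Generators

variable {k : Type*} [Field k] {L : Type*} [LieRing L] [LieAlgebra k L]

theorem lie_mem_lc_le {i j m : ℕ} (h : m ≤ i + j + 1) {x y : L} (hx : x ∈ lc k L i)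
    (hy : y ∈ lc k L j) : ⁅x, y⁆ ∈ lc k L m :=
  lc_antitone h (lie_mem_lc hx hy)

theorem lc_one_le_of_pair {x1 x2 : L} (hX : ⊤ ≤ Submodule.span k {x1, x2} ⊔ lc k L 1) :
    lc k L 1 ≤ Submodule.span k {⁅x1, x2⁆} ⊔ lc k L 2 := by
  have h12 : ⁅x1, x2⁆ ∈ Submodule.span k {⁅x1, x2⁆} ⊔ lc k L 2 :=
    Submodule.mem_sup_left (Submodule.mem_span_singleton_self _)
  have h21 : ⁅x2, x1⁆ ∈ Submodule.span k {⁅x1, x2⁆} ⊔ lc k L 2 := by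
    rw [← lie_skew x2 x1]
    exact neg_mem h12
  refine lc_succ_le_of_generators hX hX ?_ le_sup_right
  rintro x (rfl | rfl) y (rfl | rfl)
  · simp
  · exact h12
  · exact h21
  · simp

theorem lc_succ_le_of_pair {m : ℕ} {x1 x2 v : L}
    (hX : ⊤ ≤ Submodule.span k {x1, x2} ⊔ lc k L 1)
    (hV : lc k L m ≤ Submodule.span k {v} ⊔ lc k L (m + 1)) :
    lc k L (m + 1) ≤ Submodule.span k {⁅x1, v⁆, ⁅x2, v⁆} ⊔ lc k L (m + 2) := by
  refine lc_succ_le_of_generators hX hV ?_ le_sup_right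
  rintro x (rfl | rfl) y rfl <;> exact Submodule.mem_sup_left (Submodule.subset_span (by simp))

theorem span_pair_sup_le {u v : L} {B : Submodule k L} (hv : v ∈ B) :
    Submodule.span k {u, v} ⊔ B ≤ Submodule.span k {u} ⊔ B := by
  refine sup_le (Submodule.span_le.2 ?_) le_sup_right
  rintro x (rfl | rfl)
  · exact Submodule.mem_sup_left (Submodule.mem_span_singleton_self _)
  · exact Submodule.mem_sup_right hv

theorem mem_span_singleton_sup {u w : L} {B : Submodule k L} :
    w ∈ Submodule.span k {u} ⊔ B ↔ ∃ a : k, ∃ b ∈ B, w = a • u + b := by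
  rw [Submodule.mem_sup]
  constructor
  · rintro ⟨y, hy, b, hb, rfl⟩
    obtain ⟨a, rfl⟩ := Submodule.mem_span_singleton.1 hy
    exact ⟨a, b, hb, rfl⟩
  · rintro ⟨a, b, hb, rfl⟩
    exact ⟨_, Submodule.mem_span_singleton.2 ⟨a, rfl⟩, b, hb, rfl⟩

variable [Module.Finite k L]

theorem exists_pair {A B : Submodule k L} (hBA : B ≤ A) (h : finrank k A ≤ finrank k B + 2) :
    ∃ x1 ∈ A, ∃ x2 ∈ A, A ≤ Submodule.span k {x1, x2} ⊔ B := by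
  obtain ⟨v, hv, hA⟩ := exists_span_sup A 2 h hBA
  refine ⟨v 0, hv 0, v 1, hv 1, hA.trans (le_of_eq ?_)⟩
  congr 2
  ext x
  simp [Fin.exists_fin_two, eq_comm]

theorem exists_singleton {A B : Submodule k L} (hBA : B ≤ A) (h : finrank k A ≤ finrank k B + 1) :
    ∃ x ∈ A, A ≤ Submodule.span k {x} ⊔ B := by
  obtain ⟨v, hv, hA⟩ := exists_span_sup A 1 h hBA
  refine ⟨v 0, hv 0, hA.trans (le_of_eq ?_)⟩
  congr 2
  ext x
  simp [eq_comm]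

theorem exists_triple {A B : Submodule k L} (hBA : B ≤ A) (h : finrank k A ≤ finrank k B + 3) :
    ∃ x1 ∈ A, ∃ x2 ∈ A, ∃ x3 ∈ A, A ≤ Submodule.span k {x1, x2, x3} ⊔ B := by
  obtain ⟨v, hv, hA⟩ := exists_span_sup A 3 h hBA
  refine ⟨v 0, hv 0, v 1, hv 1, v 2, hv 2, hA.trans (le_of_eq ?_)⟩
  congr 2
  ext x
  simp [Fin.exists_fin_succ, eq_comm]

theorem exists_span_eq_lie_mem {A B : Submodule k L} (hBA : B ≤ A)
    (h : finrank k A < finrank k B + 2) {x1 x2 : L} (h1 : ⁅x1, ⁅x1, x2⁆⁆ ∈ A)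
    (h2 : ⁅x2, ⁅x1, x2⁆⁆ ∈ A) :
    ∃ y1 y2 : L, Submodule.span k {y1, y2} = Submodule.span k {x1, x2} ∧
      ⁅y2, ⁅y1, y2⁆⁆ ∈ B := by
  obtain ⟨c, hc, hcB⟩ := exists_relation 2 hBA h ![⁅x1, ⁅x1, x2⁆⁆, ⁅x2, ⁅x1, x2⁆⁆]
    (fun i => by fin_cases i <;> assumption)
  simp at hcB
  by_cases hc1 : c 1 = 0
  · have hc0 : c 0 ≠ 0 := fun h0 => hc (by ext i; fin_cases i <;> simp [h0, hc1])
    refine ⟨x2, x1, by rw [Set.pair_comm], ?_⟩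
    rw [hc1, zero_smul, add_zero] at hcB
    rw [← lie_skew x2, lie_neg]
    exact neg_mem ((Submodule.smul_mem_iff _ hc0).1 hcB)
  · refine ⟨x1, x2 + (c 0 / c 1) • x1, le_antisymm (Submodule.span_le.2 ?_)
      (Submodule.span_le.2 ?_), ?_⟩
    · rintro x (rfl | rfl)
      · exact Submodule.subset_span (by simp)
      · exact Submodule.mem_span_pair.2 ⟨c 0 / c 1, 1, by module⟩
    · rintro x (rfl | rfl)
      · exact Submodule.subset_span (by simp)
      · exact Submodule.mem_span_pair.2 ⟨-(c 0 / c 1), 1, by module⟩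
    · refine (Submodule.smul_mem_iff _ hc1).1 ?_
      convert hcB using 1
      simp
      match_scalars <;> field_simp

end Generators

section MaximalClass

variable {k : Type*} [Field k] {L : Type*} [LieRing L] [LieAlgebra k L] [Module.Finite k L]
  (hn : ∃ m, lc k L m = ⊥) (hL : finrank k L = 6)

include hn hL

theorem isModel_maximalClass (hk : (2 : k) ≠ 0) (h1 : finrank k (lc k L 1) = 4)
    (h2 : finrank k (lc k L 2) = 3) (h3 : finrank k (lc k L 3) = 2)
    (h4 : finrank k (lc k L 4) = 1) (h5 : lc k L 5 = ⊥) : IsModel k L := by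
  obtain ⟨w1, -, w2, -, hW⟩ := exists_pair (le_top : lc k L 1 ≤ ⊤) (by rw [finrank_top]; omega)
  obtain ⟨x1, x2, hspan, h233⟩ := exists_span_eq_lie_mem (x1 := w1) (x2 := w2)
    (lc_antitone (by norm_num) : lc k L 3 ≤ lc k L 2) (by omega)
    (lie_mem_lc_succ w1 (lie_mem_lc_succ w1 trivial))
    (lie_mem_lc_succ w2 (lie_mem_lc_succ w1 trivial))
  rw [← hspan] at hW
  obtain ⟨x3, h12⟩ : ∃ x3, ⁅x1, x2⁆ = x3 := ⟨_, rfl⟩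
  obtain ⟨x4, h13⟩ : ∃ x4, ⁅x1, x3⁆ = x4 := ⟨_, rfl⟩
  obtain ⟨x5, h14⟩ : ∃ x5, ⁅x1, x4⁆ = x5 := ⟨_, rfl⟩
  rw [h12] at h233
  have m3 : x3 ∈ lc k L 1 := h12 ▸ lie_mem_lc_succ x1 trivial
  have m4 : x4 ∈ lc k L 2 := h13 ▸ lie_mem_lc_succ x1 m3
  have m5 : x5 ∈ lc k L 3 := h14 ▸ lie_mem_lc_succ x1 m4
  have hb : ∀ x : L, x ∈ lc k L 5 → x = 0 := fun x hx => by simpa [h5] using hx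
  have h24' : ⁅x2, x4⁆ = ⁅x1, ⁅x2, x3⁆⁆ := by
    rw [← h13, leibniz_lie, ← lie_skew x2 x1, h12, neg_lie, lie_self, neg_zero, zero_add]
  have s1 := lc_one_le_of_pair hW
  rw [h12] at s1
  have s2 := (lc_succ_le_of_pair hW s1).trans (span_pair_sup_le h233)
  rw [h13] at s2
  have m24 : ⁅x2, x4⁆ ∈ lc k L 4 := h24' ▸ lie_mem_lc_succ x1 h233
  have s3 := (lc_succ_le_of_pair hW s2).trans (span_pair_sup_le m24)
  rw [h14] at s3
  have s4 := lc_succ_le_of_pair hW s3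
  obtain ⟨z, mz, hz⟩ := exists_singleton (bot_le : ⊥ ≤ lc k L 4) (by simp [h4])
  rw [sup_bot_eq] at hz
  have hz0 : ∀ x : L, ⁅x, z⁆ = 0 := fun x => hb _ (lie_mem_lc_succ x mz)
  obtain ⟨p, h15⟩ := Submodule.mem_span_singleton.1 (hz (lie_mem_lc_succ x1 m5))
  obtain ⟨q, h25⟩ := Submodule.mem_span_singleton.1 (hz (lie_mem_lc_succ x2 m5))
  obtain ⟨a, w, hw, h23⟩ := mem_span_singleton_sup.1 (s3 h233)
  obtain ⟨b, rfl⟩ := Submodule.mem_span_singleton.1 (hz hw)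
  have h24 : ⁅x2, x4⁆ = (a * p) • z := by
    rw [h24', h23, lie_add, lie_smul, lie_smul, hz0, ← h15]
    module
  have h34 : ⁅x3, x4⁆ = -(q • z) := by
    rw [← h12, lie_lie, h24, lie_smul, hz0, h14, h25]
    module
  have h35 : ⁅x3, x5⁆ = 0 := hb _ (lie_mem_lc (i := 1) (j := 3) m3 m5)
  have h45 : ⁅x4, x5⁆ = 0 := hb _ (lie_mem_lc_le (i := 2) (j := 3) (by norm_num) m4 m5)
  by_cases hq : q = 0
  · rw [hq, zero_smul] at h25 h34
    rw [neg_zero] at h34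
    refine isModel_maximalClass_of_abelian hn hL hk hW h12 h13 h14 h15.symm h23 h24 h25.symm h34
      h35 h45 hz0 ?_
    rintro rfl
    have : lc k L 4 ≤ ⊥ := by simpa [← h15, ← h25, h5] using s4
    rw [le_bot_iff.1 this, finrank_bot] at h4
    exact zero_ne_one h4
  · exact isModel_maximalClass_of_ne_zero hn hL hk hW h12 h13 h14 h15.symm h23 h24 h25.symm h34
      h35 h45 hz0 hq

end MaximalClass

section QuadraticForm

variable {k : Type*} [Field k]

theorem exists_ne_zero_of_quadratic (hk : (2 : k) ≠ 0) {p q r : k} (h : p ≠ 0 ∨ q ≠ 0 ∨ r ≠ 0) :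
    ∃ a b : k, p * a ^ 2 + 2 * q * (a * b) + r * b ^ 2 ≠ 0 := by
  by_cases hp : p = 0
  · by_cases hr : r = 0
    · refine ⟨1, 1, ?_⟩
      have hq : q ≠ 0 := by simpa [hp, hr] using h
      simpa [hp, hr] using ⟨hk, hq⟩
    · exact ⟨0, 1, by simpa using hr⟩
  · exact ⟨1, 0, by simpa using hp⟩

/-- A nonzero binary quadratic form can be diagonalised with nonzero first diagonal entry. -/
theorem exists_diag (hk : (2 : k) ≠ 0) {p q r : k} (h : p ≠ 0 ∨ q ≠ 0 ∨ r ≠ 0) :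
    ∃ a b c d : k, a * d - b * c ≠ 0 ∧ p * a ^ 2 + 2 * q * (a * b) + r * b ^ 2 ≠ 0 ∧
      p * (a * c) + q * (a * d + b * c) + r * (b * d) = 0 := by
  obtain ⟨a, b, hab⟩ := exists_ne_zero_of_quadratic hk h
  refine ⟨a, b, -(q * a + r * b), p * a + q * b, ?_, hab, by ring⟩
  convert hab using 1
  ring

end QuadraticForm

section TwoGenerators

variable {k : Type*} [Field k] {L : Type*} [LieRing L] [LieAlgebra k L] [Module.Finite k L]
  (hn : ∃ m, lc k L m = ⊥) (hL : finrank k L = 6)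

include hn hL

theorem isModel_twoGenerators_of_relations (hk : (2 : k) ≠ 0) {x1 x2 x3 x4 x5 z : L} {p q r : k}
    (hX : ⊤ ≤ Submodule.span k {x1, x2} ⊔ lc k L 1) (h12 : ⁅x1, x2⁆ = x3) (h13 : ⁅x1, x3⁆ = x4)
    (h23 : ⁅x2, x3⁆ = x5) (h14 : ⁅x1, x4⁆ = p • z) (h15 : ⁅x1, x5⁆ = q • z)
    (h24 : ⁅x2, x4⁆ = q • z) (h25 : ⁅x2, x5⁆ = r • z) (h34 : ⁅x3, x4⁆ = 0)
    (h35 : ⁅x3, x5⁆ = 0) (h45 : ⁅x4, x5⁆ = 0)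
    (hz : ∀ x : L, ⁅x, z⁆ = 0) (hQ : p ≠ 0 ∨ q ≠ 0 ∨ r ≠ 0) : IsModel k L := by
  have hz' : ∀ x : L, ⁅z, x⁆ = 0 := fun x => by rw [← lie_skew, hz, neg_zero]
  obtain ⟨a, b, c, d, hD, hP, hc⟩ := exists_diag hk hQ
  obtain ⟨D, hD'⟩ : ∃ D, D = a * d - b * c := ⟨_, rfl⟩
  obtain ⟨P, hP'⟩ : ∃ P, P = p * a ^ 2 + 2 * q * (a * b) + r * b ^ 2 := ⟨_, rfl⟩
  rw [← hD'] at hD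
  rw [← hP'] at hP
  have main : ∀ (ε : k) (n : Fin 30), ε ≠ 0 →
      (p * c ^ 2 + 2 * q * (c * d) + r * d ^ 2 = 0 ∧ n = 20 ∨
      p * c ^ 2 + 2 * q * (c * d) + r * d ^ 2 = ε * P ∧ n = 27) → IsModel k L := by
    intro ε n hε hn'
    obtain ⟨y0, h0⟩ : ∃ y, y = a • x1 + b • x2 := ⟨_, rfl⟩
    obtain ⟨y1, h1⟩ : ∃ y, y = c • x1 + d • x2 := ⟨_, rfl⟩
    obtain ⟨y2, h2⟩ : ∃ y, y = D • x3 := ⟨_, rfl⟩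
    obtain ⟨y3, h3⟩ : ∃ y, y = D • (a • x4 + b • x5) := ⟨_, rfl⟩
    obtain ⟨y4, h4⟩ : ∃ y, y = D • (c • x4 + d • x5) := ⟨_, rfl⟩
    obtain ⟨y5, h5⟩ : ∃ y, y = (D * P) • z := ⟨_, rfl⟩
    refine isModel_of_relations hn hL hX hε n y0 y1 y2 y3 y4 y5 ?_ ?_
    · rintro x (rfl | rfl)
      · refine mem_span_range_sup (d / D) (-b / D) 0 0 0 0 ?_
        subst h0 h1
        match_scalars <;> field_simp <;> grind
      · refine mem_span_range_sup (-c / D) (a / D) 0 0 0 0 ?_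
        subst h0 h1
        match_scalars <;> field_simp <;> grind
    · rw [forall_lt_fin_six]
      rcases hn' with ⟨hR, rfl⟩ | ⟨hR, rfl⟩
      all_goals
        simp [tableValue, table]
        subst h0 h1 h2 h3 h4 h5
        simp only [lie_add, add_lie, lie_smul, smul_lie, h12, h13, h14, h15, h23, h24, h25, h34,
          h35, h45, lie_rev h12, lie_rev h45, hz, lie_self, smul_zero, add_zero]
        and_intros
        all_goals first | trivial | (match_scalars <;> first | (field_simp; done) | grind)
  by_cases hR : p * c ^ 2 + 2 * q * (c * d) + r * d ^ 2 = 0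
  · exact main 1 20 one_ne_zero (.inl ⟨hR, rfl⟩)
  · exact main _ 27 (div_ne_zero hR hP) (.inr ⟨(div_mul_cancel₀ _ hP).symm, rfl⟩)

theorem isModel_twoGenerators (hk : (2 : k) ≠ 0) (h1 : finrank k (lc k L 1) = 4)
    (h3 : finrank k (lc k L 3) = 1) (h4 : lc k L 4 = ⊥) : IsModel k L := by
  obtain ⟨x1, -, x2, -, hX⟩ := exists_pair (le_top : lc k L 1 ≤ ⊤) (by rw [finrank_top]; omega)
  obtain ⟨x3, h12⟩ : ∃ x3, ⁅x1, x2⁆ = x3 := ⟨_, rfl⟩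
  obtain ⟨x4, h13⟩ : ∃ x4, ⁅x1, x3⁆ = x4 := ⟨_, rfl⟩
  obtain ⟨x5, h23⟩ : ∃ x5, ⁅x2, x3⁆ = x5 := ⟨_, rfl⟩
  have m3 : x3 ∈ lc k L 1 := h12 ▸ lie_mem_lc_succ x1 trivial
  have m4 : x4 ∈ lc k L 2 := h13 ▸ lie_mem_lc_succ x1 m3
  have m5 : x5 ∈ lc k L 2 := h23 ▸ lie_mem_lc_succ x2 m3
  have hb : ∀ x : L, x ∈ lc k L 4 → x = 0 := fun x hx => by simpa [h4] using hx
  have s1 := lc_one_le_of_pair hX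
  rw [h12] at s1
  have s2 := lc_succ_le_of_pair hX s1
  rw [h13, h23] at s2
  obtain ⟨z, mz, hz⟩ := exists_singleton (bot_le : ⊥ ≤ lc k L 3) (by simp [h3])
  rw [sup_bot_eq] at hz
  obtain ⟨p, h14⟩ := Submodule.mem_span_singleton.1 (hz (lie_mem_lc_succ x1 m4))
  obtain ⟨q, h15⟩ := Submodule.mem_span_singleton.1 (hz (lie_mem_lc_succ x1 m5))
  obtain ⟨r, h25⟩ := Submodule.mem_span_singleton.1 (hz (lie_mem_lc_succ x2 m5))
  have h24 : ⁅x2, x4⁆ = q • z := by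
    rw [← h13, leibniz_lie, ← lie_skew x2 x1, h12, neg_lie, lie_self, neg_zero, zero_add, h23, h15]
  refine isModel_twoGenerators_of_relations hn hL hk hX h12 h13 h23 h14.symm h15.symm h24 h25.symm
    (hb _ (lie_mem_lc_le (i := 1) (j := 2) (by norm_num) m3 m4))
    (hb _ (lie_mem_lc_le (i := 1) (j := 2) (by norm_num) m3 m5))
    (hb _ (lie_mem_lc_le (i := 2) (j := 2) (by norm_num) m4 m5))
    (fun x => hb _ (lie_mem_lc_succ x mz)) ?_
  by_contra! h0
  obtain ⟨rfl, rfl, rfl⟩ := h0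
  have : lc k L 3 ≤ ⊥ := by
    refine lc_succ_le_of_generators hX s2 ?_ h4.le
    rintro x (rfl | rfl) v (rfl | rfl)
    · simp [← h14]
    · simp [← h15]
    · simp [h24]
    · simp [← h25]
  rw [le_bot_iff.1 this, finrank_bot] at h3
  exact zero_ne_one h3

end TwoGenerators

section ThreeGenerators

variable {k : Type*} [Field k] {L : Type*} [LieRing L] [LieAlgebra k L]

theorem lc_one_le_of_triple {x1 x2 x3 : L} {S : Submodule k L}
    (hX : ⊤ ≤ Submodule.span k {x1, x2, x3} ⊔ lc k L 1) (h12 : ⁅x1, x2⁆ ∈ S) (h13 : ⁅x1, x3⁆ ∈ S)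
    (h23 : ⁅x2, x3⁆ ∈ S) (hS : lc k L 2 ≤ S) : lc k L 1 ≤ S := by
  have h21 : ⁅x2, x1⁆ ∈ S := by rw [← lie_skew]; exact neg_mem h12
  have h31 : ⁅x3, x1⁆ ∈ S := by rw [← lie_skew]; exact neg_mem h13
  have h32 : ⁅x3, x2⁆ ∈ S := by rw [← lie_skew]; exact neg_mem h23
  refine lc_succ_le_of_generators hX hX ?_ hS
  rintro x (rfl | rfl | rfl) y (rfl | rfl | rfl) <;>
    first | assumption | (rw [lie_self]; exact S.zero_mem)

variable [Module.Finite k L]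

theorem exists_span_eq_lie_mem_of_triple {A B : Submodule k L} (hBA : B ≤ A)
    (h : finrank k A < finrank k B + 3) {x1 x2 x3 : L} (h12 : ⁅x1, x2⁆ ∈ A) (h31 : ⁅x3, x1⁆ ∈ A)
    (h23 : ⁅x2, x3⁆ ∈ A) :
    ∃ y1 y2 y3 : L, Submodule.span k {x1, x2, x3} ≤ Submodule.span k {y1, y2, y3} ∧
      ⁅y2, y3⁆ ∈ B := by
  have main : ∀ (x1 x2 x3 : L) (a b c : k), a ≠ 0 → a • ⁅x2, x3⁆ + b • ⁅x3, x1⁆ + c • ⁅x1, x2⁆ ∈ B →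
      ∃ y1 y2 y3 : L, Submodule.span k {x1, x2, x3} ≤ Submodule.span k {y1, y2, y3} ∧
        ⁅y2, y3⁆ ∈ B := by
    intro x1 x2 x3 a b c ha hB
    refine ⟨x1, x2 - (b / a) • x1, x3 - (c / a) • x1, Submodule.span_le.2 ?_, ?_⟩
    · rintro x (rfl | rfl | rfl)
      · exact Submodule.subset_span (by simp)
      · exact Submodule.mem_span_triple.2 ⟨b / a, 1, 0, by module⟩
      · exact Submodule.mem_span_triple.2 ⟨c / a, 0, 1, by module⟩
    · refine (Submodule.smul_mem_iff _ ha).1 ?_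
      convert hB using 1
      simp only [sub_lie, lie_sub, smul_lie, lie_smul, lie_self, ← lie_skew x2 x1,
        ← lie_skew x3 x1]
      match_scalars <;> field_simp
  obtain ⟨c, hc, hcB⟩ := exists_relation 3 hBA h ![⁅x2, x3⁆, ⁅x3, x1⁆, ⁅x1, x2⁆]
    (fun i => by fin_cases i <;> assumption)
  simp [Fin.sum_univ_three] at hcB
  by_cases h0 : c 0 = 0
  · by_cases h1 : c 1 = 0
    · have h2 : c 2 ≠ 0 := fun h2 => hc (by ext i; fin_cases i <;> simp [h0, h1, h2])
      rw [show ({x1, x2, x3} : Set L) = {x3, x1, x2} by ext; simp; tauto]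
      exact main x3 x1 x2 _ _ _ h2 (by convert hcB using 1; abel)
    · rw [show ({x1, x2, x3} : Set L) = {x2, x3, x1} by ext; simp; tauto]
      exact main x2 x3 x1 _ _ _ h1 (by convert hcB using 1; abel)
  · exact main x1 x2 x3 _ _ _ h0 hcB

variable (hn : ∃ m, lc k L m = ⊥) (hL : finrank k L = 6)

include hn hL

theorem isModel_freeTwoStep (h1 : finrank k (lc k L 1) = 3) (h2 : lc k L 2 = ⊥) :
    IsModel k L := by
  obtain ⟨x1, -, x2, -, x3, -, hX⟩ := exists_triple (le_top : lc k L 1 ≤ ⊤)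
    (by rw [finrank_top]; omega)
  have hb : ∀ x y : L, y ∈ lc k L 1 → ⁅x, y⁆ = 0 := fun x y hy => by
    have := lie_mem_lc_succ x hy
    simpa [h2] using this
  have h0 : ∀ x y z : L, ⁅x, ⁅y, z⁆⁆ = 0 := fun x y z => hb x _ (lie_mem_lc_succ y trivial)
  refine isModel_of_relations hn hL hX one_ne_zero 8 x1 x2 x3 ⁅x1, x2⁆ ⁅x1, x3⁆ ⁅x2, x3⁆ ?_ ?_
  · rintro x (rfl | rfl | rfl)
    · exact mem_span_range_sup 1 0 0 0 0 0 (by module)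
    · exact mem_span_range_sup 0 1 0 0 0 0 (by module)
    · exact mem_span_range_sup 0 0 1 0 0 0 (by module)
  · rw [forall_lt_fin_six]
    simp [tableValue, table, h0]

theorem isModel_threeGenerators_of_diag {x1 x2 x3 x4 x5 z : L} {s l2 l3 P R : k}
    (hX : ⊤ ≤ Submodule.span k {x1, x2, x3} ⊔ lc k L 1) (h12 : ⁅x1, x2⁆ = x4)
    (h13 : ⁅x1, x3⁆ = x5) (h23 : ⁅x2, x3⁆ = s • z) (h14 : ⁅x1, x4⁆ = l2 • z)
    (h15 : ⁅x1, x5⁆ = l3 • z) (h24 : ⁅x2, x4⁆ = P • z) (h25 : ⁅x2, x5⁆ = 0) (h34 : ⁅x3, x4⁆ = 0)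
    (h35 : ⁅x3, x5⁆ = R • z) (h45 : ⁅x4, x5⁆ = 0) (hz : ∀ x : L, ⁅x, z⁆ = 0) (hP : P ≠ 0) :
    IsModel k L := by
  have hz' : ∀ x : L, ⁅z, x⁆ = 0 := fun x => by rw [← lie_skew, hz, neg_zero]
  obtain ⟨α, hα⟩ : ∃ α, α = -l2 / P := ⟨_, rfl⟩
  obtain ⟨t, ht⟩ : ∃ t, t = -s / P := ⟨_, rfl⟩
  have hαP : α * P = -l2 := by rw [hα]; field_simp
  have htP : t * P = -s := by rw [ht]; field_simp
  have main : ∀ (ε μ β : k) (n : Fin 30), ε ≠ 0 → μ ≠ 0 → (R = 0 ∧ l3 = 0 ∧ n = 9 ∨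
      R = 0 ∧ μ * l3 = P ∧ n = 10 ∨ R = ε * P ∧ μ = 1 ∧ l3 + β * R = 0 ∧ n = 26) →
      IsModel k L := by
    intro ε μ β n hε hμ hn'
    obtain ⟨y0, h0⟩ : ∃ y, y = x1 + α • x2 + β • x3 := ⟨_, rfl⟩
    obtain ⟨y2, h2⟩ : ∃ y, y = μ • (x3 + t • x4) := ⟨_, rfl⟩
    obtain ⟨y3, h3⟩ : ∃ y, y = x4 - (β * s) • z := ⟨_, rfl⟩
    obtain ⟨y4, h4⟩ : ∃ y, y = μ • (x5 + (α * s) • z) := ⟨_, rfl⟩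
    obtain ⟨y5, h5⟩ : ∃ y, y = P • z := ⟨_, rfl⟩
    refine isModel_of_relations hn hL hX hε n y0 x2 y2 y3 y4 y5 ?_ ?_
    · rintro x (rfl | rfl | rfl)
      · refine mem_span_range_sup 1 (-α) (-β / μ) (β * t) 0 (β * t * β * s / P) ?_
        subst h0 h2 h3 h5
        match_scalars <;> field_simp <;> ring
      · exact mem_span_range_sup 0 1 0 0 0 0 (by module)
      · refine mem_span_range_sup 0 0 μ⁻¹ (-t) 0 (-t * β * s / P) ?_
        subst h2 h3 h5
        match_scalars <;> field_simp <;> ring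
    · rw [forall_lt_fin_six]
      rcases hn' with ⟨hR, hl, rfl⟩ | ⟨hR, hl, rfl⟩ | ⟨hR, hl, hβ, rfl⟩
      all_goals
        simp [tableValue, table]
        subst h0 h2 h3 h4 h5
        simp only [lie_add, add_lie, lie_sub, sub_lie, lie_smul, smul_lie, h12, h13, h14, h15, h23,
          h24, h25, h34, h35, h45, lie_rev h23, hz, hz', lie_self, smul_zero, add_zero]
        and_intros
        all_goals first | trivial | (match_scalars <;> first | (field_simp; done) | grind)
  by_cases hR : R = 0
  · by_cases hl : l3 = 0
    · exact main 1 1 0 9 one_ne_zero one_ne_zero (.inl ⟨hR, hl, rfl⟩)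
    · exact main 1 (P / l3) 0 10 one_ne_zero (div_ne_zero hP hl)
        (.inr (.inl ⟨hR, div_mul_cancel₀ _ hl, rfl⟩))
  · exact main (R / P) 1 (-l3 / R) 26 (div_ne_zero hR hP) one_ne_zero
      (.inr (.inr ⟨(div_mul_cancel₀ _ hP).symm, rfl, by field_simp; ring, rfl⟩))

theorem isModel_threeGenerators_of_abelian {x1 x2 x3 x4 x5 z : L} {s l2 l3 : k}
    (hX : ⊤ ≤ Submodule.span k {x1, x2, x3} ⊔ lc k L 1) (h12 : ⁅x1, x2⁆ = x4)
    (h13 : ⁅x1, x3⁆ = x5) (h23 : ⁅x2, x3⁆ = s • z) (h14 : ⁅x1, x4⁆ = l2 • z)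
    (h15 : ⁅x1, x5⁆ = l3 • z) (h24 : ⁅x2, x4⁆ = 0) (h25 : ⁅x2, x5⁆ = 0) (h34 : ⁅x3, x4⁆ = 0)
    (h35 : ⁅x3, x5⁆ = 0) (h45 : ⁅x4, x5⁆ = 0) (hz : ∀ x : L, ⁅x, z⁆ = 0) (hl2 : l2 ≠ 0) :
    IsModel k L := by
  have hz' : ∀ x : L, ⁅z, x⁆ = 0 := fun x => by rw [← lie_skew, hz, neg_zero]
  have main : ∀ (μ : k) (n : Fin 30), μ ≠ 0 → (s = 0 ∧ n = 12 ∨ μ * s = l2 ∧ n = 11) →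
      IsModel k L := by
    intro μ n hμ hn'
    obtain ⟨y2, h2⟩ : ∃ y, y = μ • (x3 - (l3 / l2) • x2) := ⟨_, rfl⟩
    obtain ⟨y4, h4⟩ : ∃ y, y = μ • (x5 - (l3 / l2) • x4) := ⟨_, rfl⟩
    obtain ⟨y5, h5⟩ : ∃ y, y = l2 • z := ⟨_, rfl⟩
    refine isModel_of_relations hn hL hX one_ne_zero n x1 x2 y2 x4 y4 y5 ?_ ?_
    · rintro x (rfl | rfl | rfl)
      · exact mem_span_range_sup 1 0 0 0 0 0 (by module)
      · exact mem_span_range_sup 0 1 0 0 0 0 (by module)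
      · refine mem_span_range_sup 0 (l3 / l2) μ⁻¹ 0 0 0 ?_
        subst h2
        match_scalars <;> field_simp
        ring
    · rw [forall_lt_fin_six]
      rcases hn' with ⟨hs, rfl⟩ | ⟨hs, rfl⟩
      all_goals
        simp [tableValue, table]
        subst h2 h4 h5
        simp only [lie_sub, sub_lie, lie_smul, smul_lie, h12, h13, h14, h15, h23,
          h24, h25, h34, h35, h45, hz, lie_self, smul_zero]
        and_intros
        all_goals first | trivial | (match_scalars <;> first | (field_simp; ring1) | grind)
  by_cases hs : s = 0
  · exact main 1 12 one_ne_zero (.inl ⟨hs, rfl⟩)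
  · exact main (l2 / s) 11 (div_ne_zero hl2 hs) (.inr ⟨div_mul_cancel₀ _ hs, rfl⟩)

theorem isModel_threeGenerators (hk : (2 : k) ≠ 0) (h1 : finrank k (lc k L 1) = 3)
    (h2 : finrank k (lc k L 2) = 1) (h3 : lc k L 3 = ⊥) : IsModel k L := by
  obtain ⟨w1, -, w2, -, w3, -, hW⟩ := exists_triple (le_top : lc k L 1 ≤ ⊤)
    (by rw [finrank_top]; omega)
  obtain ⟨x1, x2, x3, hspan, m23⟩ := exists_span_eq_lie_mem_of_triple
    (lc_antitone one_le_two : lc k L 2 ≤ lc k L 1) (by omega) (lie_mem_lc_succ w1 (y := w2) trivial)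
    (lie_mem_lc_succ w3 (y := w1) trivial) (lie_mem_lc_succ w2 (y := w3) trivial)
  have hX := hW.trans (sup_le_sup_right hspan _)
  obtain ⟨x4, h12⟩ : ∃ x4, ⁅x1, x2⁆ = x4 := ⟨_, rfl⟩
  obtain ⟨x5, h13⟩ : ∃ x5, ⁅x1, x3⁆ = x5 := ⟨_, rfl⟩
  have m4 : x4 ∈ lc k L 1 := h12 ▸ lie_mem_lc_succ x1 trivial
  have m5 : x5 ∈ lc k L 1 := h13 ▸ lie_mem_lc_succ x1 trivial
  have hb : ∀ x : L, x ∈ lc k L 3 → x = 0 := fun x hx => by simpa [h3] using hx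
  obtain ⟨z, mz, hz⟩ := exists_singleton (bot_le : ⊥ ≤ lc k L 2) (by simp [h2])
  rw [sup_bot_eq] at hz
  have hz0 : ∀ x : L, ⁅x, z⁆ = 0 := fun x => hb _ (lie_mem_lc_succ x mz)
  have hz0' : ∀ x : L, ⁅z, x⁆ = 0 := fun x => by rw [← lie_skew, hz0, neg_zero]
  obtain ⟨s, h23⟩ := Submodule.mem_span_singleton.1 (hz m23)
  obtain ⟨l2, h14⟩ := Submodule.mem_span_singleton.1 (hz (lie_mem_lc_succ x1 m4))
  obtain ⟨l3, h15⟩ := Submodule.mem_span_singleton.1 (hz (lie_mem_lc_succ x1 m5))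
  obtain ⟨p, h24⟩ := Submodule.mem_span_singleton.1 (hz (lie_mem_lc_succ x2 m4))
  obtain ⟨q, h25⟩ := Submodule.mem_span_singleton.1 (hz (lie_mem_lc_succ x2 m5))
  obtain ⟨r, h35⟩ := Submodule.mem_span_singleton.1 (hz (lie_mem_lc_succ x3 m5))
  have h34 : ⁅x3, x4⁆ = q • z := by
    rw [← h12, leibniz_lie, ← lie_skew x3 x1, h13, ← lie_skew x3 x2, ← h23, neg_lie, lie_neg,
      lie_smul, hz0, ← lie_skew x5 x2, ← h25]
    simp
  have h45 : ⁅x4, x5⁆ = 0 := hb _ (lie_mem_lc_le (i := 1) (j := 1) le_rfl m4 m5)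
  by_cases hQ : p ≠ 0 ∨ q ≠ 0 ∨ r ≠ 0
  · obtain ⟨a, b, c, d, hD, hP, hc⟩ := exists_diag hk hQ
    have hX' : ⊤ ≤ Submodule.span k {x1, a • x2 + b • x3, c • x2 + d • x3} ⊔ lc k L 1 := by
      refine hX.trans (sup_le_sup_right (Submodule.span_le.2 ?_) _)
      rintro x (rfl | rfl | rfl)
      · exact Submodule.subset_span (by simp)
      · refine Submodule.mem_span_triple.2 ⟨0, d / (a * d - b * c), -b / (a * d - b * c), ?_⟩
        match_scalars <;> grind
      · refine Submodule.mem_span_triple.2 ⟨0, -c / (a * d - b * c), a / (a * d - b * c), ?_⟩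
        match_scalars <;> grind
    refine isModel_threeGenerators_of_diag hn hL hX' rfl rfl (z := z) (s := (a * d - b * c) * s)
      (l2 := a * l2 + b * l3) (l3 := c * l2 + d * l3)
      (P := p * a ^ 2 + 2 * q * (a * b) + r * b ^ 2)
      (R := p * c ^ 2 + 2 * q * (c * d) + r * d ^ 2) ?_ ?_ ?_ ?_ ?_ ?_ ?_ ?_ hz0 hP
    all_goals
      simp only [lie_add, add_lie, lie_smul, smul_lie, h12, h13, ← h14, ← h15, ← h23, ← h24, ← h25,
        h34, ← h35, h45, lie_rev h23.symm, lie_rev h45, lie_self, smul_zero, add_zero]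
      match_scalars <;> grind
  · push Not at hQ
    obtain ⟨rfl, rfl, rfl⟩ := hQ
    rw [zero_smul] at h24 h25 h34 h35
    by_cases hl2 : l2 = 0
    · have hX' : ⊤ ≤ Submodule.span k {x1, x3, x2} ⊔ lc k L 1 := by
        rwa [show ({x1, x3, x2} : Set L) = {x1, x2, x3} by ext; simp; tauto]
      refine isModel_threeGenerators_of_abelian hn hL hX' h13 h12 (s := -s) (z := z) ?_ h15.symm
        h14.symm h35.symm h34 h25.symm h24.symm (by rw [← lie_skew, h45, neg_zero]) hz0 ?_
      · rw [← lie_skew, ← h23, neg_smul]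
      · rintro rfl
        have s1 : lc k L 1 ≤ Submodule.span k {x4, x5} ⊔ lc k L 2 := by
          refine lc_one_le_of_triple hX ?_ ?_ (Submodule.mem_sup_right m23) le_sup_right
          · exact Submodule.mem_sup_left (Submodule.subset_span (by simp [h12]))
          · exact Submodule.mem_sup_left (Submodule.subset_span (by simp [h13]))
        have : lc k L 2 ≤ ⊥ := by
          refine lc_succ_le_of_generators hX s1 ?_ h3.le
          rintro x (rfl | rfl | rfl) v (rfl | rfl)
          · simp [← h14, hl2]
          · simp [← h15]
          · simp [← h24]
          · simp [← h25]
          · simp [h34]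
          · simp [← h35]
        rw [le_bot_iff.1 this, finrank_bot] at h2
        exact zero_ne_one h2
    · exact isModel_threeGenerators_of_abelian hn hL hX h12 h13 h23.symm h14.symm h15.symm h24.symm
        h25.symm h34 h35.symm h45 hz0 hl2

end ThreeGenerators

section ThreeGeneratorsTwo

variable {k : Type*} [Field k] {L : Type*} [LieRing L] [LieAlgebra k L] [Module.Finite k L]

theorem exists_triple_lie_mem {A B : Submodule k L} (hBA : B ≤ A)
    (h : finrank k A ≤ finrank k B + 1) {x1 x2 x3 : L} (h12 : ⁅x1, x2⁆ ∈ A) (h31 : ⁅x3, x1⁆ ∈ A)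
    (h23 : ⁅x2, x3⁆ ∈ A) :
    ∃ y1 y2 y3 : L, Submodule.span k {x1, x2, x3} ≤ Submodule.span k {y1, y2, y3} ∧
      ⁅y1, y3⁆ ∈ B ∧ ⁅y2, y3⁆ ∈ B := by
  obtain ⟨v, -, hA⟩ := exists_singleton hBA h
  obtain ⟨a, p, hp, h12⟩ := mem_span_singleton_sup.1 (hA h12)
  obtain ⟨b, q, hq, h31⟩ := mem_span_singleton_sup.1 (hA h31)
  obtain ⟨c, r, hr, h23⟩ := mem_span_singleton_sup.1 (hA h23)
  have main : ∀ (x1 x2 x3 p q r : L) (a b c : k), p ∈ B → q ∈ B → r ∈ B →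
      ⁅x1, x2⁆ = a • v + p → ⁅x3, x1⁆ = b • v + q → ⁅x2, x3⁆ = c • v + r → a ≠ 0 →
      ∃ y1 y2 y3 : L, Submodule.span k {x1, x2, x3} ≤ Submodule.span k {y1, y2, y3} ∧
        ⁅y1, y3⁆ ∈ B ∧ ⁅y2, y3⁆ ∈ B := by
    intro x1 x2 x3 p q r a b c hp hq hr h12 h31 h23 ha
    refine ⟨x1, x2, c • x1 + b • x2 + a • x3, Submodule.span_le.2 ?_, ?_, ?_⟩
    · rintro x (rfl | rfl | rfl)
      · exact Submodule.subset_span (by simp)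
      · exact Submodule.subset_span (by simp)
      · refine Submodule.mem_span_triple.2 ⟨-c / a, -b / a, 1 / a, ?_⟩
        match_scalars <;> field_simp <;> ring
    · rw [show ⁅x1, c • x1 + b • x2 + a • x3⁆ = b • p - a • q by
        simp only [lie_add, lie_smul, lie_self, h12, lie_rev h31]
        module]
      exact sub_mem (B.smul_mem _ hp) (B.smul_mem _ hq)
    · rw [show ⁅x2, c • x1 + b • x2 + a • x3⁆ = a • r - c • p by
        simp only [lie_add, lie_smul, lie_self, h23, lie_rev h12]
        module]
      exact sub_mem (B.smul_mem _ hr) (B.smul_mem _ hp)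
  by_cases ha : a = 0
  · by_cases hb : b = 0
    · by_cases hc : c = 0
      · refine ⟨x1, x2, x3, le_rfl, ?_, ?_⟩
        · rw [lie_rev h31]
          simpa [hb] using hq
        · rw [h23]
          simpa [hc] using hr
      · rw [show ({x1, x2, x3} : Set L) = {x2, x3, x1} by ext; simp; tauto]
        exact main _ _ _ _ _ _ _ _ _ hr hp hq h23 h12 h31 hc
    · rw [show ({x1, x2, x3} : Set L) = {x3, x1, x2} by ext; simp; tauto]
      exact main _ _ _ _ _ _ _ _ _ hq hr hp h31 h23 h12 hb
  · exact main _ _ _ _ _ _ _ _ _ hp hq hr h12 h31 h23 ha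

variable (hn : ∃ m, lc k L m = ⊥) (hL : finrank k L = 6)

include hn hL

theorem isModel_threeGenerators_step_three_of_trace {x1 x2 x3 x4 x5 x6 : L} {m b c : k}
    (hk : (2 : k) ≠ 0) (hX : ⊤ ≤ Submodule.span k {x1, x2, x4} ⊔ lc k L 1) (h12 : ⁅x1, x2⁆ = x3)
    (h13 : ⁅x1, x3⁆ = x5) (h23 : ⁅x2, x3⁆ = x6) (h14 : ⁅x1, x4⁆ = m • x5 + b • x6)
    (h24 : ⁅x2, x4⁆ = c • x5 - m • x6) (h34 : ⁅x3, x4⁆ = 0) (h5 : ∀ x : L, ⁅x, x5⁆ = 0)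
    (h6 : ∀ x : L, ⁅x, x6⁆ = 0) : IsModel k L := by
  have h5' : ∀ x : L, ⁅x5, x⁆ = 0 := fun x => by rw [← lie_skew, h5, neg_zero]
  have h6' : ∀ x : L, ⁅x6, x⁆ = 0 := fun x => by rw [← lie_skew, h6, neg_zero]
  by_cases hM : c ≠ 0 ∨ m ≠ 0 ∨ -b ≠ 0
  · obtain ⟨β, α, hΔ⟩ := exists_ne_zero_of_quadratic hk hM
    obtain ⟨Δ, hΔe⟩ : ∃ Δ, Δ = c * β ^ 2 + 2 * m * (β * α) + -b * α ^ 2 := ⟨_, rfl⟩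
    rw [← hΔe] at hΔ
    have main : ∀ (ε : k) (n : Fin 30), ε ≠ 0 → (m ^ 2 + b * c = ε ∧ n = 29 ∨
        m ^ 2 + b * c = 0 ∧ n = 14) → IsModel k L := by
      intro ε n hε hn'
      obtain ⟨y0, e0⟩ : ∃ y, y = (α * m + β * c) • x1 + (α * b - β * m) • x2 := ⟨_, rfl⟩
      obtain ⟨y1, e1⟩ : ∃ y, y = α • x1 + β • x2 := ⟨_, rfl⟩
      obtain ⟨y2, e2⟩ : ∃ y, y = Δ • x3 := ⟨_, rfl⟩
      obtain ⟨y3, e3⟩ : ∃ y, y = Δ • x4 := ⟨_, rfl⟩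
      obtain ⟨y4, e4⟩ : ∃ y, y = (Δ * (α * m + β * c)) • x5 + (Δ * (α * b - β * m)) • x6 :=
        ⟨_, rfl⟩
      obtain ⟨y5, e5⟩ : ∃ y, y = (Δ * α) • x5 + (Δ * β) • x6 := ⟨_, rfl⟩
      refine isModel_of_relations hn hL hX hε n y0 y1 y2 y3 y4 y5 ?_ ?_
      · rintro x (rfl | rfl | rfl)
        · refine mem_span_range_sup (β / Δ) (-(α * b - β * m) / Δ) 0 0 0 0 ?_
          subst e0 e1
          match_scalars <;> field_simp <;> grind
        · refine mem_span_range_sup (-α / Δ) ((α * m + β * c) / Δ) 0 0 0 0 ?_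
          subst e0 e1
          match_scalars <;> field_simp <;> grind
        · refine mem_span_range_sup 0 0 0 Δ⁻¹ 0 0 ?_
          rw [e3, inv_smul_smul₀ hΔ]
          module
      · rw [forall_lt_fin_six]
        rcases hn' with ⟨hδ, rfl⟩ | ⟨hδ, rfl⟩
        all_goals
          simp [tableValue, table]
          subst e0 e1 e2 e3 e4 e5
          simp only [lie_add, add_lie, lie_smul, smul_lie, h12, h13, h14, h23,
            h24, h34, lie_rev h12, h5, h6, lie_self, smul_zero, add_zero]
          and_intros
          all_goals first | trivial | (match_scalars <;> grind)
    by_cases hδ : m ^ 2 + b * c = 0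
    · exact main 1 14 one_ne_zero (.inr ⟨hδ, rfl⟩)
    · exact main _ 29 hδ (.inl ⟨rfl, rfl⟩)
  · push Not at hM
    obtain ⟨rfl, rfl, hb⟩ := hM
    obtain rfl : b = 0 := neg_eq_zero.1 hb
    refine isModel_of_relations hn hL hX one_ne_zero 13 x1 x2 x3 x4 x5 x6 ?_ ?_
    · rintro x (rfl | rfl | rfl)
      · exact mem_span_range_sup 1 0 0 0 0 0 (by module)
      · exact mem_span_range_sup 0 1 0 0 0 0 (by module)
      · exact mem_span_range_sup 0 0 0 1 0 0 (by module)
    · rw [forall_lt_fin_six]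
      simp [tableValue, table, h12, h13, h14, h23, h24, h34, h5, h6]

theorem isModel_threeGenerators_step_three (hk : (2 : k) ≠ 0) (h1 : finrank k (lc k L 1) = 3)
    (h2 : finrank k (lc k L 2) = 2) (h3 : lc k L 3 = ⊥) : IsModel k L := by
  obtain ⟨w1, -, w2, -, w3, -, hW⟩ := exists_triple (le_top : lc k L 1 ≤ ⊤)
    (by rw [finrank_top]; omega)
  obtain ⟨x1, x2, x4, hspan, m14, m24⟩ := exists_triple_lie_mem
    (lc_antitone one_le_two : lc k L 2 ≤ lc k L 1) (by omega) (lie_mem_lc_succ w1 (y := w2) trivial)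
    (lie_mem_lc_succ w3 (y := w1) trivial) (lie_mem_lc_succ w2 (y := w3) trivial)
  have hX := hW.trans (sup_le_sup_right hspan _)
  have hb : ∀ x : L, x ∈ lc k L 3 → x = 0 := fun x hx => by simpa [h3] using hx
  have hc : ∀ x y : L, y ∈ lc k L 2 → ⁅x, y⁆ = 0 := fun x y hy => hb _ (lie_mem_lc_succ x hy)
  obtain ⟨x3, h12⟩ : ∃ x3, ⁅x1, x2⁆ = x3 := ⟨_, rfl⟩
  obtain ⟨x5, h13⟩ : ∃ x5, ⁅x1, x3⁆ = x5 := ⟨_, rfl⟩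
  obtain ⟨x6, h23⟩ : ∃ x6, ⁅x2, x3⁆ = x6 := ⟨_, rfl⟩
  have m3 : x3 ∈ lc k L 1 := h12 ▸ lie_mem_lc_succ x1 trivial
  have h34 : ⁅x3, x4⁆ = 0 := by
    rw [← h12, lie_lie, hc _ _ m14, hc _ _ m24, sub_zero]
  have s1 : lc k L 1 ≤ Submodule.span k {x3} ⊔ lc k L 2 := by
    refine lc_one_le_of_triple hX ?_ ?_ ?_ le_sup_right
    · exact h12 ▸ Submodule.mem_sup_left (Submodule.mem_span_singleton_self _)
    · exact Submodule.mem_sup_right m14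
    · exact Submodule.mem_sup_right m24
  have s2 : lc k L 2 ≤ Submodule.span k {x5, x6} := by
    refine lc_succ_le_of_generators hX s1 ?_ (by simp [h3])
    rintro x (rfl | rfl | rfl) v rfl
    · exact Submodule.subset_span (by simp [h13])
    · exact Submodule.subset_span (by simp [h23])
    · rw [← lie_skew, h34, neg_zero]
      exact zero_mem _
  obtain ⟨a, b, h14⟩ := Submodule.mem_span_pair.1 (s2 m14)
  obtain ⟨c, d, h24⟩ := Submodule.mem_span_pair.1 (s2 m24)
  have hX' : ⊤ ≤ Submodule.span k {x1, x2, x4 - ((a + d) / 2) • x3} ⊔ lc k L 1 := by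
    refine hX.trans (sup_le (Submodule.span_le.2 ?_) le_sup_right)
    rintro x (rfl | rfl | rfl)
    · exact Submodule.mem_sup_left (Submodule.subset_span (by simp))
    · exact Submodule.mem_sup_left (Submodule.subset_span (by simp))
    · rw [← sub_add_cancel x (((a + d) / 2) • x3)]
      exact add_mem (Submodule.mem_sup_left (Submodule.subset_span (by simp)))
        (Submodule.mem_sup_right (Submodule.smul_mem _ _ m3))
  refine isModel_threeGenerators_step_three_of_trace hn hL hk hX' h12 h13 h23
    (m := (a - d) / 2) (b := b) (c := c) ?_ ?_ ?_ (fun x => hc x _ (h13 ▸ lie_mem_lc_succ x1 m3))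
    (fun x => hc x _ (h23 ▸ lie_mem_lc_succ x2 m3))
  · rw [lie_sub, lie_smul, h13, ← h14]
    match_scalars <;> grind
  · rw [lie_sub, lie_smul, h23, ← h24]
    match_scalars <;> grind
  · rw [lie_sub, lie_smul, h34, lie_self, smul_zero, sub_zero]

theorem isModel_threeGenerators_step_four_of_relations {x1 x2 x3 x4 x5 x6 : L} {b c e : k}
    (hk : (2 : k) ≠ 0) (hX : ⊤ ≤ Submodule.span k {x1, x2, x4} ⊔ lc k L 1) (h12 : ⁅x1, x2⁆ = x3)
    (h13 : ⁅x1, x3⁆ = x5) (h14 : ⁅x1, x4⁆ = 0) (h15 : ⁅x1, x5⁆ = x6) (h23 : ⁅x2, x3⁆ = c • x6)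
    (h24 : ⁅x2, x4⁆ = b • x5 + e • x6) (h25 : ⁅x2, x5⁆ = 0) (h34 : ⁅x3, x4⁆ = b • x6)
    (h35 : ⁅x3, x5⁆ = 0) (h45 : ⁅x4, x5⁆ = 0) (h6 : ∀ x : L, ⁅x, x6⁆ = 0) : IsModel k L := by
  have h6' : ∀ x : L, ⁅x6, x⁆ = 0 := fun x => by rw [← lie_skew, h6, neg_zero]
  by_cases hb : b = 0
  · subst hb
    have main : ∀ (s t : k) (n : Fin 30), s ≠ 0 → t ≠ 0 →
        (c = 0 ∧ e = 0 ∧ n = 15 ∨ t * c = 1 ∧ e = 0 ∧ n = 16 ∨ c = 0 ∧ s * e = 1 ∧ n = 17 ∨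
          t * c = 1 ∧ s * e = 1 ∧ n = 18) → IsModel k L := by
      intro s t n hs ht hn'
      obtain ⟨y1, e1⟩ : ∃ y, y = t • x2 := ⟨_, rfl⟩
      obtain ⟨y2, e2⟩ : ∃ y, y = t • x3 := ⟨_, rfl⟩
      obtain ⟨y3, e3⟩ : ∃ y, y = s • x4 := ⟨_, rfl⟩
      obtain ⟨y4, e4⟩ : ∃ y, y = t • x5 := ⟨_, rfl⟩
      obtain ⟨y5, e5⟩ : ∃ y, y = t • x6 := ⟨_, rfl⟩
      refine isModel_of_relations hn hL hX one_ne_zero n x1 y1 y2 y3 y4 y5 ?_ ?_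
      · rintro x (rfl | rfl | rfl)
        · exact mem_span_range_sup 1 0 0 0 0 0 (by module)
        · refine mem_span_range_sup 0 t⁻¹ 0 0 0 0 ?_
          rw [e1, inv_smul_smul₀ ht]
          module
        · refine mem_span_range_sup 0 0 0 s⁻¹ 0 0 ?_
          rw [e3, inv_smul_smul₀ hs]
          module
      · rw [forall_lt_fin_six]
        rcases hn' with ⟨hc, he, rfl⟩ | ⟨hc, he, rfl⟩ | ⟨hc, he, rfl⟩ | ⟨hc, he, rfl⟩
        all_goals
          simp [tableValue, table]
          subst e1 e2 e3 e4 e5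
          simp only [lie_smul, smul_lie, h12, h13, h14, h15, h23, h24, h25, h34, h35, h45,
            h6, smul_zero]
          and_intros
          all_goals first | trivial | (match_scalars <;> grind)
    have hinv : ∀ a : k, a ≠ 0 → a⁻¹ * a = 1 := fun a ha => inv_mul_cancel₀ ha
    by_cases hc : c = 0
    · by_cases he : e = 0
      · exact main 1 1 15 one_ne_zero one_ne_zero (.inl ⟨hc, he, rfl⟩)
      · exact main _ 1 17 (inv_ne_zero he) one_ne_zero (.inr (.inr (.inl ⟨hc, hinv e he, rfl⟩)))
    · by_cases he : e = 0
      · exact main 1 _ 16 one_ne_zero (inv_ne_zero hc) (.inr (.inl ⟨hinv c hc, he, rfl⟩))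
      · exact main _ _ 18 (inv_ne_zero he) (inv_ne_zero hc)
          (.inr (.inr (.inr ⟨hinv c hc, hinv e he, rfl⟩)))
  · obtain ⟨s, hs⟩ : ∃ s, s = -e / (2 * b ^ 2) := ⟨_, rfl⟩
    have hse : 2 * b * b * s = -e := by
      rw [hs]
      field_simp
    obtain ⟨y0, e0⟩ : ∃ y, y = x1 + s • x4 := ⟨_, rfl⟩
    obtain ⟨y1, e1⟩ : ∃ y, y = x2 + (c / b) • x4 := ⟨_, rfl⟩
    obtain ⟨y2, e2⟩ : ∃ y, y = x3 - s • (b • x5 + e • x6) := ⟨_, rfl⟩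
    obtain ⟨y3, e3⟩ : ∃ y, y = b⁻¹ • x4 := ⟨_, rfl⟩
    obtain ⟨y4, e4⟩ : ∃ y, y = x5 - (2 * s * b) • x6 := ⟨_, rfl⟩
    refine isModel_of_relations hn hL hX one_ne_zero 19 y0 y1 y2 y3 y4 x6 ?_ ?_
    · rintro x (rfl | rfl | rfl)
      · refine mem_span_range_sup 1 0 0 (-s * b) 0 0 ?_
        subst e0 e3
        match_scalars <;> field_simp
        ring
      · refine mem_span_range_sup 0 1 0 (-c) 0 0 ?_
        subst e1 e3
        match_scalars <;> field_simp
        ring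
      · refine mem_span_range_sup 0 0 0 b 0 0 ?_
        rw [e3, smul_inv_smul₀ hb]
        module
    · rw [forall_lt_fin_six]
      simp [tableValue, table]
      subst e0 e1 e2 e3 e4
      simp only [lie_add, add_lie, lie_sub, sub_lie, lie_smul, smul_lie, h12, h13, h14, h15, h23,
        h24, h25, h34, h35, h45, lie_rev h24, lie_rev h34, lie_rev h45,
        h6, h6', lie_self, smul_zero, add_zero]
      and_intros
      all_goals first | trivial | (match_scalars <;> grind)

theorem isModel_threeGenerators_step_four (hk : (2 : k) ≠ 0) (h1 : finrank k (lc k L 1) = 3)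
    (h2 : finrank k (lc k L 2) = 2) (h3 : finrank k (lc k L 3) = 1) (h4 : lc k L 4 = ⊥) :
    IsModel k L := by
  obtain ⟨w1, -, w2, -, w3, -, hW⟩ := exists_triple (le_top : lc k L 1 ≤ ⊤)
    (by rw [finrank_top]; omega)
  obtain ⟨v1, v2, x4, hspan, m14, m24⟩ := exists_triple_lie_mem
    (lc_antitone one_le_two : lc k L 2 ≤ lc k L 1) (by omega) (lie_mem_lc_succ w1 (y := w2) trivial)
    (lie_mem_lc_succ w3 (y := w1) trivial) (lie_mem_lc_succ w2 (y := w3) trivial)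
  have hlc2 : ∀ x y z : L, ⁅x, ⁅y, z⁆⁆ ∈ lc k L 2 := fun x y z =>
    lie_mem_lc_succ x (lie_mem_lc_succ y trivial)
  obtain ⟨x1, x2, hspan', m23⟩ := exists_span_eq_lie_mem
    (lc_antitone (by norm_num) : lc k L 3 ≤ lc k L 2) (by omega) (hlc2 v1 v1 v2) (hlc2 v2 v1 v2)
  have hX : ⊤ ≤ Submodule.span k {x1, x2, x4} ⊔ lc k L 1 := by
    refine (hW.trans (sup_le_sup_right hspan _)).trans (sup_le_sup_right ?_ _)
    rw [Submodule.span_le]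
    have hle : Submodule.span k {x1, x2} ≤ Submodule.span k {x1, x2, x4} :=
      Submodule.span_mono (by grind)
    rw [hspan'] at hle
    rintro x (rfl | rfl | rfl)
    · exact hle (Submodule.subset_span (by simp))
    · exact hle (Submodule.subset_span (by simp))
    · exact Submodule.subset_span (by simp)
  have hC : ∀ x ∈ Submodule.span k {x1, x2}, ⁅x, x4⁆ ∈ lc k L 2 := by
    rw [hspan']
    intro x hx
    obtain ⟨a, b, rfl⟩ := Submodule.mem_span_pair.1 hx
    rw [add_lie, smul_lie, smul_lie]
    exact add_mem (Submodule.smul_mem _ _ m14) (Submodule.smul_mem _ _ m24)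
  replace m14 := hC x1 (Submodule.subset_span (by simp))
  replace m24 := hC x2 (Submodule.subset_span (by simp))
  have hb : ∀ x : L, x ∈ lc k L 4 → x = 0 := fun x hx => by simpa [h4] using hx
  obtain ⟨x3, h12⟩ : ∃ x3, ⁅x1, x2⁆ = x3 := ⟨_, rfl⟩
  obtain ⟨x5, h13⟩ : ∃ x5, ⁅x1, x3⁆ = x5 := ⟨_, rfl⟩
  obtain ⟨x6, h15⟩ : ∃ x6, ⁅x1, x5⁆ = x6 := ⟨_, rfl⟩
  have m3 : x3 ∈ lc k L 1 := h12 ▸ lie_mem_lc_succ x1 trivial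
  have m5 : x5 ∈ lc k L 2 := h13 ▸ lie_mem_lc_succ x1 m3
  have m6 : x6 ∈ lc k L 3 := h15 ▸ lie_mem_lc_succ x1 m5
  rw [h12] at m23
  have h6 : ∀ x : L, ⁅x, x6⁆ = 0 := fun x => hb _ (lie_mem_lc_succ x m6)
  have m34 : ⁅x3, x4⁆ ∈ lc k L 3 := by
    rw [← h12, lie_lie]
    exact sub_mem (lie_mem_lc_succ x1 m24) (lie_mem_lc_succ x2 m14)
  have h25 : ⁅x2, x5⁆ = 0 := by
    rw [← h13, leibniz_lie, hb _ (lie_mem_lc_succ x1 m23), lie_rev h12, neg_lie, lie_self,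
      neg_zero, add_zero]
  have h35 : ⁅x3, x5⁆ = 0 := hb _ (lie_mem_lc_le (i := 1) (j := 2) le_rfl m3 m5)
  have h45 : ⁅x4, x5⁆ = 0 := by
    rw [← h13, leibniz_lie]
    have m41 : ⁅x4, x1⁆ ∈ lc k L 2 := by
      rw [← lie_skew]
      exact neg_mem m14
    have m43 : ⁅x4, x3⁆ ∈ lc k L 3 := by
      rw [← lie_skew]
      exact neg_mem m34
    rw [hb _ (lie_mem_lc_succ x1 m43), hb _ (lie_mem_lc_le (i := 2) (j := 1) le_rfl m41 m3),
      add_zero]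
  have s1 : lc k L 1 ≤ Submodule.span k {x3} ⊔ lc k L 2 := by
    refine lc_one_le_of_triple hX ?_ ?_ ?_ le_sup_right
    · exact h12 ▸ Submodule.mem_sup_left (Submodule.mem_span_singleton_self _)
    · exact Submodule.mem_sup_right m14
    · exact Submodule.mem_sup_right m24
  have s2 : lc k L 2 ≤ Submodule.span k {x5} ⊔ lc k L 3 := by
    refine lc_succ_le_of_generators hX s1 ?_ le_sup_right
    rintro x (rfl | rfl | rfl) v rfl
    · exact h13 ▸ Submodule.mem_sup_left (Submodule.mem_span_singleton_self _)
    · exact Submodule.mem_sup_right m23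
    · rw [← lie_skew]
      exact Submodule.mem_sup_right (neg_mem m34)
  have s3 : lc k L 3 ≤ Submodule.span k {x6} := by
    refine lc_succ_le_of_generators hX s2 ?_ (by simp [h4])
    rintro x (rfl | rfl | rfl) v rfl
    · exact h15 ▸ Submodule.mem_span_singleton_self _
    · rw [h25]
      exact zero_mem _
    · rw [h45]
      exact zero_mem _
  have s2' : lc k L 2 ≤ Submodule.span k {x5, x6} := by
    refine s2.trans (sup_le (Submodule.span_mono (by grind)) (s3.trans ?_))
    exact Submodule.span_mono (by grind)
  obtain ⟨a, a', h14⟩ := Submodule.mem_span_pair.1 (s2' m14)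
  obtain ⟨b, e, h24⟩ := Submodule.mem_span_pair.1 (s2' m24)
  obtain ⟨c, h23⟩ := Submodule.mem_span_singleton.1 (s3 m23)
  have h34 : ⁅x3, x4⁆ = b • x6 := by
    rw [← h12, lie_lie, ← h24, ← h14, lie_add, lie_add, lie_smul, lie_smul, lie_smul, lie_smul,
      h15, h6, h6, h25]
    simp
  have hX' : ⊤ ≤ Submodule.span k {x1, x2, x4 - (a • x3 + a' • x5)} ⊔ lc k L 1 := by
    refine hX.trans (sup_le (Submodule.span_le.2 ?_) le_sup_right)
    rintro x (rfl | rfl | rfl)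
    · exact Submodule.mem_sup_left (Submodule.subset_span (by simp))
    · exact Submodule.mem_sup_left (Submodule.subset_span (by simp))
    · rw [← sub_add_cancel x (a • x3 + a' • x5)]
      exact add_mem (Submodule.mem_sup_left (Submodule.subset_span (by simp)))
        (Submodule.mem_sup_right (add_mem (Submodule.smul_mem _ _ m3)
          (Submodule.smul_mem _ _ (lc_antitone one_le_two m5))))
  refine isModel_threeGenerators_step_four_of_relations hn hL hk hX' h12 h13 (b := b) (c := c)
    (e := e - a * c) ?_ h15 h23.symm ?_ h25 ?_ h35 ?_ h6
  all_goals
    simp only [lie_add, lie_sub, sub_lie, add_lie, lie_smul, smul_lie, h13, h15, ← h14, ← h24,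
      ← h23, h25, h34, h35, h45, lie_self, smul_zero, add_zero, sub_zero]
  all_goals module

end ThreeGeneratorsTwo

section SmallDerived

variable {k : Type*} [Field k] {L : Type*} [LieRing L] [LieAlgebra k L] [Module.Finite k L]

theorem le_span_singleton_sup {A B : Submodule k L} (hBA : B ≤ A)
    (h : finrank k A ≤ finrank k B + 1) {x : L} (hxA : x ∈ A) (hxB : x ∉ B) :
    A ≤ Submodule.span k {x} ⊔ B := by
  have hlt : B < Submodule.span k {x} ⊔ B := by
    refine lt_of_le_of_ne le_sup_right fun he => hxB ?_
    rw [he]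
    exact Submodule.mem_sup_left (Submodule.mem_span_singleton_self _)
  have hle : Submodule.span k {x} ⊔ B ≤ A := sup_le (by simpa using hxA) hBA
  have := Submodule.finrank_lt_finrank_of_lt hlt
  exact (Submodule.eq_of_le_of_finrank_le hle (by omega)).ge

theorem le_span_pair {A : Submodule k L} (h : finrank k A ≤ 2) {x y : L} (hx : x ∈ A) (hy : y ∈ A)
    (hx0 : x ≠ 0) (hxy : y ∉ Submodule.span k {x}) : A ≤ Submodule.span k {x, y} := by
  rw [Set.pair_comm, Submodule.span_insert]
  exact le_span_singleton_sup (by simpa using hx) (by rwa [finrank_span_singleton hx0]) hy hxy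

theorem finrank_ker_ad_add (x : L) {A : Submodule k L} (h : ∀ y, ⁅x, y⁆ ∈ A) :
    finrank k L ≤ finrank k A + finrank k (LinearMap.ker (LieAlgebra.ad k L x)) := by
  have := (LieAlgebra.ad k L x).finrank_range_add_finrank_ker
  have hle : finrank k (LinearMap.range (LieAlgebra.ad k L x)) ≤ finrank k A := by
    refine Submodule.finrank_mono ?_
    rintro _ ⟨y, rfl⟩
    exact h y
  omega

variable (hn : ∃ m, lc k L m = ⊥) (hL : finrank k L = 6)

include hn hL

theorem isModel_fourGenerators_step_three_of_relations {x1 x2 x3 x4 x5 x6 : L} {b c d : k}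
    (hX : ⊤ ≤ Submodule.span k {x1, x2, x4, x5} ⊔ lc k L 1) (h12 : ⁅x1, x2⁆ = x3)
    (h13 : ⁅x1, x3⁆ = x6) (h14 : ⁅x1, x4⁆ = 0) (h15 : ⁅x1, x5⁆ = 0) (h23 : ⁅x2, x3⁆ = 0)
    (h24 : ⁅x2, x4⁆ = b • x6) (h25 : ⁅x2, x5⁆ = c • x6) (h34 : ⁅x3, x4⁆ = 0)
    (h35 : ⁅x3, x5⁆ = 0) (h45 : ⁅x4, x5⁆ = d • x6) (h6 : ∀ x : L, ⁅x, x6⁆ = 0) :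
    IsModel k L := by
  have h6' : ∀ x : L, ⁅x6, x⁆ = 0 := fun x => by rw [← lie_skew, h6, neg_zero]
  by_cases hd : d = 0
  · subst hd
    have main : ∀ {x4 x5 : L} {b c : k}, ⊤ ≤ Submodule.span k {x1, x2, x4, x5} ⊔ lc k L 1 →
        ⁅x1, x4⁆ = 0 → ⁅x1, x5⁆ = 0 → ⁅x2, x4⁆ = b • x6 → ⁅x2, x5⁆ = c • x6 → ⁅x3, x4⁆ = 0 →
        ⁅x3, x5⁆ = 0 → ⁅x4, x5⁆ = 0 → b ≠ 0 → IsModel k L := by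
      intro x4 x5 b c hX h14 h15 h24 h25 h34 h35 h45 hb
      obtain ⟨y3, e3⟩ : ∃ y, y = b⁻¹ • x4 := ⟨_, rfl⟩
      obtain ⟨y5, e5⟩ : ∃ y, y = x5 - (c / b) • x4 := ⟨_, rfl⟩
      refine isModel_of_relations hn hL hX one_ne_zero 6 x1 x2 x3 y3 x6 y5 ?_ ?_
      · rintro x (rfl | rfl | rfl | rfl)
        · exact mem_span_range_sup 1 0 0 0 0 0 (by module)
        · exact mem_span_range_sup 0 1 0 0 0 0 (by module)
        · refine mem_span_range_sup 0 0 0 b 0 0 ?_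
          rw [e3, smul_inv_smul₀ hb]
          module
        · refine mem_span_range_sup 0 0 0 c 0 1 ?_
          subst e3 e5
          match_scalars <;> field_simp
          ring
      · rw [forall_lt_fin_six]
        simp [tableValue, table]
        subst e3 e5
        simp only [lie_sub, lie_smul, smul_lie, h12, h13, h14, h15, h23, h24, h25, h34, h35, h45,
          h6, h6', lie_self, smul_zero, sub_zero]
        and_intros
        all_goals first | trivial | (match_scalars; grind)
    rw [zero_smul] at h45
    by_cases hb : b = 0
    · by_cases hc : c = 0
      · refine isModel_of_relations hn hL hX one_ne_zero 5 x1 x2 x3 x6 x4 x5 ?_ ?_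
        · rintro x (rfl | rfl | rfl | rfl)
          · exact mem_span_range_sup 1 0 0 0 0 0 (by module)
          · exact mem_span_range_sup 0 1 0 0 0 0 (by module)
          · exact mem_span_range_sup 0 0 0 0 1 0 (by module)
          · exact mem_span_range_sup 0 0 0 0 0 1 (by module)
        · rw [forall_lt_fin_six]
          simp [tableValue, table, h12, h13, h14, h15, h23, h24, h25, h34, h35, h45, h6, h6', hb,
            hc]
      · rw [show ({x1, x2, x4, x5} : Set L) = {x1, x2, x5, x4} by ext; simp; tauto] at hX
        exact main hX h15 h14 h25 h24 h35 h34 (by rw [lie_rev h45, neg_zero]) hc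
    · exact main hX h14 h15 h24 h25 h34 h35 h45 hb
  · obtain ⟨y1, e1⟩ : ∃ y, y = x2 + (-c / d) • x4 + (b / d) • x5 := ⟨_, rfl⟩
    obtain ⟨y4, e4⟩ : ∃ y, y = d⁻¹ • x5 := ⟨_, rfl⟩
    refine isModel_of_relations hn hL hX one_ne_zero 7 x1 y1 x3 x4 y4 x6 ?_ ?_
    · rintro x (rfl | rfl | rfl | rfl)
      · exact mem_span_range_sup 1 0 0 0 0 0 (by module)
      · refine mem_span_range_sup 0 1 0 (c / d) (-b) 0 ?_
        subst e1 e4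
        match_scalars <;> field_simp
        all_goals ring
      · exact mem_span_range_sup 0 0 0 1 0 0 (by module)
      · refine mem_span_range_sup 0 0 0 0 d 0 ?_
        rw [e4, smul_inv_smul₀ hd]
        module
    · rw [forall_lt_fin_six]
      simp [tableValue, table]
      subst e1 e4
      simp only [lie_add, add_lie, lie_smul, smul_lie, h12, h13, h14, h15, h23, h24, h25, h34, h35,
        h45, lie_rev h34, lie_rev h35, lie_rev h45, h6, lie_self, smul_zero, add_zero]
      and_intros
      all_goals first | trivial | (match_scalars <;> grind)

theorem isModel_fourGenerators_step_three (h1 : finrank k (lc k L 1) = 2)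
    (h2 : finrank k (lc k L 2) = 1) (h3 : lc k L 3 = ⊥) : IsModel k L := by
  have hb : ∀ x : L, x ∈ lc k L 3 → x = 0 := fun x hx => by simpa [h3] using hx
  have hc : ∀ x y : L, y ∈ lc k L 2 → ⁅x, y⁆ = 0 := fun x y hy => hb _ (lie_mem_lc_succ x hy)
  have hle : lc k L 2 ≤ lc k L 1 := lc_antitone one_le_two
  obtain ⟨v, mv, hv⟩ := exists_singleton hle (by omega)
  obtain ⟨K, hK⟩ : ∃ K, K = LinearMap.ker (LieAlgebra.ad k L v) := ⟨_, rfl⟩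
  have mK : ∀ {x}, x ∈ K ↔ ⁅v, x⁆ = 0 := by
    intro x
    rw [hK, LinearMap.mem_ker, LieAlgebra.ad_apply]
  have hK1 : ∀ {x y}, x ∈ K → y ∈ lc k L 1 → ⁅x, y⁆ = 0 := by
    intro x y hx hy
    obtain ⟨a, b, hb, rfl⟩ := mem_span_singleton_sup.1 (hv hy)
    rw [lie_add, lie_smul, hc x b hb, lie_rev (mK.1 hx)]
    simp
  have h1K : lc k L 1 ≤ K := fun x hx => mK.2 (hb _ (lie_mem_lc_le (i := 1) (j := 1) le_rfl mv hx))
  obtain ⟨x1, hx1⟩ : ∃ x1, x1 ∉ K := by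
    by_contra! hall
    have : lc k L 2 ≤ ⊥ := by
      refine Submodule.span_le.2 ?_
      rintro _ ⟨x, y, hy, rfl⟩
      exact (Submodule.mem_bot k).2 (hK1 (hall x) hy)
    rw [le_bot_iff.1 this, finrank_bot] at h2
    exact zero_ne_one h2
  have hKdim : 6 ≤ 1 + finrank k K := by
    have := finrank_ker_ad_add v (A := lc k L 2) fun y => by
      rw [← lie_skew]
      exact neg_mem (lie_mem_lc_succ y mv)
    rwa [hL, h2, ← hK] at this
  have hKlt : finrank k K < 6 := by
    rw [← hL]
    exact Submodule.finrank_lt fun h => hx1 (h ▸ trivial)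
  have hTop : ⊤ ≤ Submodule.span k {x1} ⊔ K :=
    le_span_singleton_sup le_top (by rw [finrank_top]; omega) trivial hx1
  have hKK : ∀ {x y}, x ∈ K → y ∈ K → ⁅x, y⁆ ∈ lc k L 2 := by
    intro x y hx hy
    obtain ⟨a, b, hb, hxy⟩ := mem_span_singleton_sup.1 (hv (lie_mem_lc_succ x (y := y) trivial))
    have h0 : ⁅x1, ⁅x, y⁆⁆ = 0 := by
      rw [leibniz_lie, hK1 hx (lie_mem_lc_succ x1 trivial), add_zero,
        lie_rev (hK1 hy (lie_mem_lc_succ x1 trivial)), neg_zero]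
    rw [hxy, lie_add, lie_smul, hc _ _ hb, add_zero] at h0
    obtain rfl : a = 0 := (smul_eq_zero.1 h0).resolve_right fun h =>
      hx1 (mK.2 (by rw [lie_rev h, neg_zero]))
    rw [hxy, zero_smul, zero_add]
    exact hb
  obtain ⟨u1, mu1, u2, mu2, u3, mu3, hu⟩ := exists_triple h1K (by omega)
  have main : ∀ {u1 u2 u3 : L}, u1 ∈ K → u2 ∈ K → u3 ∈ K →
      K ≤ Submodule.span k {u1, u2, u3} ⊔ lc k L 1 → ⁅x1, u1⁆ ∉ lc k L 2 → IsModel k L := by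
    intro u1 u2 u3 mu1 mu2 mu3 hu h11
    obtain ⟨x3, h13⟩ : ∃ x3, ⁅x1, u1⁆ = x3 := ⟨_, rfl⟩
    obtain ⟨x6, h36⟩ : ∃ x6, ⁅x1, x3⁆ = x6 := ⟨_, rfl⟩
    rw [h13] at h11
    have m3 : x3 ∈ lc k L 1 := h13 ▸ lie_mem_lc_succ x1 trivial
    have s1 : lc k L 1 ≤ Submodule.span k {x3} ⊔ lc k L 2 :=
      le_span_singleton_sup hle (by omega) m3 h11
    have s2 : lc k L 2 ≤ Submodule.span k {x6} := by
      refine Submodule.span_le.2 ?_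
      rintro _ ⟨x, y, hy, rfl⟩
      obtain ⟨a, w, hw, rfl⟩ := mem_span_singleton_sup.1 (hTop (trivial : x ∈ ⊤))
      obtain ⟨c, d, hd, rfl⟩ := mem_span_singleton_sup.1 (s1 hy)
      refine Submodule.mem_span_singleton.2 ⟨a * c, ?_⟩
      rw [add_lie, hK1 hw hy, smul_lie, lie_add, hc _ _ hd, lie_smul, h36, add_zero, add_zero,
        smul_smul]
    have s1' : lc k L 1 ≤ Submodule.span k {x3, x6} := by
      rw [Submodule.span_insert]
      exact s1.trans (sup_le_sup_left s2 _)
    have m6 : x6 ∈ lc k L 2 := h36 ▸ lie_mem_lc_succ x1 m3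
    obtain ⟨p2, q2, h2⟩ := Submodule.mem_span_pair.1 (s1' (lie_mem_lc_succ x1 (y := u2) trivial))
    obtain ⟨p3, q3, h3⟩ := Submodule.mem_span_pair.1 (s1' (lie_mem_lc_succ x1 (y := u3) trivial))
    obtain ⟨x4, e4⟩ : ∃ x, x = u2 - p2 • u1 - q2 • x3 := ⟨_, rfl⟩
    have mx4 : x4 ∈ K := e4 ▸ sub_mem (sub_mem mu2 (K.smul_mem _ mu1))
      (K.smul_mem _ (h1K m3))
    obtain ⟨x5, e5⟩ : ∃ x, x = u3 - p3 • u1 - q3 • x3 := ⟨_, rfl⟩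
    have mx5 : x5 ∈ K := e5 ▸ sub_mem (sub_mem mu3 (K.smul_mem _ mu1))
      (K.smul_mem _ (h1K m3))
    obtain ⟨b, hb4⟩ := Submodule.mem_span_singleton.1 (s2 (hKK mu1 mx4))
    obtain ⟨c, hc5⟩ := Submodule.mem_span_singleton.1 (s2 (hKK mu1 mx5))
    obtain ⟨d, hd⟩ := Submodule.mem_span_singleton.1 (s2 (hKK mx4 mx5))
    refine isModel_fourGenerators_step_three_of_relations hn hL (x1 := x1) (x2 := u1) (x3 := x3)
      (x6 := x6) ?_ h13 h36 ?_ ?_ (hK1 mu1 m3) hb4.symm hc5.symm ?_ ?_ hd.symm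
      (fun x => hc x _ m6)
    · refine hTop.trans (sup_le ?_ (hu.trans (sup_le (Submodule.span_le.2 ?_) le_sup_right)))
      · exact (Submodule.span_mono (by simp)).trans le_sup_left
      · have hu1 : u1 ∈ Submodule.span k {x1, u1, x4, x5} ⊔ lc k L 1 :=
          Submodule.mem_sup_left (Submodule.subset_span (by simp))
        rintro x (rfl | rfl | rfl)
        · exact hu1
        · rw [show x = x4 + p2 • u1 + q2 • x3 by rw [e4]; abel]
          exact add_mem (add_mem (Submodule.mem_sup_left (Submodule.subset_span (by simp)))
            (Submodule.smul_mem _ _ hu1)) (Submodule.mem_sup_right (Submodule.smul_mem _ _ m3))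
        · rw [show x = x5 + p3 • u1 + q3 • x3 by rw [e5]; abel]
          exact add_mem (add_mem (Submodule.mem_sup_left (Submodule.subset_span (by simp)))
            (Submodule.smul_mem _ _ hu1)) (Submodule.mem_sup_right (Submodule.smul_mem _ _ m3))
    · simp only [e4, lie_sub, lie_smul, h13, h36, ← h2]
      abel
    · simp only [e5, lie_sub, lie_smul, h13, h36, ← h3]
      abel
    · rw [lie_rev (hK1 mx4 m3), neg_zero]
    · rw [lie_rev (hK1 mx5 m3), neg_zero]
  by_cases h11 : ⁅x1, u1⁆ ∈ lc k L 2
  · by_cases h12 : ⁅x1, u2⁆ ∈ lc k L 2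
    · by_cases h13 : ⁅x1, u3⁆ ∈ lc k L 2
      · exfalso
        have hxK : ∀ y ∈ K, ⁅x1, y⁆ ∈ lc k L 2 := by
          have : K ≤ (lc k L 2).comap (LieAlgebra.ad k L x1) := by
            refine hu.trans (sup_le (Submodule.span_le.2 ?_) fun y hy => lie_mem_lc_succ x1 hy)
            rintro x (rfl | rfl | rfl) <;> assumption
          exact this
        have : lc k L 1 ≤ lc k L 2 := by
          refine Submodule.span_le.2 ?_
          rintro _ ⟨x, y, -, rfl⟩
          obtain ⟨a, w, hw, rfl⟩ := mem_span_singleton_sup.1 (hTop (trivial : x ∈ ⊤))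
          obtain ⟨c, d, hd, rfl⟩ := mem_span_singleton_sup.1 (hTop (trivial : y ∈ ⊤))
          simp only [lie_add, add_lie, smul_lie, lie_smul, lie_self, smul_zero, zero_add]
          refine add_mem (Submodule.smul_mem _ _ ?_) (add_mem (Submodule.smul_mem _ _ (hxK d hd))
            (hKK hw hd))
          rw [← lie_skew]
          exact neg_mem (hxK w hw)
        have := Submodule.finrank_mono this
        omega
      · rw [show ({u1, u2, u3} : Set L) = {u3, u1, u2} by ext; simp; tauto] at hu
        exact main mu3 mu1 mu2 hu h13
    · rw [show ({u1, u2, u3} : Set L) = {u2, u1, u3} by ext; simp; tauto] at hu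
      exact main mu2 mu1 mu3 hu h12
  · exact main mu1 mu2 mu3 hu h11

end SmallDerived

section TwoStep

variable {k : Type*} [Field k] {L : Type*} [LieRing L] [LieAlgebra k L] [Module.Finite k L]

theorem exists_lc_one_le_span_pair (h1 : finrank k (lc k L 1) = 2) :
    ∃ x y1 y2 : L, lc k L 1 ≤ Submodule.span k {⁅x, y1⁆, ⁅x, y2⁆} := by
  have hm : ∀ x y : L, ⁅x, y⁆ ∈ lc k L 1 := fun x y => lie_mem_lc_succ x trivial
  have key : ∀ x y1 y2 : L, ⁅x, y1⁆ ≠ 0 → ⁅x, y2⁆ ∉ Submodule.span k {⁅x, y1⁆} →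
      ∃ x y1 y2 : L, lc k L 1 ≤ Submodule.span k {⁅x, y1⁆, ⁅x, y2⁆} := fun x y1 y2 h1' h2' =>
    ⟨x, y1, y2, le_span_pair h1.le (hm _ _) (hm _ _) h1' h2'⟩
  have hex : ∀ S : Submodule k L, finrank k S < 2 → ∃ x y : L, ⁅x, y⁆ ∉ S := by
    intro S hS
    by_contra! hall
    have : lc k L 1 ≤ S := by
      refine Submodule.span_le.2 ?_
      rintro _ ⟨x, y, -, rfl⟩
      exact hall x y
    have := Submodule.finrank_mono this
    omega
  obtain ⟨x, y, hxy⟩ := hex ⊥ (by simp)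
  rw [Submodule.mem_bot] at hxy
  obtain ⟨z, hz⟩ : ∃ z, ⁅x, y⁆ = z := ⟨_, rfl⟩
  rw [hz] at hxy
  obtain ⟨u, v, huv⟩ := hex (Submodule.span k {z}) (by rw [finrank_span_singleton hxy]; norm_num)
  have hspan : ∀ {a b : L}, ⁅a, b⁆ ∈ Submodule.span k {z} → ⁅a, b⁆ ≠ 0 →
      Submodule.span k {⁅a, b⁆} = Submodule.span k {z} := by
    intro a b hab h0
    obtain ⟨c, hc⟩ := Submodule.mem_span_singleton.1 hab
    have hc0 : c ≠ 0 := by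
      rintro rfl
      exact h0 (by rw [← hc, zero_smul])
    rw [← hc]
    exact Submodule.span_singleton_smul_eq hc0.isUnit z
  have hvu : ⁅v, u⁆ ∉ Submodule.span k {z} := by
    rw [← lie_skew, neg_mem_iff]
    exact huv
  have hyx : ⁅y, x⁆ = -z := lie_rev hz
  by_cases huy : ⁅u, y⁆ = 0
  · by_cases hxv : ⁅x, v⁆ = 0
    · refine key (x + u) y v ?_ ?_
      · rwa [add_lie, huy, add_zero, hz]
      · rwa [add_lie, add_lie, huy, hxv, add_zero, zero_add, hz]
    · by_cases hs : ⁅x, v⁆ ∈ Submodule.span k {z}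
      · have hs' : ⁅v, x⁆ ∈ Submodule.span k {z} := by
          rw [← lie_skew, neg_mem_iff]
          exact hs
        have hvx : ⁅v, x⁆ ≠ 0 := by
          rw [← lie_skew, neg_ne_zero]
          exact hxv
        exact key v x u hvx (by rwa [hspan hs' hvx])
      · exact key x y v (by rwa [hz]) (by rwa [hz])
  · by_cases hs : ⁅u, y⁆ ∈ Submodule.span k {z}
    · exact key u y v huy (by rwa [hspan hs huy])
    · have hyx0 : ⁅y, x⁆ ≠ 0 := by rwa [hyx, neg_ne_zero]
      refine key y x u hyx0 ?_
      rwa [hspan (by rw [hyx]; exact neg_mem (Submodule.mem_span_singleton_self z)) hyx0,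
        ← lie_skew, neg_mem_iff]

variable (hn : ∃ m, lc k L m = ⊥) (hL : finrank k L = 6)

include hn hL

theorem isModel_fourGenerators_twoStep_of_trace {x1 x2 x3 x4 x5 x6 : L} {m b c : k}
    (hk : (2 : k) ≠ 0) (hX : ⊤ ≤ Submodule.span k {x1, x2, x3, x4} ⊔ lc k L 1)
    (h12 : ⁅x1, x2⁆ = x5) (h13 : ⁅x1, x3⁆ = x6) (h14 : ⁅x1, x4⁆ = 0) (h23 : ⁅x2, x3⁆ = 0)
    (h24 : ⁅x2, x4⁆ = m • x5 + b • x6) (h34 : ⁅x3, x4⁆ = c • x5 - m • x6)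
    (h5 : ∀ x : L, ⁅x, x5⁆ = 0) (h6 : ∀ x : L, ⁅x, x6⁆ = 0) : IsModel k L := by
  have h5' : ∀ x : L, ⁅x5, x⁆ = 0 := fun x => by rw [← lie_skew, h5, neg_zero]
  have h6' : ∀ x : L, ⁅x6, x⁆ = 0 := fun x => by rw [← lie_skew, h6, neg_zero]
  by_cases hM : c ≠ 0 ∨ m ≠ 0 ∨ -b ≠ 0
  · obtain ⟨β, α, hΔ⟩ := exists_ne_zero_of_quadratic hk hM
    obtain ⟨Δ, hΔe⟩ : ∃ Δ, Δ = c * β ^ 2 + 2 * m * (β * α) + -b * α ^ 2 := ⟨_, rfl⟩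
    rw [← hΔe] at hΔ
    have main : ∀ (ε : k) (n : Fin 30), ε ≠ 0 → (m ^ 2 + b * c = ε ∧ n = 28 ∨
        m ^ 2 + b * c = 0 ∧ n = 4) → IsModel k L := by
      intro ε n hε hn'
      obtain ⟨y1, e1⟩ : ∃ y, y = (α * m + β * c) • x2 + (α * b - β * m) • x3 := ⟨_, rfl⟩
      obtain ⟨y2, e2⟩ : ∃ y, y = α • x2 + β • x3 := ⟨_, rfl⟩
      obtain ⟨y4, e4⟩ : ∃ y, y = (α * m + β * c) • x5 + (α * b - β * m) • x6 := ⟨_, rfl⟩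
      obtain ⟨y5, e5⟩ : ∃ y, y = α • x5 + β • x6 := ⟨_, rfl⟩
      refine isModel_of_relations hn hL hX hε n x1 y1 y2 x4 y4 y5 ?_ ?_
      · rintro x (rfl | rfl | rfl | rfl)
        · exact mem_span_range_sup 1 0 0 0 0 0 (by module)
        · refine mem_span_range_sup 0 (β / Δ) (-(α * b - β * m) / Δ) 0 0 0 ?_
          subst e1 e2
          match_scalars <;> field_simp <;> grind
        · refine mem_span_range_sup 0 (-α / Δ) ((α * m + β * c) / Δ) 0 0 0 ?_
          subst e1 e2
          match_scalars <;> field_simp <;> grind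
        · exact mem_span_range_sup 0 0 0 1 0 0 (by module)
      · rw [forall_lt_fin_six]
        rcases hn' with ⟨hδ, rfl⟩ | ⟨hδ, rfl⟩
        all_goals
          simp [tableValue, table]
          subst e1 e2 e4 e5
          simp only [lie_add, add_lie, smul_lie, lie_smul, h12, h13, h14, h23, h24, h34,
            lie_rev h23, h5, h6, lie_self, smul_zero, add_zero]
          and_intros
          all_goals first | trivial | (match_scalars <;> grind)
    by_cases hδ : m ^ 2 + b * c = 0
    · exact main 1 4 one_ne_zero (.inr ⟨hδ, rfl⟩)
    · exact main _ 28 hδ (.inl ⟨rfl, rfl⟩)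
  · push Not at hM
    obtain ⟨rfl, rfl, hb⟩ := hM
    obtain rfl : b = 0 := neg_eq_zero.1 hb
    refine isModel_of_relations hn hL hX one_ne_zero 3 x1 x2 x3 x5 x6 x4 ?_ ?_
    · rintro x (rfl | rfl | rfl | rfl)
      · exact mem_span_range_sup 1 0 0 0 0 0 (by module)
      · exact mem_span_range_sup 0 1 0 0 0 0 (by module)
      · exact mem_span_range_sup 0 0 1 0 0 0 (by module)
      · exact mem_span_range_sup 0 0 0 0 0 1 (by module)
    · rw [forall_lt_fin_six]
      simp [tableValue, table, h12, h13, h14, h23, h24, h34, h5, h5', h6, h6']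

theorem isModel_fourGenerators_twoStep (hk : (2 : k) ≠ 0) (h1 : finrank k (lc k L 1) = 2)
    (h2 : lc k L 2 = ⊥) : IsModel k L := by
  obtain ⟨x1, w2, w3, s1⟩ := exists_lc_one_le_span_pair h1
  have hc : ∀ x y : L, y ∈ lc k L 1 → ⁅x, y⁆ = 0 := fun x y hy => by
    simpa [h2] using lie_mem_lc_succ x hy
  have hm : ∀ x y : L, ⁅x, y⁆ ∈ lc k L 1 := fun x y => lie_mem_lc_succ x trivial
  obtain ⟨x5, h12⟩ : ∃ x, ⁅x1, w2⁆ = x := ⟨_, rfl⟩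
  obtain ⟨x6, h13⟩ : ∃ x, ⁅x1, w3⁆ = x := ⟨_, rfl⟩
  rw [h12, h13] at s1
  have h5 : ∀ x : L, ⁅x, x5⁆ = 0 := fun x => hc x _ (h12 ▸ hm _ _)
  have h6 : ∀ x : L, ⁅x, x6⁆ = 0 := fun x => hc x _ (h13 ▸ hm _ _)
  obtain ⟨K, hK⟩ : ∃ K, K = LinearMap.ker (LieAlgebra.ad k L x1) := ⟨_, rfl⟩
  have mK : ∀ {x}, x ∈ K ↔ ⁅x1, x⁆ = 0 := by
    intro x
    rw [hK, LinearMap.mem_ker, LieAlgebra.ad_apply]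
  have hx1 : x1 ∉ lc k L 1 := by
    intro hx1
    have : ∀ y : L, ⁅x1, y⁆ = 0 := fun y => by rw [← lie_skew, hc _ _ hx1, neg_zero]
    rw [← h12, ← h13, this, this, Set.pair_eq_singleton,
      Submodule.span_zero_singleton] at s1
    have := Submodule.finrank_mono s1
    rw [h1, finrank_bot] at this
    omega
  have hKle : finrank k K ≤ 4 := by
    have hrank := (LieAlgebra.ad k L x1).finrank_range_add_finrank_ker
    have : lc k L 1 ≤ LinearMap.range (LieAlgebra.ad k L x1) := by
      refine s1.trans (Submodule.span_le.2 ?_)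
      rintro x (rfl | rfl)
      · exact ⟨w2, h12⟩
      · exact ⟨w3, h13⟩
    have := Submodule.finrank_mono this
    rw [← hK] at hrank
    omega
  have hB : 2 < finrank k (Submodule.span k {x1} ⊔ lc k L 1 : Submodule k L) := by
    rw [← h1]
    refine Submodule.finrank_lt_finrank_of_lt (lt_of_le_of_ne le_sup_right fun he => hx1 ?_)
    rw [he]
    exact Submodule.mem_sup_left (Submodule.mem_span_singleton_self _)
  have hBK : Submodule.span k {x1} ⊔ lc k L 1 ≤ K := by
    refine sup_le ?_ fun y hy => mK.2 (hc _ _ hy)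
    rw [Submodule.span_singleton_le_iff_mem, mK, lie_self]
  obtain ⟨w4, mw4, hw4⟩ := exists_singleton hBK (by omega)
  have h14 := mK.1 mw4
  have hX : ⊤ ≤ Submodule.span k {x1, w2, w3, w4} ⊔ lc k L 1 := by
    have hsub : ∀ {x}, x ∈ ({x1, w2, w3, w4} : Set L) →
        x ∈ Submodule.span k {x1, w2, w3, w4} ⊔ lc k L 1 := fun hx =>
      Submodule.mem_sup_left (Submodule.subset_span hx)
    have hK' : K ≤ Submodule.span k {x1, w2, w3, w4} ⊔ lc k L 1 := by
      refine hw4.trans (sup_le ?_ (sup_le ?_ le_sup_right)) <;>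
        rw [Submodule.span_singleton_le_iff_mem] <;> exact hsub (by simp)
    intro w _
    obtain ⟨a, b, hab⟩ := Submodule.mem_span_pair.1 (s1 (hm x1 w))
    rw [show w = (w - a • w2 - b • w3) + a • w2 + b • w3 by abel]
    refine add_mem (add_mem (hK' (mK.2 ?_)) (Submodule.smul_mem _ _ (hsub (by simp))))
      (Submodule.smul_mem _ _ (hsub (by simp)))
    rw [lie_sub, lie_sub, lie_smul, lie_smul, h12, h13, ← hab]
    abel
  obtain ⟨p, q, h23⟩ := Submodule.mem_span_pair.1 (s1 (hm w2 w3))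
  obtain ⟨a, b, h24⟩ := Submodule.mem_span_pair.1 (s1 (hm w2 w4))
  obtain ⟨c, d, h34⟩ := Submodule.mem_span_pair.1 (s1 (hm w3 w4))
  obtain ⟨s, hs⟩ : ∃ s, s = (a + d) / 2 := ⟨_, rfl⟩
  have hs2 : 2 * s = a + d := by rw [hs]; field_simp
  refine isModel_fourGenerators_twoStep_of_trace hn hL (x1 := x1) (x2 := w2 - q • x1)
    (x3 := w3 + p • x1) (x4 := w4 + s • x1) (x5 := x5) (x6 := x6) (m := a - s) (b := b) (c := c)
    hk ?_ ?_ ?_ ?_ ?_ ?_ ?_ h5 h6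
  · refine hX.trans (sup_le_sup_right (Submodule.span_le.2 ?_) _)
    have hsub : ∀ {x}, x ∈ ({x1, w2 - q • x1, w3 + p • x1, w4 + s • x1} : Set L) →
        x ∈ Submodule.span k {x1, w2 - q • x1, w3 + p • x1, w4 + s • x1} := fun hx =>
      Submodule.subset_span hx
    have hsub1 := hsub (x := x1) (by simp)
    rintro x (rfl | rfl | rfl | rfl)
    · exact hsub1
    · simpa using add_mem (hsub (x := x - q • x1) (by simp)) (Submodule.smul_mem _ q hsub1)
    · simpa using sub_mem (hsub (x := x + p • x1) (by simp)) (Submodule.smul_mem _ p hsub1)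
    · simpa using sub_mem (hsub (x := x + s • x1) (by simp)) (Submodule.smul_mem _ s hsub1)
  all_goals
    simp only [lie_add, lie_sub, sub_lie, add_lie, lie_smul, smul_lie, h12, h13, h14, ← h24, ← h23,
      ← h34, lie_rev h12, lie_rev h13, lie_self, smul_zero, add_zero, sub_zero] <;>
      match_scalars <;> grind

end TwoStep

section Heisenberg

variable {k : Type*} [Field k] {L : Type*} [LieRing L] [LieAlgebra k L]

/-- The subspace of `W` of all vectors commuting with `x` and `y`. -/
def centralizerPair (W : Submodule k L) (x y : L) : Submodule k L :=
  W ⊓ LinearMap.ker (LieAlgebra.ad k L x) ⊓ LinearMap.ker (LieAlgebra.ad k L y)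

theorem mem_centralizerPair {W : Submodule k L} {x y w : L} :
    w ∈ centralizerPair W x y ↔ w ∈ W ∧ ⁅x, w⁆ = 0 ∧ ⁅y, w⁆ = 0 := by
  simp [centralizerPair, and_assoc]

theorem le_span_pair_sup_centralizerPair {W : Submodule k L} {x y z : L} (hx : x ∈ W) (hy : y ∈ W)
    (hz : ∀ u v : L, ⁅u, v⁆ ∈ Submodule.span k {z}) (hxy : ⁅x, y⁆ = z) :
    W ≤ Submodule.span k {x, y} ⊔ centralizerPair W x y := by
  intro w hw
  obtain ⟨a, ha⟩ := Submodule.mem_span_singleton.1 (hz x w)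
  obtain ⟨b, hb⟩ := Submodule.mem_span_singleton.1 (hz y w)
  rw [show w = (a • y + (-b) • x) + (w - a • y + b • x) by module]
  refine Submodule.add_mem_sup (Submodule.mem_span_pair.2 ⟨-b, a, add_comm _ _⟩)
    (mem_centralizerPair.2 ⟨add_mem (sub_mem hw (W.smul_mem _ hy)) (W.smul_mem _ hx), ?_, ?_⟩)
  · simp [hxy, ← ha]
  · simp [lie_rev hxy, ← hb]

variable [Module.Finite k L]

theorem finrank_centralizerPair_add_two_le {W : Submodule k L} {x y : L} (hx : x ∈ W) (hy : y ∈ W)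
    (hxy : ⁅x, y⁆ ≠ 0) : finrank k (centralizerPair W x y) + 2 ≤ finrank k W := by
  have hyx : ⁅y, x⁆ ≠ 0 := by rwa [← lie_skew, neg_ne_zero]
  have h1 : centralizerPair W x y < W ⊓ LinearMap.ker (LieAlgebra.ad k L x) := by
    refine lt_of_le_of_ne inf_le_left fun he => hyx ?_
    have : x ∈ centralizerPair W x y := by
      rw [he]
      simpa using hx
    exact (mem_centralizerPair.1 this).2.2
  have h2 : W ⊓ LinearMap.ker (LieAlgebra.ad k L x) < W := by
    refine lt_of_le_of_ne inf_le_left fun he => hxy ?_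
    rw [← he] at hy
    simpa using hy.2
  have := Submodule.finrank_lt_finrank_of_lt h1
  have := Submodule.finrank_lt_finrank_of_lt h2
  omega

variable (hn : ∃ m, lc k L m = ⊥) (hL : finrank k L = 6)

include hn hL

theorem isModel_of_finrank_lc_one_eq_one (h1 : finrank k (lc k L 1) = 1) (h2 : lc k L 2 = ⊥) :
    IsModel k L := by
  have hm : ∀ x y : L, ⁅x, y⁆ ∈ lc k L 1 := fun x y => lie_mem_lc_succ x trivial
  have hc : ∀ x y : L, y ∈ lc k L 1 → ⁅x, y⁆ = 0 := fun x y hy => by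
    simpa [h2] using lie_mem_lc_succ x hy
  obtain ⟨x1, x2, hz0⟩ : ∃ x1 x2 : L, ⁅x1, x2⁆ ≠ 0 := by
    by_contra! hall
    have : lc k L 1 ≤ ⊥ := by
      refine Submodule.span_le.2 ?_
      rintro _ ⟨x, y, -, rfl⟩
      exact (Submodule.mem_bot k).2 (hall x y)
    rw [le_bot_iff.1 this, finrank_bot] at h1
    exact zero_ne_one h1
  obtain ⟨z, h12⟩ : ∃ z, ⁅x1, x2⁆ = z := ⟨_, rfl⟩
  have s1 : lc k L 1 ≤ Submodule.span k {z} := by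
    have := le_span_singleton_sup (bot_le : ⊥ ≤ lc k L 1) (by rw [finrank_bot]; omega) (hm x1 x2)
      (by simpa using hz0)
    rwa [h12, sup_bot_eq] at this
  have hz : ∀ u v : L, ⁅u, v⁆ ∈ Submodule.span k {z} := fun u v => s1 (hm u v)
  have hcz : ∀ x : L, ⁅x, z⁆ = 0 := fun x => hc x z (h12 ▸ hm _ _)
  have hcz' : ∀ x : L, ⁅z, x⁆ = 0 := fun x => by rw [← lie_skew, hcz, neg_zero]
  have hlc : ∀ {W : Submodule k L} {x y : L}, lc k L 1 ≤ W → lc k L 1 ≤ centralizerPair W x y :=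
    fun hW v hv => mem_centralizerPair.2 ⟨hW hv, hc _ _ hv, hc _ _ hv⟩
  obtain ⟨W, hW⟩ : ∃ W, W = centralizerPair (⊤ : Submodule k L) x1 x2 := ⟨_, rfl⟩
  have hW1 : lc k L 1 ≤ W := hW ▸ hlc le_top
  have hTop : ⊤ ≤ Submodule.span k {x1, x2} ⊔ W :=
    hW ▸ le_span_pair_sup_centralizerPair trivial trivial hz h12
  have hWdim : finrank k W + 2 ≤ 6 := by
    have := finrank_centralizerPair_add_two_le (k := k) (W := ⊤) trivial trivial hz0
    rwa [← hW, finrank_top, hL] at this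
  have hW12 : ∀ {w}, w ∈ W → ⁅x1, w⁆ = 0 ∧ ⁅x2, w⁆ = 0 := fun hw =>
    (mem_centralizerPair.1 (hW ▸ hw)).2
  by_cases hab : ∀ x ∈ W, ∀ y ∈ W, ⁅x, y⁆ = 0
  · obtain ⟨a, ha, b, hb, c, hc, habc⟩ := exists_triple hW1 (by omega)
    have hX : ⊤ ≤ Submodule.span k ({x1, x2} ∪ {a, b, c}) ⊔ lc k L 1 := by
      rw [Submodule.span_union, sup_assoc]
      exact hTop.trans (sup_le_sup_left habc _)
    refine isModel_of_relations hn hL hX one_ne_zero 1 x1 x2 z a b c ?_ ?_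
    · rintro x ((rfl | rfl) | (rfl | rfl | rfl))
      · exact mem_span_range_sup 1 0 0 0 0 0 (by module)
      · exact mem_span_range_sup 0 1 0 0 0 0 (by module)
      · exact mem_span_range_sup 0 0 0 1 0 0 (by module)
      · exact mem_span_range_sup 0 0 0 0 1 0 (by module)
      · exact mem_span_range_sup 0 0 0 0 0 1 (by module)
    · rw [forall_lt_fin_six]
      simp [tableValue, table, h12, hcz, hcz', hW12 ha, hW12 hb, hW12 hc, hab a ha b hb,
        hab a ha c hc, hab b hb c hc]
  · push Not at hab
    obtain ⟨x3, hx3, w4, hw4, h34'⟩ := hab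
    obtain ⟨t, ht⟩ := Submodule.mem_span_singleton.1 (hz x3 w4)
    have ht0 : t ≠ 0 := by
      rintro rfl
      exact h34' (by rw [← ht, zero_smul])
    obtain ⟨x4, hx4⟩ : ∃ x4, x4 = t⁻¹ • w4 := ⟨_, rfl⟩
    have h34 : ⁅x3, x4⁆ = z := by
      rw [hx4, lie_smul, ← ht, inv_smul_smul₀ ht0]
    have mx4 : x4 ∈ W := hx4 ▸ W.smul_mem _ hw4
    have hV1 : lc k L 1 ≤ centralizerPair W x3 x4 := hlc (W := W) hW1
    have hVdim := finrank_centralizerPair_add_two_le (k := k) hx3 mx4 (by rwa [h34, ← h12])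
    obtain ⟨x5, hx5, hV⟩ := exists_singleton hV1 (by omega)
    obtain ⟨hx5W, h35, h45⟩ := mem_centralizerPair.1 hx5
    have hX : ⊤ ≤ Submodule.span k ({x1, x2} ∪ ({x3, x4} ∪ {x5})) ⊔ lc k L 1 := by
      rw [Submodule.span_union, Submodule.span_union, sup_assoc, sup_assoc]
      exact hTop.trans (sup_le_sup_left ((le_span_pair_sup_centralizerPair hx3 mx4 hz h34).trans
        (sup_le_sup_left hV _)) _)
    refine isModel_of_relations hn hL hX one_ne_zero 2 x1 x2 x3 x4 z x5 ?_ ?_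
    · rintro x ((rfl | rfl) | ((rfl | rfl) | rfl))
      · exact mem_span_range_sup 1 0 0 0 0 0 (by module)
      · exact mem_span_range_sup 0 1 0 0 0 0 (by module)
      · exact mem_span_range_sup 0 0 1 0 0 0 (by module)
      · exact mem_span_range_sup 0 0 0 1 0 0 (by module)
      · exact mem_span_range_sup 0 0 0 0 0 1 (by module)
    · rw [forall_lt_fin_six]
      simp [tableValue, table, h12, hcz, hcz', hW12 hx3, hW12 mx4, hW12 hx5W, h34, h35, h45]

theorem isModel_of_lc_one_eq_bot (h1 : lc k L 1 = ⊥) : IsModel k L := by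
  obtain ⟨v, -, hv⟩ := exists_span_sup (⊤ : Submodule k L) 6 (B := ⊥)
    (by rw [finrank_top]; omega) bot_le
  have h0 : ∀ x y : L, ⁅x, y⁆ = 0 := fun x y => by
    have : ⁅x, y⁆ ∈ lc k L 1 := lie_mem_lc_succ x trivial
    simpa [h1] using this
  refine isModel_of_relations hn hL (X := Set.range v) (h1 ▸ hv) one_ne_zero 0 (v 0) (v 1) (v 2)
    (v 3) (v 4) (v 5) ?_ ?_
  · rintro _ ⟨i, rfl⟩
    refine Submodule.mem_sup_left (Submodule.subset_span ⟨i, ?_⟩)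
    fin_cases i <;> rfl
  · rw [forall_lt_fin_six]
    simp [tableValue, table, h0]

end Heisenberg

section Dimensions

variable {k : Type*} [Field k] {L : Type*} [LieRing L] [LieAlgebra k L] [Module.Finite k L]

theorem finrank_le_of_le_span_singleton_sup {A B : Submodule k L} {x : L}
    (h : A ≤ Submodule.span k {x} ⊔ B) : finrank k A ≤ finrank k B + 1 := by
  have h1 := (Submodule.finrank_mono h).trans (Submodule.finrank_add_le_finrank_add_finrank _ _)
  have h2 := finrank_span_le_card (R := k) ({x} : Set L)
  simp at h2
  omega

theorem finrank_lc_three_le_of_pair {w1 w2 : L}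
    (hW : ⊤ ≤ Submodule.span k {w1, w2} ⊔ lc k L 1)
    (h : finrank k (lc k L 2) ≤ finrank k (lc k L 3) + 1) :
    finrank k (lc k L 3) ≤ finrank k (lc k L 4) + 1 := by
  have hlc2 : ∀ x y z : L, ⁅x, ⁅y, z⁆⁆ ∈ lc k L 2 := fun x y z =>
    lie_mem_lc_succ x (lie_mem_lc_succ y trivial)
  obtain ⟨x1, x2, hspan, m23⟩ := exists_span_eq_lie_mem
    (lc_antitone (by norm_num) : lc k L 3 ≤ lc k L 2) (by omega) (hlc2 w1 w1 w2) (hlc2 w2 w1 w2)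
  rw [← hspan] at hW
  obtain ⟨x3, h12⟩ : ∃ x3, ⁅x1, x2⁆ = x3 := ⟨_, rfl⟩
  have m3 : x3 ∈ lc k L 1 := h12 ▸ lie_mem_lc_succ x1 trivial
  have m4 : ⁅x1, x3⁆ ∈ lc k L 2 := lie_mem_lc_succ x1 m3
  have s1 := lc_one_le_of_pair hW
  rw [h12] at s1 m23
  have s2 := (lc_succ_le_of_pair hW s1).trans (span_pair_sup_le m23)
  have m24 : ⁅x2, ⁅x1, x3⁆⁆ ∈ lc k L 4 := by
    rw [leibniz_lie, lie_rev h12, neg_lie, lie_self, neg_zero, zero_add]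
    exact lie_mem_lc_succ x1 m23
  exact finrank_le_of_le_span_singleton_sup
    ((lc_succ_le_of_pair hW s2).trans (span_pair_sup_le m24))

/-- Every nilpotent Lie algebra of dimension `6` is one of the models. -/
theorem isModel_of_finrank_eq_six (hn : ∃ m, lc k L m = ⊥) (hL : finrank k L = 6)
    (hk : (2 : k) ≠ 0) : IsModel k L := by
  have hlt : ∀ m, finrank k (lc k L m) ≠ 0 → finrank k (lc k L (m + 1)) < finrank k (lc k L m) :=
    fun m => finrank_lc_succ_lt hn
  have hbot : ∀ {m}, finrank k (lc k L m) = 0 → lc k L m = ⊥ := Submodule.finrank_eq_zero.1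
  have h0 : finrank k (lc k L 0) = 6 := (finrank_top k L).trans hL
  have hlt0 := hlt 0
  have hlt1 := hlt 1
  have hlt2 := hlt 2
  have hlt3 := hlt 3
  have hlt4 := hlt 4
  simp only [Nat.reduceAdd] at hlt0 hlt1 hlt2 hlt3 hlt4
  have h5 : finrank k (lc k L 1) ≠ 5 := by
    intro h1
    obtain ⟨x, -, hX⟩ := exists_singleton (le_top : lc k L 1 ≤ ⊤) (by rw [finrank_top]; omega)
    have : lc k L 1 ≤ lc k L 2 := by
      refine lc_succ_le_of_generators hX hX ?_ le_rfl
      rintro x rfl y rfl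
      rw [lie_self]
      exact zero_mem _
    have := Submodule.finrank_mono this
    omega
  have h6 : finrank k (lc k L 1) = 0 ∨ finrank k (lc k L 1) = 1 ∨ finrank k (lc k L 1) = 2 ∨
      finrank k (lc k L 1) = 3 ∨ finrank k (lc k L 1) = 4 := by omega
  rcases h6 with h1 | h1 | h1 | h1 | h1
  · exact isModel_of_lc_one_eq_bot hn hL (hbot h1)
  · exact isModel_of_finrank_lc_one_eq_one hn hL h1 (hbot (by omega))
  · by_cases h2 : finrank k (lc k L 2) = 0
    · exact isModel_fourGenerators_twoStep hn hL hk h1 (hbot h2)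
    · exact isModel_fourGenerators_step_three hn hL h1 (by omega) (hbot (by omega))
  · by_cases h2 : finrank k (lc k L 2) = 0
    · exact isModel_freeTwoStep hn hL h1 (hbot h2)
    · by_cases h2' : finrank k (lc k L 2) = 1
      · exact isModel_threeGenerators hn hL hk h1 h2' (hbot (by omega))
      · by_cases h3 : finrank k (lc k L 3) = 0
        · exact isModel_threeGenerators_step_three hn hL hk h1 (by omega) (hbot h3)
        · exact isModel_threeGenerators_step_four hn hL hk h1 (by omega) (by omega)
            (hbot (by omega))
  · obtain ⟨w1, -, w2, -, hW⟩ := exists_pair (le_top : lc k L 1 ≤ ⊤) (by rw [finrank_top]; omega)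
    have s1 := lc_one_le_of_pair hW
    have h2 : finrank k (lc k L 2) = 3 := by
      have := finrank_le_of_le_span_singleton_sup s1
      omega
    have h3 : finrank k (lc k L 2) ≤ finrank k (lc k L 3) + 2 := by
      have := lc_succ_le_of_pair hW s1
      rw [Submodule.span_insert, sup_assoc] at this
      have := finrank_le_of_le_span_singleton_sup this
      have := finrank_le_of_le_span_singleton_sup (le_refl (Submodule.span k {⁅w2, ⁅w1, w2⁆⁆} ⊔
        lc k L (1 + 2)))
      simp only [Nat.reduceAdd] at *
      omega
    by_cases h3' : finrank k (lc k L 3) = 1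
    · exact isModel_twoGenerators hn hL hk h1 h3' (hbot (by omega))
    · have h4 := finrank_lc_three_le_of_pair hW (by omega)
      exact isModel_maximalClass hn hL hk h1 h2 (by omega) (by omega) (hbot (by omega))

end Dimensions

/-! ### The count -/

section Count

variable {k : Type*} [Field k]

/-- The nilpotent Lie algebra structure with the `n`-th table of brackets and parameter `ε`. -/
def modelStr (ε : kˣ) (n : Fin 30) : NilpLieStr k 6 :=
  ⟨tableBr ε (table n), isLieBracket_tableBr _ n, isNilpotentBracket_tableBr ε.ne_zero n⟩

/-- The isomorphism class attached to an index of the classification. -/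
noncomputable def modelClass (i : Fin 26 ⊕ (Fin 4 × (kˣ ⧸ (powMonoidHom 2 : kˣ →* kˣ).range))) :
    Quot (fun L L' : NilpLieStr k 6 => BracketIso L.1 L'.1) :=
  Quot.mk _ (i.elim (fun n => modelStr 1 (Fin.castAdd 4 n))
    fun p => modelStr p.2.out (Fin.natAdd 26 p.1))

theorem bracketIso_of_mk_eq {L L' : NilpLieStr k 6}
    (h : Quot.mk (fun L L' : NilpLieStr k 6 => BracketIso L.1 L'.1) L = Quot.mk _ L') :
    BracketIso L.1 L'.1 :=
  ((bracketIso_equivalence 6).comap Subtype.val).eqvGen_iff.1 (Quot.eqvGen_exact h)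

theorem modelClass_injective (hk : (2 : k) ≠ 0) :
    Function.Injective
      (modelClass : _ → Quot (fun L L' : NilpLieStr k 6 => BracketIso L.1 L'.1)) := by
  rintro (m | ⟨m, p⟩) (n | ⟨n, q⟩) h <;>
    obtain ⟨hmn, hsq⟩ := eq_of_bracketIso hk (Units.ne_zero _) (Units.ne_zero _)
      (bracketIso_of_mk_eq h)
  · exact congrArg Sum.inl (Fin.castAdd_injective _ _ hmn)
  · have := Fin.ext_iff.1 hmn
    simp only [Fin.val_castAdd, Fin.val_natAdd] at this
    omega
  · have := Fin.ext_iff.1 hmn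
    simp only [Fin.val_castAdd, Fin.val_natAdd] at this
    omega
  · obtain ⟨s, t, hs, hst⟩ := hsq (by simp [Fin.le_def])
    obtain rfl : m = n := Fin.natAdd_injective _ _ hmn
    have ht : t ≠ 0 := by
      rintro rfl
      simp [hs] at hst
    have hpq : p = q := by
      rw [← QuotientGroup.out_eq' p, ← QuotientGroup.out_eq' q]
      refine QuotientGroup.eq.2 ⟨Units.mk0 s hs * (Units.mk0 t ht)⁻¹, Units.ext ?_⟩
      simp
      field_simp
      linear_combination hst
    rw [hpq]

theorem exists_bracketIso_modelStr (hk : (2 : k) ≠ 0) (L : NilpLieStr k 6) :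
    ∃ (n : Fin 30) (ε : kˣ), BracketIso L.1 (modelStr ε n).1 := by
  obtain ⟨br, hbr, m, hm⟩ := L
  obtain ⟨n, ε, hε, ⟨e⟩⟩ := isModel_of_finrank_eq_six (k := k) (L := BracketSpace hbr)
    ⟨m, (lcs_eq_lc hbr m).symm.trans hm⟩ (BracketSpace.finrank_eq hbr) hk
  exact ⟨n, Units.mk0 ε hε, bracketIso_of_lieEquiv e⟩

theorem modelClass_surjective (hk : (2 : k) ≠ 0) :
    Function.Surjective
      (modelClass : _ → Quot (fun L L' : NilpLieStr k 6 => BracketIso L.1 L'.1)) := by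
  rintro ⟨L⟩
  obtain ⟨n, ε, hL⟩ := exists_bracketIso_modelStr hk L
  have hiso := bracketIso_equivalence (k := k) 6
  induction n using Fin.addCases (m := 26) (n := 4) with
  | left n =>
    refine ⟨.inl n, Quot.sound (hiso.symm (hiso.trans hL ?_))⟩
    change BracketIso (tableBr (ε : k) _) (tableBr ((1 : kˣ) : k) _)
    rw [tableBr_eq_of_lt (ε : k) ((1 : kˣ) : k) (n := Fin.castAdd 4 n) n.2]
    exact hiso.refl _
  | right n =>
    refine ⟨.inr (n, (ε : kˣ ⧸ (powMonoidHom 2 : kˣ →* kˣ).range)),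
      Quot.sound (hiso.symm (hiso.trans hL ?_))⟩
    obtain ⟨s, hs⟩ := QuotientGroup.eq.1
      (QuotientGroup.out_eq' (ε : kˣ ⧸ (powMonoidHom 2 : kˣ →* kˣ).range))
    have hε : (ε : k) = (Quotient.out (ε : kˣ ⧸ (powMonoidHom 2 : kˣ →* kˣ).range) : kˣ) *
        (s : k) ^ 2 := by
      have := congrArg (fun u => Quotient.out (ε : kˣ ⧸ (powMonoidHom 2 : kˣ →* kˣ).range) * u) hs
      simpa using (congrArg Units.val this).symm
    change BracketIso (tableBr (ε : k) _) _
    rw [hε]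
    exact bracketIso_family s.ne_zero (by simp [Fin.le_def])

end Count

end NilpotentLie

/-- Over any field `k` with `char k ≠ 2`, the number of isomorphism
classes of 6-dimensional nilpotent Lie algebras equals `26 + 4r`, where `r` is the
cardinality of `k*/(k*)²` (the units modulo squares). -/
theorem nilpotent_lie_dim6_card (k : Type) [Field k] (hk : (2 : k) ≠ 0) :
    Cardinal.mk (Quot (fun L L' : NilpLieStr k 6 => BracketIso L.1 L'.1)) =
      26 + 4 * Cardinal.mk (kˣ ⧸ (powMonoidHom 2 : kˣ →* kˣ).range) := by
  have e := Cardinal.mk_congr (Equiv.ofBijective _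
    ⟨NilpotentLie.modelClass_injective hk, NilpotentLie.modelClass_surjective hk⟩)
  rw [← e]
  simp
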